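/- arXiv:0708.0614 — 5 statements merged into one kernel-verified Lean document; each statement's English description precedes it below -/
import Mathlib

section
/- The function f(x) = (1/π)·sin(πx/(1+x))·x^{-x/(1+x)} on (0,∞) is a probability density; moreover ∫₀^∞ f(x)/(1+x) dx = e^{-1}, and for every λ > 0 with λ ≠ 1, ∫₀^∞ f(x)/(1+λx) dx = λ^{-λ/(λ−1)}. (Proposition 4.1: f is the density of the Dirichlet mean M₁(F_W) for W a ratio of independent exponentials, characterized by its order-1 Cauchy–Stieltjes transform e^{-ψ_{F_W}(λ)} with ψ_{F_W}(λ) = λ log(λ)/(λ−1).) -/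
open MeasureTheory

/-!
Put `x = exp u` and `λ = exp (-w)`. The transform `exp (-ψ(λ))`, with `ψ(λ) = λ log λ / (λ - 1)`,
becomes `H w = exp (-w / (exp w - 1))`, which is holomorphic on `|im w| < 2π`. In the strip
`|im w| ≤ π` it tends to `1` at the right end and, because `H w = exp w * H (-w)`, to `0` at the
left end; the difference of its values at `u ± π i` is `2π i * exp u * f (exp u)`. Cauchy's theorem
for `H` on this strip gives `∫ f = 1`. Applied to `w ↦ (H w - H t) / (1 - exp (w - t))`, whose
singularity at `t` is removable and whose denominator is `1 + exp (u - t)` at `u ± π i`, it gives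
`∫ f(x) / (1 + exp (-t) x) dx = H t`.
-/

namespace DirichletMean

open Complex Filter Set Topology
open scoped Interval Real ComplexConjugate

/-- The filter of the end of the strip `im w ∈ s` along which `re w` follows `l`: the right end for
`l = atTop`, the left end for `l = atBot`. -/
def stripEnd (l : Filter ℝ) (s : Set ℝ) : Filter ℂ :=
  comap re l ⊓ 𝓟 (im ⁻¹' s)

section StripEnd

variable {l : Filter ℝ} {s : Set ℝ}

theorem tendsto_re_stripEnd : Tendsto re (stripEnd l s) l :=
  tendsto_comap.mono_left inf_le_left

theorem tendsto_ofReal_add_mul_I_stripEnd :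
    Tendsto (fun p : ℝ × ℝ ↦ (p.1 + p.2 * I : ℂ)) (l ×ˢ 𝓟 s) (stripEnd l s) := by
  refine tendsto_inf.2 ⟨tendsto_comap_iff.2 ?_, tendsto_principal.2 ?_⟩
  · simpa [Function.comp_def] using tendsto_fst (f := l) (g := 𝓟 s)
  · filter_upwards [prod_mem_prod univ_mem (mem_principal_self s)] with p hp
    simpa using hp.2

theorem tendsto_neg_stripEnd_atBot :
    Tendsto Neg.neg (stripEnd atBot s) (stripEnd atTop (-s)) := by
  refine tendsto_inf.2 ⟨tendsto_comap_iff.2 ?_, tendsto_principal.2 ?_⟩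
  · exact tendsto_neg_atBot_atTop.comp tendsto_re_stripEnd
  · filter_upwards [mem_inf_of_right (mem_principal_self (im ⁻¹' s))] with w hw
    simpa using hw

theorem isExpCmpFilter_stripEnd_atTop (hs : Bornology.IsBounded s) :
    IsExpCmpFilter (stripEnd atTop s) := by
  obtain ⟨C, hC⟩ := hs.exists_norm_le
  refine .of_boundedUnder_abs_im tendsto_re_stripEnd (isBoundedUnder_of_eventually_le (a := C) ?_)
  exact mem_inf_of_right fun w hw ↦ hC _ hw

end StripEnd

section ContourIntegral

theorem continuous_horizontal {X : Type*} [TopologicalSpace X] {F : ℂ → X} {s : Set ℝ}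
    (hF : ContinuousOn F (im ⁻¹' s)) {y : ℝ} (hy : y ∈ s) :
    Continuous fun x : ℝ ↦ F (x + y * I) :=
  hF.comp_continuous (by fun_prop) fun x ↦ by simpa using hy

variable {E : Type*} [NormedAddCommGroup E] [NormedSpace ℂ E] [CompleteSpace E]
  {F : ℂ → E} {a b : E} {c d : ℝ}

theorem tendsto_intervalIntegral_vertical {l : Filter ℝ} [l.IsCountablyGenerated]
    (hF : ContinuousOn F (im ⁻¹' [[c, d]]))
    (ha : Tendsto F (stripEnd l [[c, d]]) (𝓝 a)) :
    Tendsto (fun x : ℝ ↦ ∫ y in c..d, F (x + y * I)) l (𝓝 ((d - c) • a)) := by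
  have huniform : TendstoUniformlyOn (fun x y : ℝ ↦ F (x + y * I)) (fun _ ↦ a) l [[c, d]] :=
    tendsto_prod_principal_iff.1 (ha.comp tendsto_ofReal_add_mul_I_stripEnd)
  have hcont (x : ℝ) : ContinuousOn (fun y : ℝ ↦ F (x + y * I)) [[c, d]] :=
    hF.comp (by fun_prop) fun y hy ↦ by simpa using hy
  simpa using huniform.tendsto_intervalIntegral_of_continuousOn (μ := volume) (.of_forall hcont)

theorem tendsto_intervalIntegral_sub_horizontal
    (hF : DifferentiableOn ℂ F (im ⁻¹' [[c, d]]))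
    (ha : Tendsto F (stripEnd atTop [[c, d]]) (𝓝 a))
    (hb : Tendsto F (stripEnd atBot [[c, d]]) (𝓝 b)) :
    Tendsto (fun R : ℝ ↦ ∫ x in -R..R, (F (x + d * I) - F (x + c * I))) atTop
      (𝓝 (I • (d - c) • (a - b))) := by
  have hcauchy (R : ℝ) : ∫ x in -R..R, (F (x + d * I) - F (x + c * I)) =
      I • ((∫ y in c..d, F (R + y * I)) - ∫ y in c..d, F ((-R : ℝ) + y * I)) := by
    have hrect := integral_boundary_rect_eq_zero_of_differentiableOn F
      (((-R : ℝ) : ℂ) + c * I) (R + d * I) (hF.mono fun w hw ↦ by simpa using hw.2)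
    simp only [add_re, add_im, ofReal_re, ofReal_im, re_ofReal_mul, im_ofReal_mul, I_re, I_im,
      mul_zero, mul_one, add_zero, zero_add] at hrect
    rw [intervalIntegral.integral_sub
      ((continuous_horizontal hF.continuousOn right_mem_uIcc).intervalIntegrable _ _)
      ((continuous_horizontal hF.continuousOn left_mem_uIcc).intervalIntegrable _ _), smul_sub,
      ← sub_eq_zero, ← neg_eq_zero, ← hrect]
    abel
  have hright := tendsto_intervalIntegral_vertical hF.continuousOn ha
  have hleft := tendsto_intervalIntegral_vertical hF.continuousOn hb
  simp only [hcauchy, smul_sub (d - c)]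
  exact (hright.sub (hleft.comp tendsto_neg_atTop_atBot)).const_smul I

end ContourIntegral

theorem integral_eq_of_tendsto_intervalIntegral_of_nonneg {g : ℝ → ℝ} {L : ℝ}
    (hg : LocallyIntegrable g) (hg0 : 0 ≤ g)
    (hL : Tendsto (fun R : ℝ ↦ ∫ x in -R..R, g x) atTop (𝓝 L)) : ∫ x, g x = L := by
  have hint : Integrable g :=
    integrable_of_intervalIntegral_norm_tendsto L
      (fun R ↦ (hg.integrableOn_isCompact isCompact_Icc).mono_set Ioc_subset_Icc_self)
      tendsto_neg_atTop_atBot tendsto_id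
      (by simpa only [Real.norm_of_nonneg (hg0 _), id_eq] using hL)
  exact tendsto_nhds_unique
    (intervalIntegral_tendsto_integral hint tendsto_neg_atTop_atBot tendsto_id) hL

theorem integral_eq_sub_of_jump {F : ℂ → ℂ} {a b : ℂ} {c d : ℝ} {g : ℝ → ℝ} (hcd : c ≠ d)
    (hF : DifferentiableOn ℂ F (im ⁻¹' [[c, d]]))
    (ha : Tendsto F (stripEnd atTop [[c, d]]) (𝓝 a))
    (hb : Tendsto F (stripEnd atBot [[c, d]]) (𝓝 b)) (hg : 0 ≤ g)
    (hjump : ∀ x : ℝ, F (x + d * I) - F (x + c * I) = (d - c) * I * g x) :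
    ((∫ x, g x : ℝ) : ℂ) = a - b := by
  have hdc : d - c ≠ 0 := sub_ne_zero.2 hcd.symm
  have hgF (x : ℝ) : g x = (d - c)⁻¹ * (F (x + d * I) - F (x + c * I)).im := by
    rw [hjump, mul_assoc, ← ofReal_sub, im_ofReal_mul, I_mul_im, ofReal_re,
      inv_mul_cancel_left₀ hdc]
  have hcont : Continuous g := by
    have htop := continuous_horizontal hF.continuousOn right_mem_uIcc
    have hbot := continuous_horizontal hF.continuousOn left_mem_uIcc
    exact (continuous_const.mul (continuous_im.comp (htop.sub hbot))).congr fun x ↦ (hgF x).symm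
  have hlim : Tendsto (fun R : ℝ ↦ ((∫ x in -R..R, g x : ℝ) : ℂ)) atTop (𝓝 (a - b)) := by
    have hdc' : (d - c : ℂ) ≠ 0 := mod_cast hdc
    have h := (tendsto_intervalIntegral_sub_horizontal hF ha hb).const_mul (I * (d - c : ℂ))⁻¹
    simp only [hjump, intervalIntegral.integral_const_mul, intervalIntegral.integral_ofReal] at h
    convert h using 2
    · field_simp [I_ne_zero]
    · simp only [smul_eq_mul, real_smul, ofReal_sub]
      field_simp [I_ne_zero]
  have hre : ∫ x, g x = (a - b).re :=
    integral_eq_of_tendsto_intervalIntegral_of_nonneg hcont.locallyIntegrable hg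
      (continuous_re.continuousAt.tendsto.comp hlim)
  have him : (a - b).im = 0 :=
    tendsto_nhds_unique (continuous_im.continuousAt.tendsto.comp hlim) (by simp [Function.comp_def])
  exact Complex.ext (by simpa using hre) (by simpa using him.symm)

theorem integral_Ioi_zero_eq_integral_exp_smul {E : Type*} [NormedAddCommGroup E]
    [NormedSpace ℝ E] (g : ℝ → E) :
    ∫ x in Ioi 0, g x = ∫ x : ℝ, Real.exp x • g (Real.exp x) := by
  have h := integral_image_eq_integral_deriv_smul_of_monotoneOn MeasurableSet.univ
    (fun x _ ↦ (Real.hasDerivAt_exp x).hasDerivWithinAt) (Real.exp_monotone.monotoneOn univ) g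
  rwa [image_univ, Real.range_exp, setIntegral_univ] at h

theorem abs_lt_two_mul_of_mem_uIcc {r y : ℝ} (hr : 0 < r) (hy : y ∈ [[-r, r]]) : |y| < 2 * r := by
  rw [uIcc_of_le (neg_le_self hr.le)] at hy
  exact (abs_le.2 hy).trans_lt (lt_two_mul_self hr)

/-- The entire function `(exp w - 1) / w`, with value `1` at `w = 0`. -/
noncomputable def expSlope : ℂ → ℂ := dslope exp 0

theorem expSlope_zero : expSlope 0 = 1 := by
  simp [expSlope]

theorem expSlope_of_ne {w : ℂ} (hw : w ≠ 0) : expSlope w = (exp w - 1) / w := by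
  simp [expSlope, dslope_of_ne _ hw, slope_def_field]

theorem differentiable_expSlope : Differentiable ℂ expSlope :=
  differentiableOn_univ.1 <|
    (differentiableOn_dslope univ_mem).2 differentiable_exp.differentiableOn

theorem eq_zero_of_exp_eq_one {w : ℂ} (hw : |w.im| < 2 * π) (h : exp w = 1) : w = 0 := by
  obtain ⟨n, hwn⟩ := exp_eq_one_iff.1 h
  have hn : |(n : ℝ)| < 1 := by
    have him : w.im = n * (2 * π) := by simp [hwn]
    rw [him, abs_mul, abs_of_pos Real.two_pi_pos] at hw
    exact (mul_lt_iff_lt_one_left Real.two_pi_pos).1 hw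
  have hn0 : n = 0 := Int.abs_lt_one_iff.1 (mod_cast hn)
  rw [hwn, hn0, Int.cast_zero, zero_mul]

theorem expSlope_ne_zero {w : ℂ} (hw : |w.im| < 2 * π) : expSlope w ≠ 0 := by
  rcases eq_or_ne w 0 with rfl | hw0
  · rw [expSlope_zero]
    exact one_ne_zero
  · rw [expSlope_of_ne hw0]
    exact div_ne_zero (sub_ne_zero.2 fun h ↦ hw0 (eq_zero_of_exp_eq_one hw h)) hw0

theorem tendsto_inv_expSlope {l : Filter ℂ} (hl : IsExpCmpFilter l) :
    Tendsto (fun w ↦ (expSlope w)⁻¹) l (𝓝 0) := by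
  have hexp : Tendsto (fun w ↦ (exp w)⁻¹) l (𝓝 0) :=
    tendsto_inv₀_cobounded.comp
      (tendsto_exp_comap_re_atTop.mono_left (tendsto_iff_comap.1 hl.tendsto_re))
  have hdiv : Tendsto (fun w ↦ w / exp w) l (𝓝 0) := by
    simpa using (hl.isLittleO_pow_mul_exp one_pos 1 0).tendsto_div_nhds_zero
  have hlim : Tendsto (fun w ↦ w / exp w / (1 - (exp w)⁻¹)) l (𝓝 0) := by
    simpa using! hdiv.div (tendsto_const_nhds.sub hexp) (by simp)
  refine hlim.congr' ?_
  filter_upwards [hl.eventually_ne] with w hw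
  rw [expSlope_of_ne hw, inv_div, div_div, mul_sub, mul_one, mul_inv_cancel₀ (exp_ne_zero w)]

section StieltjesInversion

/-- The quotient `(H w - H t) / (1 - exp (w - t))` with its removable singularity at `w = t` filled
in. The contour integral of this function is the Stieltjes-type integral of the jump of `H`. -/
noncomputable def expQuotient (H : ℂ → ℂ) (t w : ℂ) : ℂ := -(dslope H t w / expSlope (w - t))

variable {H : ℂ → ℂ} {a b : ℂ} {g : ℝ → ℝ}

theorem expQuotient_of_ne {t w : ℂ} (h : w ≠ t) :
    expQuotient H t w = (H w - H t) / (1 - exp (w - t)) := by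
  have hsub : w - t ≠ 0 := sub_ne_zero.2 h
  rw [expQuotient, dslope_of_ne _ h, slope_def_field, expSlope_of_ne hsub,
    div_div_div_cancel_right₀ hsub, ← div_neg, neg_sub]

variable {t : ℝ}

theorem differentiableOn_expQuotient (hH : DifferentiableOn ℂ H (im ⁻¹' [[-π, π]])) :
    DifferentiableOn ℂ (expQuotient H t) (im ⁻¹' [[-π, π]]) := by
  have hnhds : im ⁻¹' [[-π, π]] ∈ 𝓝 (t : ℂ) := by
    refine continuous_im.continuousAt.preimage_mem_nhds ?_
    rw [ofReal_im, uIcc_of_le (neg_le_self Real.pi_pos.le)]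
    exact Icc_mem_nhds (neg_lt_zero.2 Real.pi_pos) Real.pi_pos
  have hslope : DifferentiableOn ℂ (fun w ↦ expSlope (w - t)) (im ⁻¹' [[-π, π]]) :=
    (differentiable_expSlope.comp (differentiable_id.sub_const _)).differentiableOn
  refine (((differentiableOn_dslope hnhds).2 hH).div hslope fun w hw ↦ expSlope_ne_zero ?_).neg
  rw [sub_im, ofReal_im, sub_zero]
  exact abs_lt_two_mul_of_mem_uIcc Real.pi_pos hw

theorem tendsto_sub_ofReal_comap_re {l : Filter ℝ} {s : Set ℝ} (h : Tendsto (· - t) l l) :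
    Tendsto (fun w : ℂ ↦ w - t) (stripEnd l s) (comap re l) :=
  tendsto_comap_iff.2 <| by
    simpa [Function.comp_def] using h.comp (tendsto_re_stripEnd (s := s))

theorem tendsto_expQuotient_atTop {s : Set ℝ} (ha : Tendsto H (stripEnd atTop s) (𝓝 a)) :
    Tendsto (expQuotient H t) (stripEnd atTop s) (𝓝 0) := by
  have hexp := tendsto_exp_comap_re_atTop.comp
    (tendsto_sub_ofReal_comap_re (s := s) (tendsto_atTop_add_const_right _ (-t) tendsto_id))
  have hinv := tendsto_inv₀_cobounded.comp ((tendsto_const_sub_cobounded (1 : ℂ)).comp hexp)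
  have hlim := (ha.sub_const (H t)).mul hinv
  rw [mul_zero] at hlim
  refine hlim.congr' ?_
  filter_upwards [tendsto_re_stripEnd.eventually_gt_atTop t] with w hw
  rw [expQuotient_of_ne (by rintro rfl; simp at hw)]
  rfl

theorem tendsto_expQuotient_atBot {s : Set ℝ} (hb : Tendsto H (stripEnd atBot s) (𝓝 b)) :
    Tendsto (expQuotient H t) (stripEnd atBot s) (𝓝 (b - H t)) := by
  have hexp := tendsto_exp_comap_re_atBot.comp
    (tendsto_sub_ofReal_comap_re (s := s) (tendsto_atBot_add_const_right _ (-t) tendsto_id))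
  have hlim := (hb.sub_const (H t)).div (tendsto_const_nhds (x := (1 : ℂ)).sub hexp) (by simp)
  rw [sub_zero, div_one] at hlim
  refine hlim.congr' ?_
  filter_upwards [tendsto_re_stripEnd.eventually_lt_atBot t] with w hw
  rw [expQuotient_of_ne (by rintro rfl; simp at hw)]
  rfl

theorem exp_ofReal_add_pi_mul_I (x : ℝ) : exp (x + π * I) = -Real.exp x := by
  simp [exp_add]

theorem exp_ofReal_add_neg_pi_mul_I (x : ℝ) : exp (x + (-π : ℝ) * I) = -Real.exp x := by
  simp [exp_add, exp_neg]

theorem expQuotient_of_exp_eq_neg {w : ℂ} {x : ℝ} (hw : exp w = -Real.exp x) :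
    expQuotient H t w = (H w - H t) / (1 + Real.exp (x - t)) := by
  have hne : w ≠ t := by
    rintro rfl
    rw [← ofReal_exp, ← ofReal_neg, ofReal_inj] at hw
    linarith [Real.exp_pos t, Real.exp_pos x]
  rw [expQuotient_of_ne hne, exp_sub, hw, Real.exp_sub]
  push_cast
  ring

theorem integral_div_one_add_exp_eq_sub_of_jump (hH : DifferentiableOn ℂ H (im ⁻¹' [[-π, π]]))
    (ha : Tendsto H (stripEnd atTop [[-π, π]]) (𝓝 a))
    (hb : Tendsto H (stripEnd atBot [[-π, π]]) (𝓝 b)) (hg : 0 ≤ g)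
    (hjump : ∀ x : ℝ, H (x + π * I) - H (x + (-π : ℝ) * I) = 2 * π * I * g x) :
    ((∫ x, g x / (1 + Real.exp (x - t)) : ℝ) : ℂ) = H t - b := by
  rw [← neg_sub b, ← zero_sub (b - H t)]
  refine integral_eq_sub_of_jump (neg_lt_self Real.pi_pos).ne (differentiableOn_expQuotient hH)
    (tendsto_expQuotient_atTop ha) (tendsto_expQuotient_atBot hb)
    (fun x ↦ div_nonneg (hg x) (by positivity)) fun x ↦ ?_
  rw [expQuotient_of_exp_eq_neg (exp_ofReal_add_pi_mul_I x),
    expQuotient_of_exp_eq_neg (exp_ofReal_add_neg_pi_mul_I x), ← sub_div, sub_sub_sub_cancel_right,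
    hjump]
  push_cast
  ring

end StieltjesInversion

/-- The Cauchy–Stieltjes transform `exp (-ψ(λ))`, `ψ(λ) = λ log λ / (λ - 1)`, in the logarithmic
variable `λ = exp (-w)`, in which `ψ = w / (exp w - 1)`. It is written with `expSlope` so that it is
holomorphic at `w = 0` (that is, at `λ = 1`). -/
noncomputable def logCauchyTransform (w : ℂ) : ℂ := exp (-(expSlope w)⁻¹)

theorem logCauchyTransform_zero : logCauchyTransform 0 = (Real.exp (-1) : ℝ) := by
  simp [logCauchyTransform, expSlope_zero]

theorem logCauchyTransform_of_ne {w : ℂ} (hw : w ≠ 0) :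
    logCauchyTransform w = exp (-(w / (exp w - 1))) := by
  rw [logCauchyTransform, expSlope_of_ne hw, inv_div]

theorem logCauchyTransform_eq_exp_mul_neg {w : ℂ} (hw : exp w ≠ 1) :
    logCauchyTransform w = exp w * logCauchyTransform (-w) := by
  have hw0 : w ≠ 0 := by
    rintro rfl
    exact hw exp_zero
  have hne : exp w - 1 ≠ 0 := sub_ne_zero.2 hw
  have hne' : 1 - exp w ≠ 0 := sub_ne_zero.2 hw.symm
  rw [logCauchyTransform_of_ne hw0, logCauchyTransform_of_ne (neg_ne_zero.2 hw0), ← exp_add,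
    exp_neg w]
  congr 1
  field_simp [exp_ne_zero w]
  ring

theorem differentiableOn_logCauchyTransform :
    DifferentiableOn ℂ logCauchyTransform (im ⁻¹' [[-π, π]]) :=
  (differentiable_expSlope.differentiableOn.inv fun _ hw ↦
    expSlope_ne_zero (abs_lt_two_mul_of_mem_uIcc Real.pi_pos hw)).neg.cexp

theorem tendsto_logCauchyTransform_atTop {s : Set ℝ} (hs : Bornology.IsBounded s) :
    Tendsto logCauchyTransform (stripEnd atTop s) (𝓝 1) := by
  simpa [Function.comp_def] using! (continuous_exp.tendsto _).comp
    (tendsto_inv_expSlope (isExpCmpFilter_stripEnd_atTop hs)).neg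

theorem tendsto_logCauchyTransform_atBot {s : Set ℝ} (hs : Bornology.IsBounded s) :
    Tendsto logCauchyTransform (stripEnd atBot s) (𝓝 0) := by
  have hneg := (tendsto_logCauchyTransform_atTop hs.neg).comp tendsto_neg_stripEnd_atBot
  have hexp := tendsto_exp_comap_re_atBot.mono_left (inf_le_left : stripEnd atBot s ≤ _)
  have hlim := hexp.mul hneg
  rw [zero_mul] at hlim
  refine hlim.congr' ?_
  filter_upwards [tendsto_re_stripEnd.eventually_lt_atBot 0] with w hw
  refine (logCauchyTransform_eq_exp_mul_neg fun h ↦ hw.ne ?_).symm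
  rw [← Real.exp_eq_one_iff, ← norm_exp, h, norm_one]

theorem logCauchyTransform_of_exp_eq_neg {w : ℂ} {x : ℝ} (hw : exp w = -Real.exp x) :
    logCauchyTransform w = exp (w / (1 + Real.exp x : ℝ)) := by
  have hw0 : w ≠ 0 := by
    rintro rfl
    rw [exp_zero, ← ofReal_one, ← ofReal_neg, ofReal_inj] at hw
    linarith [Real.exp_pos x]
  rw [logCauchyTransform_of_ne hw0, hw, ← div_neg]
  push_cast
  ring_nf

theorem exp_sub_exp_conj (z : ℂ) :
    exp z - exp (conj z) = 2 * I * ↑(Real.exp z.re * Real.sin z.im) := by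
  rw [exp_conj, sub_conj, exp_im]
  push_cast
  ring

/-- The density of the Dirichlet mean `M₁(F_W)`, for `W` a ratio of independent exponential
variables; it is meant for `0 < x`. -/
noncomputable def meanDensity (x : ℝ) : ℝ :=
  (1 / π) * Real.sin (π * x / (1 + x)) * x ^ (-(x / (1 + x)))

theorem meanDensity_nonneg {x : ℝ} (hx : 0 ≤ x) : 0 ≤ meanDensity x := by
  have hsin : 0 ≤ Real.sin (π * x / (1 + x)) := by
    refine Real.sin_nonneg_of_nonneg_of_le_pi (by positivity) ?_
    rw [mul_div_assoc]
    exact mul_le_of_le_one_right Real.pi_pos.le (div_le_one_of_le₀ (by linarith) (by positivity))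
  unfold meanDensity
  positivity

theorem exp_mul_meanDensity_exp (x : ℝ) :
    Real.exp x * meanDensity (Real.exp x) =
      Real.exp (x / (1 + Real.exp x)) * Real.sin (π / (1 + Real.exp x)) / π := by
  have hpos : 1 + Real.exp x ≠ 0 := by positivity
  have hsin : Real.sin (π * Real.exp x / (1 + Real.exp x)) = Real.sin (π / (1 + Real.exp x)) := by
    rw [← Real.sin_pi_sub]
    congr 1
    field_simp
    ring
  have hexp : Real.exp (x / (1 + Real.exp x)) =
      Real.exp x * Real.exp x ^ (-(Real.exp x / (1 + Real.exp x))) := by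
    rw [← Real.exp_mul, ← Real.exp_add]
    congr 1
    field_simp
    ring
  rw [meanDensity, hsin, hexp]
  ring

theorem logCauchyTransform_jump (x : ℝ) :
    logCauchyTransform (x + π * I) - logCauchyTransform (x + (-π : ℝ) * I) =
      2 * π * I * ↑(Real.exp x * meanDensity (Real.exp x)) := by
  rw [logCauchyTransform_of_exp_eq_neg (exp_ofReal_add_pi_mul_I x),
    logCauchyTransform_of_exp_eq_neg (exp_ofReal_add_neg_pi_mul_I x)]
  have hconj : (x + (-π : ℝ) * I : ℂ) / (1 + Real.exp x : ℝ) =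
      conj ((x + π * I) / (1 + Real.exp x : ℝ)) := by
    simp [-ofReal_add, -ofReal_exp]
  have hre : (x + π * I : ℂ).re = x := by simp
  have him : (x + π * I : ℂ).im = π := by simp
  have hpi : (π : ℂ) ≠ 0 := ofReal_ne_zero.2 Real.pi_ne_zero
  rw [hconj, exp_sub_exp_conj, div_ofReal_re, div_ofReal_im, hre, him, exp_mul_meanDensity_exp,
    ofReal_div _ π]
  field_simp

theorem integral_meanDensity : ∫ x in Ioi 0, meanDensity x = 1 := by
  simp only [integral_Ioi_zero_eq_integral_exp_smul, smul_eq_mul]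
  rw [← ofReal_inj, ofReal_one, ← sub_zero 1]
  exact integral_eq_sub_of_jump (neg_lt_self Real.pi_pos).ne
    differentiableOn_logCauchyTransform
    (tendsto_logCauchyTransform_atTop isCompact_uIcc.isBounded)
    (tendsto_logCauchyTransform_atBot isCompact_uIcc.isBounded)
    (fun x ↦ mul_nonneg (by positivity) (meanDensity_nonneg (by positivity)))
    fun x ↦ by
      rw [logCauchyTransform_jump, ofReal_neg]
      ring

theorem integral_meanDensity_div_one_add_mul {l : ℝ} (hl : 0 < l) :
    ((∫ x in Ioi 0, meanDensity x / (1 + l * x) : ℝ) : ℂ) =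
      logCauchyTransform (-Real.log l : ℝ) := by
  have hexp (x : ℝ) : Real.exp x • (meanDensity (Real.exp x) / (1 + l * Real.exp x)) =
      Real.exp x * meanDensity (Real.exp x) / (1 + Real.exp (x - -Real.log l)) := by
    rw [sub_neg_eq_add, Real.exp_add, Real.exp_log hl, mul_comm l, smul_eq_mul, mul_div_assoc]
  simp only [integral_Ioi_zero_eq_integral_exp_smul, hexp]
  rw [← sub_zero (logCauchyTransform _)]
  exact integral_div_one_add_exp_eq_sub_of_jump
    differentiableOn_logCauchyTransform
    (tendsto_logCauchyTransform_atTop isCompact_uIcc.isBounded)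
    (tendsto_logCauchyTransform_atBot isCompact_uIcc.isBounded)
    (fun x ↦ mul_nonneg (by positivity) (meanDensity_nonneg (by positivity)))
    logCauchyTransform_jump

theorem logCauchyTransform_neg_log {l : ℝ} (hl : 0 < l) (hl1 : l ≠ 1) :
    logCauchyTransform (-Real.log l : ℝ) = (l ^ (-(l / (l - 1))) : ℝ) := by
  have hlog : -Real.log l ≠ 0 := neg_ne_zero.2 (Real.log_ne_zero_of_pos_of_ne_one hl hl1)
  rw [logCauchyTransform_of_ne (ofReal_ne_zero.2 hlog), ← ofReal_exp, Real.exp_neg,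
    Real.exp_log hl, Real.rpow_def_of_pos hl]
  norm_cast
  have hne : l - 1 ≠ 0 := sub_ne_zero.2 hl1
  have hne' : 1 - l ≠ 0 := sub_ne_zero.2 hl1.symm
  congr 1
  field_simp
  ring

end DirichletMean

/-- Proposition 4.1: the function
`f(x) = (1/π)·sin(πx/(1+x))·x^{-x/(1+x)}` is a probability density on `(0,∞)`,
`∫₀^∞ f(x)/(1+x) dx = e^{-1}`, and for `λ > 0`, `λ ≠ 1`,
`∫₀^∞ f(x)/(1+λx) dx = λ^{-λ/(λ-1)}`. -/
theorem density_of_mean_functional_ratio_exponentials :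
    (∀ x ∈ Set.Ioi (0:ℝ),
      0 ≤ (1 / Real.pi) * Real.sin (Real.pi * x / (1 + x)) * x ^ (-(x / (1 + x)))) ∧
    (∫ x in Set.Ioi (0:ℝ),
      (1 / Real.pi) * Real.sin (Real.pi * x / (1 + x)) * x ^ (-(x / (1 + x))) = 1) ∧
    (∫ x in Set.Ioi (0:ℝ),
      (1 / Real.pi) * Real.sin (Real.pi * x / (1 + x)) * x ^ (-(x / (1 + x))) / (1 + x)
        = Real.exp (-1)) ∧
    (∀ l : ℝ, 0 < l → l ≠ 1 →
      ∫ x in Set.Ioi (0:ℝ),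
        (1 / Real.pi) * Real.sin (Real.pi * x / (1 + x)) * x ^ (-(x / (1 + x))) / (1 + l * x)
          = l ^ (-(l / (l - 1)))) := by
  refine ⟨fun x hx ↦ DirichletMean.meanDensity_nonneg hx.le, DirichletMean.integral_meanDensity,
    ?_, fun l hl hl1 ↦ ?_⟩
  · have h := DirichletMean.integral_meanDensity_div_one_add_mul one_pos
    simp only [Real.log_one, neg_zero, Complex.ofReal_zero, DirichletMean.logCauchyTransform_zero,
      Complex.ofReal_inj, one_mul] at h
    exact h
  · exact Complex.ofReal_injective ((DirichletMean.integral_meanDensity_div_one_add_mul hl).trans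
      (DirichletMean.logCauchyTransform_neg_log hl hl1))
end

section
/- For each 0 < σ ≤ 1, the function f_σ(y) = (e^σ/π)·sin(πσ(1−y))·y^{σ(1−y)−1}·(1−y)^{−σ(1−y)} on (0,1) is a probability density, and for every λ > 0, ∫₀¹ f_σ(y)·(1+λy)^{-1} dy = e^σ·(1+λ)^{−σ(1+λ)/λ}. (Proposition 4.2(ii): f_σ is the density of β_{σ,1−σ}·M_σ(F_U), the beta-scaled Dirichlet mean of the uniform distribution, characterized by its order-1 Cauchy–Stieltjes transform e^{−σψ_{F_U}(λ)}.) -/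
open MeasureTheory

/-!
Substituting `1 + λ = e ^ a` turns the transform `e ^ (-σ ψ(λ))` into a function of `a` which is
holomorphic on the strip `|Im a| < π`, continuous up to its boundary, bounded at the left end and
of size `e ^ (-σ Re a)` at the right end. Cauchy's theorem on long rectangles, with the Cauchy
kernel of the cut plane read in the exponential coordinate, recovers it from its jump between the
two boundary lines. On those lines `ψ` equals `s (x ∓ πi) - 1` with `s = 1 / (1 + e ^ (-x))`, so
the jump is `2i e ^ (σ - σ s x) sin (πσs)`, and under `y = 1 - s` this is exactly the density `f_σ`.
The value `a = 0` gives total mass one.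
-/

open Set Filter Topology Asymptotics Complex
open scoped Real Interval

namespace ExpStrip

/-- The open horizontal strip `|Im z| < π`, which `exp` maps bijectively onto the plane cut along
the nonpositive reals; the two boundary lines cover the two sides of the cut. -/
def expStrip : Set ℂ := im ⁻¹' Ioo (-π) π

/-- The filter on the closed strip obtained by letting `Re z` follow `l`; `stripEnd atTop` and
`stripEnd atBot` are the two ends of the strip. -/
def stripEnd (l : Filter ℝ) : Filter ℂ := comap re l ⊓ 𝓟 (closure expStrip)

lemma closure_expStrip : closure expStrip = im ⁻¹' Icc (-π) π := by
  rw [expStrip, closure_preimage_im, closure_Ioo (neg_lt_self Real.pi_pos).ne]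

lemma mem_closure_expStrip {z : ℂ} : z ∈ closure expStrip ↔ |z.im| ≤ π := by
  rw [closure_expStrip, mem_preimage, mem_Icc, abs_le]

lemma mem_expStrip {z : ℂ} : z ∈ expStrip ↔ |z.im| < π := by
  rw [expStrip, mem_preimage, mem_Ioo, abs_lt]

lemma expStrip_mem_nhds {a : ℂ} (ha : a ∈ expStrip) : expStrip ∈ 𝓝 a :=
  (isOpen_Ioo.preimage continuous_im).mem_nhds ha

lemma zero_mem_expStrip : (0 : ℂ) ∈ expStrip := by
  simp [mem_expStrip, Real.pi_pos]

lemma sub_pi_mul_I_mem_closure_expStrip (x : ℝ) : (x - π * I : ℂ) ∈ closure expStrip := by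
  simp [mem_closure_expStrip, abs_of_pos Real.pi_pos]

lemma add_pi_mul_I_mem_closure_expStrip (x : ℝ) : (x + π * I : ℂ) ∈ closure expStrip := by
  simp [mem_closure_expStrip, abs_of_pos Real.pi_pos]

lemma tendsto_re_stripEnd (l : Filter ℝ) : Tendsto re (stripEnd l) l :=
  tendsto_comap.mono_left inf_le_left

lemma tendsto_stripEnd {α : Type*} {m : Filter α} {l : Filter ℝ} {u : α → ℂ}
    (hre : Tendsto (fun t ↦ (u t).re) m l) (hu : ∀ t, u t ∈ closure expStrip) :
    Tendsto u m (stripEnd l) :=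
  tendsto_inf.2 ⟨tendsto_comap_iff.2 hre, tendsto_principal.2 (.of_forall hu)⟩

lemma tendsto_sub_pi_mul_I_stripEnd (l : Filter ℝ) :
    Tendsto (fun x : ℝ ↦ (x - π * I : ℂ)) l (stripEnd l) :=
  tendsto_stripEnd (tendsto_id.congr fun x ↦ by simp) sub_pi_mul_I_mem_closure_expStrip

lemma tendsto_add_pi_mul_I_stripEnd (l : Filter ℝ) :
    Tendsto (fun x : ℝ ↦ (x + π * I : ℂ)) l (stripEnd l) :=
  tendsto_stripEnd (tendsto_id.congr fun x ↦ by simp) add_pi_mul_I_mem_closure_expStrip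

lemma tendsto_neg_stripEnd : Tendsto Neg.neg (stripEnd atBot) (stripEnd atTop) := by
  refine tendsto_inf.2 ⟨tendsto_comap_iff.2 ?_, ?_⟩
  · exact tendsto_neg_atBot_atTop.comp (tendsto_re_stripEnd atBot)
  · refine tendsto_principal.2 (mem_of_superset (mem_inf_of_right (mem_principal_self _)) ?_)
    intro z hz
    simpa [mem_closure_expStrip] using hz

lemma isExpCmpFilter_stripEnd_atTop : IsExpCmpFilter (stripEnd atTop) :=
  .of_boundedUnder_abs_im (tendsto_re_stripEnd atTop)
    ⟨π, mem_inf_of_right fun _ hz ↦ mem_closure_expStrip.1 hz⟩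

section Cauchy

variable {f : ℂ → ℂ} {a c d : ℂ}

lemma tendsto_integral_vertical {l : Filter ℝ} [l.IsCountablyGenerated]
    (hf : ContinuousOn f (closure expStrip)) (hl : Tendsto f (stripEnd l) (𝓝 c)) :
    Tendsto (fun R : ℝ ↦ ∫ y in -π..π, f (R + y * I)) l (𝓝 (2 * π * c)) := by
  have hmaps : MapsTo (fun q : ℝ × ℝ ↦ (q.1 + q.2 * I : ℂ)) (univ ×ˢ [[-π, π]])
      (closure expStrip) := by
    rintro ⟨R, y⟩ ⟨-, hy⟩
    rw [uIcc_of_le (neg_le_self Real.pi_pos.le)] at hy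
    simpa [closure_expStrip] using hy
  have hends : Tendsto (fun q : ℝ × ℝ ↦ (q.1 + q.2 * I : ℂ)) (l ×ˢ 𝓟 [[-π, π]]) (stripEnd l) := by
    refine tendsto_inf.2 ⟨tendsto_comap_iff.2 ?_, tendsto_principal.2 ?_⟩
    · simpa [Function.comp_def] using tendsto_fst
    · exact mem_of_superset (prod_mem_prod univ_mem (mem_principal_self _)) hmaps
  have hunif : TendstoUniformlyOn (fun (R y : ℝ) ↦ f (R + y * I)) (fun _ ↦ c) l [[-π, π]] :=
    tendsto_prod_principal_iff.1 (hl.comp hends)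
  have hcont (R : ℝ) : ContinuousOn (fun y : ℝ ↦ f (R + y * I)) [[-π, π]] :=
    hf.comp (by fun_prop) fun y hy ↦ hmaps (x := (R, y)) ⟨mem_univ R, hy⟩
  simpa [two_mul] using
    hunif.tendsto_intervalIntegral_of_continuousOn (μ := volume) (.of_forall hcont)

lemma integral_boundary_rect_eq_zero (hf : DiffContOnCl ℂ f expStrip) (R : ℝ) :
    (∫ x in -R..R, f (x - π * I)) - (∫ x in -R..R, f (x + π * I)) +
      I * (∫ y in -π..π, f (R + y * I)) - I * (∫ y in -π..π, f ((-R : ℝ) + y * I)) = 0 := by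
  have hπ : -π < π := neg_lt_self Real.pi_pos
  have h := integral_boundary_rect_eq_zero_of_continuousOn_of_differentiableOn f
    (-R - π * I) (R + π * I)
    (hf.continuousOn.mono fun z hz ↦ ?_) (hf.differentiableOn.mono fun z hz ↦ ?_)
  · simpa [sub_eq_add_neg] using h
  · simpa [closure_expStrip, uIcc_of_le hπ.le] using hz.2
  · simpa [expStrip, min_eq_left hπ.le, max_eq_right hπ.le] using hz.2

theorem integral_sub_boundary_expStrip (hf : DiffContOnCl ℂ f expStrip)
    (hbot : Tendsto f (stripEnd atBot) (𝓝 c)) (htop : Tendsto f (stripEnd atTop) (𝓝 d))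
    (hint : Integrable fun x : ℝ ↦ f (x - π * I) - f (x + π * I)) :
    ∫ x : ℝ, (f (x - π * I) - f (x + π * I)) = 2 * π * I * (c - d) := by
  have hleft := (tendsto_integral_vertical hf.continuousOn hbot).comp tendsto_neg_atTop_atBot
  have hright := tendsto_integral_vertical hf.continuousOn htop
  have hlines := intervalIntegral_tendsto_integral hint tendsto_neg_atTop_atBot tendsto_id
  refine tendsto_nhds_unique hlines ?_
  convert (hleft.sub hright).const_mul I using 2 with R
  · have hminus : Continuous fun x : ℝ ↦ f (x - π * I) :=
      hf.continuousOn.comp_continuous (by fun_prop) sub_pi_mul_I_mem_closure_expStrip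
    have hplus : Continuous fun x : ℝ ↦ f (x + π * I) :=
      hf.continuousOn.comp_continuous (by fun_prop) add_pi_mul_I_mem_closure_expStrip
    rw [id, intervalIntegral.integral_sub (hminus.intervalIntegrable _ _)
      (hplus.intervalIntegrable _ _), Function.comp_apply]
    linear_combination integral_boundary_rect_eq_zero hf R
  · ring

/-- The Cauchy kernel `dw / (w - e ^ a)` of the cut plane in the coordinate `w = e ^ z`. -/
noncomputable def expKernel (a z : ℂ) : ℂ := exp z / (exp z - exp a)

/-- The function `(f z - f a) * expKernel a z` with its singularity at `a` removed. -/
noncomputable def cauchyQuotient (f : ℂ → ℂ) (a z : ℂ) : ℂ :=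
  exp z * (dslope f a z * (dslope exp a z)⁻¹)

lemma eq_of_exp_eq_exp {z : ℂ} (ha : a ∈ expStrip) (hz : z ∈ closure expStrip)
    (h : exp z = exp a) : z = a := by
  obtain ⟨n, rfl⟩ := exp_eq_exp_iff_exists_int.1 h
  rw [mem_expStrip, abs_lt] at ha
  rw [mem_closure_expStrip, abs_le] at hz
  have him : (a + n * (2 * π * I)).im = a.im + n * (2 * π) := by simp
  have hlt : (n : ℝ) < 1 := by nlinarith [Real.pi_pos]
  have hgt : (-1 : ℝ) < n := by nlinarith [Real.pi_pos]
  have hn : n = 0 := by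
    norm_cast at hlt hgt
    lia
  simp [hn]

lemma dslope_exp_ne_zero {z : ℂ} (ha : a ∈ expStrip) (hz : z ∈ closure expStrip) :
    dslope exp a z ≠ 0 := by
  rcases eq_or_ne z a with rfl | hza
  · simp [exp_ne_zero]
  · rw [dslope_of_ne _ hza, slope_def_field]
    exact div_ne_zero (sub_ne_zero.2 fun h ↦ hza (eq_of_exp_eq_exp ha hz h)) (sub_ne_zero.2 hza)

lemma diffContOnCl_dslope {s : Set ℂ} (hs : s ∈ 𝓝 a) (hf : DiffContOnCl ℂ f s) :
    DiffContOnCl ℂ (dslope f a) s :=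
  ⟨(differentiableOn_dslope hs).2 hf.differentiableOn,
    (continuousOn_dslope (mem_of_superset hs subset_closure)).2
      ⟨hf.continuousOn, hf.differentiableOn.differentiableAt hs⟩⟩

lemma diffContOnCl_cauchyQuotient (ha : a ∈ expStrip) (hf : DiffContOnCl ℂ f expStrip) :
    DiffContOnCl ℂ (cauchyQuotient f a) expStrip :=
  differentiable_exp.diffContOnCl.smul
    ((diffContOnCl_dslope (expStrip_mem_nhds ha) hf).smul
      ((diffContOnCl_dslope (expStrip_mem_nhds ha) differentiable_exp.diffContOnCl).inv
        fun _ hz ↦ dslope_exp_ne_zero ha hz))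

lemma cauchyQuotient_of_ne {z : ℂ} (hz : z ≠ a) :
    cauchyQuotient f a z = (f z - f a) * expKernel a z := by
  rw [cauchyQuotient, expKernel, dslope_of_ne _ hz, dslope_of_ne _ hz, slope_def_field,
    slope_def_field, inv_div, div_mul_div_cancel₀ (sub_ne_zero.2 hz)]
  ring

lemma cauchyQuotient_eventuallyEq {l : Filter ℝ} (hl : ∀ᶠ x in l, x ≠ a.re) :
    cauchyQuotient f a =ᶠ[stripEnd l] fun z ↦ (f z - f a) * expKernel a z :=
  ((tendsto_re_stripEnd l).eventually hl).mono fun _ hz ↦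
    cauchyQuotient_of_ne (ne_of_apply_ne re hz)

lemma tendsto_expKernel_atTop (a : ℂ) : Tendsto (expKernel a) (comap re atTop) (𝓝 1) := by
  have hexp : Tendsto (fun z ↦ (exp z)⁻¹) (comap re atTop) (𝓝 0) :=
    tendsto_inv₀_cobounded.comp tendsto_exp_comap_re_atTop
  have h := ((hexp.const_mul (exp a)).const_sub 1).inv₀ (by simp)
  simp only [mul_zero, sub_zero, inv_one] at h
  refine h.congr fun z ↦ ?_
  rw [expKernel, ← div_eq_mul_inv, one_sub_div (exp_ne_zero z), inv_div]

lemma expKernel_isBigO_atBot (a : ℂ) : expKernel a =O[comap re atBot] fun z ↦ Real.exp z.re := by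
  have hinv : Tendsto (fun z ↦ (exp z - exp a)⁻¹) (comap re atBot) (𝓝 (0 - exp a)⁻¹) :=
    (tendsto_exp_comap_re_atBot.sub_const _).inv₀ (by simp [exp_ne_zero])
  have hexp : exp =O[comap re atBot] fun z ↦ Real.exp z.re :=
    isBigO_of_le _ fun z ↦ by simp [norm_exp]
  exact (hexp.mul (hinv.isBigO_one ℝ)).congr (fun z ↦ (div_eq_mul_inv _ _).symm) fun z ↦ mul_one _

lemma tendsto_expKernel_atBot (a : ℂ) : Tendsto (expKernel a) (comap re atBot) (𝓝 0) :=
  (expKernel_isBigO_atBot a).trans_tendsto (Real.tendsto_exp_atBot.comp tendsto_comap)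

lemma expKernel_sub_pi_mul_I (a : ℂ) (x : ℝ) :
    expKernel a (x - π * I) = exp x / (exp x + exp a) := by
  rw [expKernel, exp_sub_pi_mul_I, ← neg_add', neg_div_neg_eq]

lemma expKernel_add_pi_mul_I (a : ℂ) (x : ℝ) :
    expKernel a (x + π * I) = exp x / (exp x + exp a) := by
  rw [expKernel, exp_add_pi_mul_I, ← neg_add', neg_div_neg_eq]

lemma cauchyQuotient_sub_boundary (ha : a ∈ expStrip) (x : ℝ) :
    cauchyQuotient f a (x - π * I) - cauchyQuotient f a (x + π * I) =
      (f (x - π * I) - f (x + π * I)) * (exp x / (exp x + exp a)) := by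
  have hminus : (x - π * I : ℂ) ≠ a := by
    rintro rfl
    simp [mem_expStrip, abs_of_pos Real.pi_pos] at ha
  have hplus : (x + π * I : ℂ) ≠ a := by
    rintro rfl
    simp [mem_expStrip, abs_of_pos Real.pi_pos] at ha
  rw [cauchyQuotient_of_ne hminus, cauchyQuotient_of_ne hplus, expKernel_sub_pi_mul_I,
    expKernel_add_pi_mul_I]
  ring

lemma integrable_of_isBigO_exp {g : ℝ → ℂ} {b c : ℝ} (hb : 0 < b) (hc : c < 0)
    (hg : Continuous g) (hbot : g =O[atBot] fun x ↦ Real.exp (b * x))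
    (htop : g =O[atTop] fun x ↦ Real.exp (c * x)) : Integrable g :=
  hg.locallyIntegrable.integrable_of_isBigO_atBot_atTop
    hbot ⟨Iic 0, Iic_mem_atBot 0, integrableOn_exp_mul_Iic hb 0⟩
    htop ⟨Ioi 0, Ioi_mem_atTop 0, integrableOn_exp_mul_Ioi hc 0⟩

variable {σ : ℝ}

lemma integrable_cauchyQuotient_sub_boundary (ha : a ∈ expStrip)
    (hf : DiffContOnCl ℂ f expStrip) (hσ : 0 < σ) (hbot : f =O[stripEnd atBot] fun _ ↦ (1 : ℝ))
    (htop : f =O[stripEnd atTop] fun z ↦ Real.exp (-σ * z.re)) :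
    Integrable fun x : ℝ ↦ cauchyQuotient f a (x - π * I) - cauchyQuotient f a (x + π * I) := by
  have hcont := (diffContOnCl_cauchyQuotient ha hf).continuousOn
  refine integrable_of_isBigO_exp one_pos (neg_lt_zero.2 hσ)
    ((hcont.comp_continuous (by fun_prop) sub_pi_mul_I_mem_closure_expStrip).sub
      (hcont.comp_continuous (by fun_prop) add_pi_mul_I_mem_closure_expStrip)) ?_ ?_
  all_goals simp only [cauchyQuotient_sub_boundary ha, ← expKernel_sub_pi_mul_I]
  · have hker := (expKernel_isBigO_atBot a).comp_tendsto
      ((tendsto_sub_pi_mul_I_stripEnd atBot).mono_right inf_le_left)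
    have hminus := hbot.comp_tendsto (tendsto_sub_pi_mul_I_stripEnd atBot)
    have hplus := hbot.comp_tendsto (tendsto_add_pi_mul_I_stripEnd atBot)
    simpa [Function.comp_def] using (hminus.sub hplus).mul hker
  · have hker := ((tendsto_expKernel_atTop a).isBigO_one ℝ).comp_tendsto
      ((tendsto_sub_pi_mul_I_stripEnd atTop).mono_right inf_le_left)
    have hminus := htop.comp_tendsto (tendsto_sub_pi_mul_I_stripEnd atTop)
    have hplus := htop.comp_tendsto (tendsto_add_pi_mul_I_stripEnd atTop)
    simp only [Function.comp_def, sub_re, add_re, ofReal_re, re_ofReal_mul, I_re, mul_zero,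
      sub_zero, add_zero] at hminus hplus
    simpa [Function.comp_def] using (hminus.sub hplus).mul hker

theorem integral_boundary_mul_expKernel (ha : a ∈ expStrip)
    (hf : DiffContOnCl ℂ f expStrip) (hσ : 0 < σ) (hbot : f =O[stripEnd atBot] fun _ ↦ (1 : ℝ))
    (htop : f =O[stripEnd atTop] fun z ↦ Real.exp (-σ * z.re)) :
    ∫ x : ℝ, (f (x - π * I) - f (x + π * I)) * (exp x / (exp x + exp a)) = 2 * π * I * f a := by
  have hf_top : Tendsto f (stripEnd atTop) (𝓝 0) :=
    htop.trans_tendsto (Real.tendsto_exp_atBot.comp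
      ((tendsto_re_stripEnd atTop).const_mul_atTop_of_neg (neg_lt_zero.2 hσ)))
  have hquot_top : Tendsto (cauchyQuotient f a) (stripEnd atTop) (𝓝 (-f a)) := by
    have h := (hf_top.sub_const (f a)).mul ((tendsto_expKernel_atTop a).mono_left inf_le_left)
    rw [zero_sub, mul_one] at h
    exact h.congr' (cauchyQuotient_eventuallyEq (eventually_ne_atTop a.re)).symm
  have hquot_bot : Tendsto (cauchyQuotient f a) (stripEnd atBot) (𝓝 0) := by
    have hsub : (fun z ↦ f z - f a) =O[stripEnd atBot] fun _ ↦ (1 : ℝ) :=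
      hbot.sub (isBigO_const_const _ one_ne_zero _)
    have hker := (isLittleO_one_iff ℝ).2
      ((tendsto_expKernel_atBot a).mono_left (inf_le_left : stripEnd atBot ≤ _))
    have h := (isLittleO_one_iff ℝ).1 (by simpa using hsub.mul_isLittleO hker)
    exact h.congr' (cauchyQuotient_eventuallyEq (eventually_ne_atBot a.re)).symm
  simpa only [cauchyQuotient_sub_boundary ha, zero_sub, neg_neg] using
    integral_sub_boundary_expStrip (diffContOnCl_cauchyQuotient ha hf) hquot_bot hquot_top
      (integrable_cauchyQuotient_sub_boundary ha hf hσ hbot htop)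

end Cauchy

/-- The Lévy exponent `ψ(λ) = ((1 + λ) log (1 + λ) - λ) / λ` of the uniform law on `[0, 1]` in the
coordinate `1 + λ = e ^ z`, that is `z * e ^ z / (e ^ z - 1) - 1`; writing it with `dslope` makes it
holomorphic at `z = 0`. -/
noncomputable def uniformLevyExponent (z : ℂ) : ℂ := exp z / dslope exp 0 z - 1

lemma uniformLevyExponent_zero : uniformLevyExponent 0 = 0 := by
  simp [uniformLevyExponent]

lemma uniformLevyExponent_of_ne {z : ℂ} (hz : z ≠ 0) :
    uniformLevyExponent z = z * expKernel 0 z - 1 := by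
  rw [uniformLevyExponent, expKernel, dslope_of_ne _ hz, slope_def_field, sub_zero,
    div_div_eq_mul_div, mul_comm, mul_div_assoc]

lemma uniformLevyExponent_log {w : ℂ} (hw₀ : w ≠ 0) (hw₁ : w ≠ 1) :
    uniformLevyExponent (log w) = w * log w / (w - 1) - 1 := by
  have hlog : log w ≠ 0 := fun h ↦ hw₁ (by rw [← exp_log hw₀, h, exp_zero])
  rw [uniformLevyExponent_of_ne hlog, expKernel, exp_log hw₀, exp_zero]
  ring

lemma diffContOnCl_uniformLevyExponent : DiffContOnCl ℂ uniformLevyExponent expStrip := by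
  have hslope :=
    diffContOnCl_dslope (expStrip_mem_nhds zero_mem_expStrip) differentiable_exp.diffContOnCl
  exact (differentiable_exp.diffContOnCl.smul
    (hslope.inv fun _ hz ↦ dslope_exp_ne_zero zero_mem_expStrip hz)).sub_const 1

lemma tendsto_div_exp_sub_one : Tendsto (fun z ↦ z / (exp z - 1)) (stripEnd atTop) (𝓝 0) := by
  have hdiv : Tendsto (fun z ↦ z / exp z) (stripEnd atTop) (𝓝 0) := by
    simpa using (isExpCmpFilter_stripEnd_atTop.isLittleO_pow_mul_exp
      zero_lt_one 1 0).tendsto_div_nhds_zero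
  have h := hdiv.mul ((tendsto_expKernel_atTop 0).mono_left inf_le_left)
  rw [zero_mul] at h
  refine h.congr fun z ↦ ?_
  rw [expKernel, exp_zero, div_mul_div_cancel₀ (exp_ne_zero z)]

lemma tendsto_uniformLevyExponent_sub_self :
    Tendsto (fun z ↦ uniformLevyExponent z - z) (stripEnd atTop) (𝓝 (-1)) := by
  have h := tendsto_div_exp_sub_one.sub_const 1
  rw [zero_sub] at h
  refine h.congr' ?_
  filter_upwards [(tendsto_re_stripEnd atTop).eventually (eventually_gt_atTop 0)] with z hre
  have hz : z ≠ 0 := ne_of_apply_ne re hre.ne'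
  have hexp : exp z - 1 ≠ 0 := by
    refine sub_ne_zero.2 (ne_of_apply_ne norm ?_)
    rw [norm_exp, norm_one]
    exact (Real.one_lt_exp_iff.2 hre).ne'
  rw [uniformLevyExponent_of_ne hz, expKernel, exp_zero]
  field_simp
  ring

lemma tendsto_uniformLevyExponent_atBot :
    Tendsto uniformLevyExponent (stripEnd atBot) (𝓝 (-1)) := by
  have h := (tendsto_div_exp_sub_one.comp tendsto_neg_stripEnd).sub_const 1
  rw [zero_sub] at h
  refine h.congr' ?_
  filter_upwards [(tendsto_re_stripEnd atBot).eventually (eventually_lt_atBot 0)] with z hre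
  have hexp : exp (-z) - 1 = -(exp z - 1) / exp z := by
    rw [exp_neg, neg_sub, sub_div, div_self (exp_ne_zero z), one_div]
  rw [uniformLevyExponent_of_ne (ne_of_apply_ne re hre.ne), expKernel, Function.comp_apply, hexp,
    exp_zero, div_div_eq_mul_div, neg_mul, neg_div_neg_eq, mul_div_assoc]

lemma ofReal_sigmoid (x : ℝ) : (Real.sigmoid x : ℂ) = exp x / (exp x + 1) := by
  have h : Real.sigmoid x = Real.exp x / (Real.exp x + 1) := by
    rw [Real.sigmoid_def, Real.exp_neg]
    field_simp
  exact_mod_cast congrArg ofReal h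

lemma uniformLevyExponent_sub_pi_mul_I (x : ℝ) :
    uniformLevyExponent (x - π * I) = Real.sigmoid x * (x - π * I) - 1 := by
  have hne : (x - π * I : ℂ) ≠ 0 := ne_of_apply_ne im (by simp [Real.pi_ne_zero])
  rw [uniformLevyExponent_of_ne hne, expKernel_sub_pi_mul_I, exp_zero, ofReal_sigmoid]
  ring

lemma uniformLevyExponent_add_pi_mul_I (x : ℝ) :
    uniformLevyExponent (x + π * I) = Real.sigmoid x * (x + π * I) - 1 := by
  have hne : (x + π * I : ℂ) ≠ 0 := ne_of_apply_ne im (by simp [Real.pi_ne_zero])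
  rw [uniformLevyExponent_of_ne hne, expKernel_add_pi_mul_I, exp_zero, ofReal_sigmoid]
  ring

lemma exp_neg_uniformLevyExponent_sub_boundary (σ x : ℝ) :
    exp (-σ * uniformLevyExponent (x - π * I)) - exp (-σ * uniformLevyExponent (x + π * I)) =
      2 * I * (Real.exp (σ - σ * Real.sigmoid x * x) * Real.sin (π * σ * Real.sigmoid x) : ℝ) := by
  have hminus : -σ * uniformLevyExponent (x - π * I) =
      (σ - σ * Real.sigmoid x * x : ℝ) + (π * σ * Real.sigmoid x : ℝ) * I := by
    rw [uniformLevyExponent_sub_pi_mul_I]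
    push_cast
    ring
  have hplus : -σ * uniformLevyExponent (x + π * I) =
      (σ - σ * Real.sigmoid x * x : ℝ) + -(π * σ * Real.sigmoid x : ℝ) * I := by
    rw [uniformLevyExponent_add_pi_mul_I]
    push_cast
    ring
  rw [hminus, hplus, exp_add, exp_add, exp_mul_I, exp_mul_I, cos_neg, sin_neg]
  push_cast
  ring

theorem integral_exp_neg_uniformLevyExponent_boundary {σ : ℝ} (hσ : 0 < σ) {a : ℂ}
    (ha : a ∈ expStrip) :
    ∫ x : ℝ, (Real.exp (σ - σ * Real.sigmoid x * x) * Real.sin (π * σ * Real.sigmoid x) : ℝ) *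
      (exp x / (exp x + exp a)) = π * exp (-σ * uniformLevyExponent a) := by
  have hf : DiffContOnCl ℂ (fun z ↦ exp (-σ * uniformLevyExponent z)) expStrip :=
    differentiable_exp.comp_diffContOnCl (diffContOnCl_uniformLevyExponent.const_smul (-σ : ℂ))
  have hbot : (fun z ↦ exp (-σ * uniformLevyExponent z)) =O[stripEnd atBot] fun _ ↦ (1 : ℝ) :=
    (tendsto_uniformLevyExponent_atBot.const_mul (-σ : ℂ)).cexp.isBigO_one ℝ
  have htop : (fun z ↦ exp (-σ * uniformLevyExponent z)) =O[stripEnd atTop]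
      fun z ↦ Real.exp (-σ * z.re) := by
    have hlin : (fun z ↦ exp (-σ * z)) =O[stripEnd atTop] fun z ↦ Real.exp (-σ * z.re) :=
      isBigO_of_le _ fun z ↦ by simp [norm_exp]
    have hrest := (tendsto_uniformLevyExponent_sub_self.const_mul (-σ : ℂ)).cexp.isBigO_one ℝ
    refine (hlin.mul hrest).congr (fun z ↦ ?_) fun z ↦ mul_one _
    rw [← exp_add]
    ring_nf
  have h := integral_boundary_mul_expKernel ha hf hσ hbot htop
  simp only [exp_neg_uniformLevyExponent_sub_boundary, mul_assoc (2 * I)] at h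
  rw [integral_const_mul] at h
  refine mul_left_cancel₀ (mul_ne_zero two_ne_zero I_ne_zero) (h.trans ?_)
  ring

lemma integral_Ioo_zero_one_eq_integral_sigmoid {E : Type*} [NormedAddCommGroup E]
    [NormedSpace ℝ E] (g : ℝ → E) :
    ∫ y in Ioo 0 1, g y =
      ∫ x, (Real.sigmoid x * Real.sigmoid (-x)) • g (Real.sigmoid (-x)) := by
  have hderiv (x : ℝ) (_ : x ∈ univ) : HasDerivWithinAt Real.sigmoid
      (Real.sigmoid x * (1 - Real.sigmoid x)) univ x :=
    (Real.hasDerivAt_sigmoid x).hasDerivWithinAt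
  have habs (x : ℝ) : |Real.sigmoid x * (1 - Real.sigmoid x)| =
      Real.sigmoid (-x) * Real.sigmoid x := by
    rw [← Real.sigmoid_neg, mul_comm, abs_of_pos]
    exact mul_pos (Real.sigmoid_pos _) (Real.sigmoid_pos _)
  rw [← Real.range_sigmoid, ← image_univ, integral_image_eq_integral_abs_deriv_smul
    MeasurableSet.univ hderiv Real.sigmoid_injective.injOn, setIntegral_univ]
  simp only [habs]
  rw [← integral_neg_eq_self]
  simp only [neg_neg]

/-- The density `f_σ` of the beta-scaled Dirichlet mean `β_{σ,1-σ} M_σ(F_U)`. -/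
noncomputable def betaUniformDensity (σ y : ℝ) : ℝ :=
  (Real.exp σ / π) * Real.sin (π * σ * (1 - y)) * y ^ (σ * (1 - y) - 1) *
    (1 - y) ^ (-(σ * (1 - y)))

lemma betaUniformDensity_nonneg {σ y : ℝ} (hσ₀ : 0 ≤ σ) (hσ₁ : σ ≤ 1) (hy : y ∈ Icc 0 1) :
    0 ≤ betaUniformDensity σ y := by
  have hy' : 0 ≤ 1 - y := sub_nonneg.2 hy.2
  have hsin : 0 ≤ Real.sin (π * σ * (1 - y)) := by
    refine Real.sin_nonneg_of_nonneg_of_le_pi (by positivity) ?_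
    rw [mul_assoc]
    exact mul_le_of_le_one_right Real.pi_pos.le
      (mul_le_one₀ hσ₁ hy' (sub_le_self 1 hy.1))
  have hpow : 0 ≤ y ^ (σ * (1 - y) - 1) := Real.rpow_nonneg hy.1 _
  unfold betaUniformDensity
  positivity

lemma sigmoid_mul_betaUniformDensity (σ x : ℝ) :
    Real.sigmoid (-x) * betaUniformDensity σ (Real.sigmoid (-x)) =
      π⁻¹ * (Real.exp (σ - σ * Real.sigmoid x * x) * Real.sin (π * σ * Real.sigmoid x)) := by
  set p := Real.sigmoid x
  have hp₀ : 0 < p := Real.sigmoid_pos x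
  have hq : Real.sigmoid (-x) = p * Real.exp (-x) := (Real.sigmoid_mul_rexp_neg x).symm
  have hq₀ : 0 < Real.sigmoid (-x) := Real.sigmoid_pos (-x)
  have hqp : 1 - Real.sigmoid (-x) = p := by rw [Real.sigmoid_neg, sub_sub_cancel]
  have hpow : Real.sigmoid (-x) * (Real.sigmoid (-x) ^ (σ * p - 1) * p ^ (-(σ * p))) =
      Real.exp (-(σ * p * x)) := by
    rw [Real.rpow_sub_one hq₀.ne', ← mul_assoc, mul_div_cancel₀ _ hq₀.ne', hq,
      Real.mul_rpow hp₀.le (Real.exp_pos _).le, mul_right_comm, ← Real.rpow_add hp₀,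
      add_neg_cancel, Real.rpow_zero, one_mul, ← Real.exp_mul]
    ring_nf
  rw [betaUniformDensity, hqp, sub_eq_add_neg σ, Real.exp_add, ← hpow]
  ring

lemma sigmoid_mul_inv_one_add (a : ℂ) (x : ℝ) :
    Real.sigmoid x * (1 + (exp a - 1) * Real.sigmoid (-x))⁻¹ = exp x / (exp x + exp a) := by
  have hexp : (exp x + 1 : ℂ) ≠ 0 := mod_cast (add_pos (Real.exp_pos x) one_pos).ne'
  have hden : 1 + (exp a - 1) * (1 - exp x / (exp x + 1)) = (exp x + exp a) / (exp x + 1) := by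
    field_simp
    ring
  rw [Real.sigmoid_neg, ofReal_sub, ofReal_one, ofReal_sigmoid, hden, inv_div,
    div_mul_div_cancel₀ hexp]

theorem integral_betaUniformDensity_mul_inv_exp {σ : ℝ} (hσ : 0 < σ) {a : ℂ} (ha : a ∈ expStrip) :
    ∫ y in Ioo (0 : ℝ) 1, (betaUniformDensity σ y : ℂ) * (1 + (exp a - 1) * y)⁻¹ =
      exp (-σ * uniformLevyExponent a) := by
  rw [integral_Ioo_zero_one_eq_integral_sigmoid]
  have hintegrand (x : ℝ) : (Real.sigmoid x * Real.sigmoid (-x)) •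
      ((betaUniformDensity σ (Real.sigmoid (-x)) : ℂ) *
        (1 + (exp a - 1) * Real.sigmoid (-x))⁻¹) =
      (π : ℂ)⁻¹ * ((Real.exp (σ - σ * Real.sigmoid x * x) *
        Real.sin (π * σ * Real.sigmoid x) : ℝ) * (exp x / (exp x + exp a))) := by
    have h := congrArg ofReal (sigmoid_mul_betaUniformDensity σ x)
    rw [ofReal_mul, ofReal_mul, ofReal_inv] at h
    rw [← sigmoid_mul_inv_one_add, real_smul, ofReal_mul]
    linear_combination Real.sigmoid x * (1 + (exp a - 1) * Real.sigmoid (-x))⁻¹ * h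
  simp only [hintegrand]
  rw [integral_const_mul, integral_exp_neg_uniformLevyExponent_boundary hσ ha,
    inv_mul_cancel_left₀ (mod_cast Real.pi_ne_zero)]

theorem integral_betaUniformDensity {σ : ℝ} (hσ : 0 < σ) :
    ∫ y in Ioo (0 : ℝ) 1, betaUniformDensity σ y = 1 := by
  have h := integral_betaUniformDensity_mul_inv_exp hσ zero_mem_expStrip
  rw [uniformLevyExponent_zero] at h
  simp only [exp_zero, sub_self, zero_mul, add_zero, inv_one, mul_one, mul_zero] at h
  exact_mod_cast h

theorem integral_betaUniformDensity_mul_inv {σ : ℝ} (hσ : 0 < σ) {l : ℂ}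
    (hl : 1 + l ∈ slitPlane) (hl₀ : l ≠ 0) :
    ∫ y in Ioo (0 : ℝ) 1, (betaUniformDensity σ y : ℂ) * (1 + l * y)⁻¹ =
      exp σ * (1 + l) ^ (-(σ * (1 + l) / l)) := by
  have hne := slitPlane_ne_zero hl
  have hlog : log (1 + l) ∈ expStrip :=
    ⟨neg_pi_lt_log_im _, (log_im_le_pi _).lt_of_ne (by rw [log_im]; exact slitPlane_arg_ne_pi hl)⟩
  have h := integral_betaUniformDensity_mul_inv_exp hσ hlog
  rw [exp_log hne, add_sub_cancel_left, uniformLevyExponent_log hne (by simpa using hl₀),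
    add_sub_cancel_left] at h
  rw [h, cpow_def_of_ne_zero hne, ← exp_add]
  ring_nf

end ExpStrip

open ExpStrip

theorem density_of_beta_scaled_uniform_mean_general (σ : ℝ) (hσ : 0 < σ) :
    (σ ≤ 1 → ∀ y ∈ Ioo (0 : ℝ) 1, 0 ≤ betaUniformDensity σ y) ∧
    ∫ y in Ioo (0 : ℝ) 1, betaUniformDensity σ y = 1 ∧
    ∀ l : ℂ, 1 + l ∈ slitPlane → l ≠ 0 →
      ∫ y in Ioo (0 : ℝ) 1, (betaUniformDensity σ y : ℂ) * (1 + l * y)⁻¹ =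
        exp σ * (1 + l) ^ (-(σ * (1 + l) / l)) :=
  ⟨fun hσ₁ _ hy ↦ betaUniformDensity_nonneg hσ.le hσ₁ (Ioo_subset_Icc_self hy),
    integral_betaUniformDensity hσ, fun _ ↦ integral_betaUniformDensity_mul_inv hσ⟩

/-- Proposition 4.2(ii): for `0 < σ ≤ 1`, the function
`f_σ(y) = (e^σ/π)·sin(πσ(1−y))·y^{σ(1−y)−1}·(1−y)^{−σ(1−y)}` is a probability
density on `(0,1)`, and for every `λ > 0`,
`∫₀¹ f_σ(y)/(1+λy) dy = e^σ·(1+λ)^{−σ(1+λ)/λ}`. -/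
theorem density_of_beta_scaled_uniform_mean
    (σ : ℝ) (hσ0 : 0 < σ) (hσ1 : σ ≤ 1) :
    (∀ y ∈ Set.Ioo (0:ℝ) 1,
      0 ≤ (Real.exp σ / Real.pi) * Real.sin (Real.pi * σ * (1 - y)) *
        y ^ (σ * (1 - y) - 1) * (1 - y) ^ (-(σ * (1 - y)))) ∧
    (∫ y in Set.Ioo (0:ℝ) 1,
      (Real.exp σ / Real.pi) * Real.sin (Real.pi * σ * (1 - y)) *
        y ^ (σ * (1 - y) - 1) * (1 - y) ^ (-(σ * (1 - y))) = 1) ∧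
    (∀ l : ℝ, 0 < l →
      ∫ y in Set.Ioo (0:ℝ) 1,
        (Real.exp σ / Real.pi) * Real.sin (Real.pi * σ * (1 - y)) *
          y ^ (σ * (1 - y) - 1) * (1 - y) ^ (-(σ * (1 - y))) * (1 + l * y)⁻¹
        = Real.exp σ * (1 + l) ^ (-(σ * (1 + l) / l))) := by
  obtain ⟨hnonneg, hone, htransform⟩ := density_of_beta_scaled_uniform_mean_general σ hσ0
  refine ⟨hnonneg hσ1, hone, fun l hl ↦ ofReal_injective ?_⟩
  have h := htransform l (Or.inl (by simpa using by linarith)) (mod_cast hl.ne')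
  push_cast [ofReal_cpow (add_pos one_pos hl).le, ← integral_complex_ofReal]
  exact_mod_cast h
end

section
/- For each 0 < σ ≤ 1, the function h_σ(x) = (1/π)·sin(πσ/(1+x))·x^{σ/(1+x)−1} on (0,∞) is a probability density, and for every λ > 0 with λ ≠ 1, ∫₀^∞ h_σ(x)·(1+λx)^{-1} dx = λ^{−σλ/(λ−1)}. (Proposition 4.2(iv): h_σ is the density of β_{σ,1−σ}·M_σ(F_W), the beta-scaled Dirichlet mean for W a ratio of independent exponentials, characterized by its order-1 Cauchy–Stieltjes transform e^{−σψ_{F_W}(λ)}.) -/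
open MeasureTheory

/-!
For `ψ(λ) = λ log λ / (λ - 1)`, the function `Φ(w) = exp (-σ ψ(e^{-w}))` is holomorphic on the strip
`|Im w| < 2π`, tends to `1` at its right end and to `0` at its left end, and its jump
`Φ(t + πi) - Φ(t - πi)` is `2πi` times the pull-back `e^t h_σ(e^t)` of the density. Cauchy's theorem
on the strip `|Im w| ≤ π` gives the total mass `1`, and, after division by `1 - λ e^w`, whose only
zero there is `w = -log λ`, the Stieltjes transform `Φ(-log λ) = exp (-σ ψ(λ))`.
-/

section Strip

open Filter Topology Complex Asymptotics Set

/-- The filter of points of the horizontal strip `a ≤ Im w ≤ b` whose real part tends along `l`: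
for `l = atTop` and `l = atBot`, the right and the left end of the strip. -/
def stripEnd (l : Filter ℝ) (a b : ℝ) : Filter ℂ := comap re l ⊓ 𝓟 (im ⁻¹' Icc a b)

lemma tendsto_re_stripEnd (l : Filter ℝ) (a b : ℝ) : Tendsto re (stripEnd l a b) l :=
  tendsto_comap.mono_left inf_le_left

lemma eventually_im_mem_stripEnd (l : Filter ℝ) (a b : ℝ) :
    ∀ᶠ w in stripEnd l a b, w.im ∈ Icc a b :=
  mem_inf_of_right (mem_principal_self _)

lemma tendsto_add_mul_I_stripEnd (l : Filter ℝ) (a b : ℝ) :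
    Tendsto (fun p : ℝ × ℝ ↦ (p.1 + p.2 * I : ℂ)) (l ×ˢ 𝓟 (Icc a b)) (stripEnd l a b) := by
  refine tendsto_inf.2 ⟨tendsto_comap_iff.2 ?_, tendsto_principal.2 ?_⟩
  · simpa [Function.comp_def] using! tendsto_fst (f := l) (g := 𝓟 (Icc a b))
  · filter_upwards [prod_mem_prod univ_mem (mem_principal_self (Icc a b))] with p hp
    simpa using! hp.2

lemma tendsto_neg_stripEnd_atBot (c : ℝ) :
    Tendsto Neg.neg (stripEnd atBot (-c) c) (stripEnd atTop (-c) c) := by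
  refine tendsto_inf.2 ⟨tendsto_comap_iff.2 ?_, tendsto_principal.2 ?_⟩
  · exact tendsto_neg_atBot_atTop.comp (tendsto_re_stripEnd _ _ _)
  · filter_upwards [eventually_im_mem_stripEnd atBot (-c) c] with w hw
    simpa [and_comm, neg_le] using hw

lemma tendsto_exp_stripEnd_atBot (a b : ℝ) : Tendsto exp (stripEnd atBot a b) (𝓝 0) :=
  tendsto_exp_comap_re_atBot.mono_left inf_le_left

lemma isExpCmpFilter_stripEnd_atTop (a b : ℝ) : IsExpCmpFilter (stripEnd atTop a b) :=
  .of_boundedUnder_im (tendsto_re_stripEnd _ _ _)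
    ⟨b, eventually_map.2 ((eventually_im_mem_stripEnd _ _ _).mono fun _ h ↦ h.2)⟩
    ⟨a, eventually_map.2 ((eventually_im_mem_stripEnd _ _ _).mono fun _ h ↦ h.1)⟩

lemma pow_isLittleO_exp_stripEnd_atTop (n : ℕ) (a b : ℝ) :
    (fun w : ℂ ↦ w ^ n) =o[stripEnd atTop a b] exp := by
  simpa using (isExpCmpFilter_stripEnd_atTop a b).isLittleO_pow_mul_exp zero_lt_one n 0

lemma const_isLittleO_exp_stripEnd_atTop {E : Type*} [NormedAddCommGroup E] (c : E) (a b : ℝ) :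
    (fun _ ↦ c) =o[stripEnd atTop a b] exp :=
  (isBigO_const_const c (one_ne_zero (α := ℂ)) _).trans_isLittleO
    (by simpa only [pow_zero] using pow_isLittleO_exp_stripEnd_atTop 0 a b)

lemma exp_isBigO_exp_sub_const_stripEnd_atTop (c : ℂ) (a b : ℝ) :
    exp =O[stripEnd atTop a b] fun w ↦ exp w - c :=
  (const_isLittleO_exp_stripEnd_atTop c a b).right_isBigO_sub

lemma closure_im_preimage_Ioo {a b : ℝ} (hab : a < b) :
    closure (im ⁻¹' Ioo a b) = im ⁻¹' Icc a b := by
  rw [closure_preimage_im, closure_Ioo hab.ne]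

lemma eq_of_exp_eq_exp_of_abs_im_sub_lt {z w : ℂ} (h : exp z = exp w)
    (him : |z.im - w.im| < 2 * Real.pi) : z = w := by
  obtain ⟨n, rfl⟩ := exp_eq_exp_iff_exists_int.1 h
  have abs_mul_lt : |(n : ℝ)| * (2 * Real.pi) < 1 * (2 * Real.pi) := by
    simpa [abs_mul, abs_of_pos Real.pi_pos] using him
  have n_eq_zero : n = 0 := by
    rw [← Int.abs_lt_one_iff]
    exact_mod_cast lt_of_mul_lt_mul_right abs_mul_lt Real.two_pi_pos.le
  simp [n_eq_zero]

lemma dslope_exp_ne_zero {z w : ℂ} (him : |w.im - z.im| < 2 * Real.pi) :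
    dslope exp z w ≠ 0 := by
  rcases eq_or_ne w z with rfl | hne
  · simp
  · rw [dslope_of_ne _ hne, slope_def_field]
    exact div_ne_zero
      (sub_ne_zero.2 fun h ↦ hne (eq_of_exp_eq_exp_of_abs_im_sub_lt h him)) (sub_ne_zero.2 hne)

variable {E : Type*} [NormedAddCommGroup E] [NormedSpace ℂ E]

lemma inv_dslope_smul_dslope (f : ℂ → ℂ) (F : ℂ → E) {z w : ℂ} (hwz : w ≠ z) :
    (dslope f z w)⁻¹ • dslope F z w = (f w - f z)⁻¹ • (F w - F z) := by
  rw [dslope_of_ne _ hwz, dslope_of_ne _ hwz, slope_def_field, slope_def_module, smul_smul,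
    inv_div, div_mul_eq_mul_div, mul_inv_cancel₀ (sub_ne_zero.2 hwz), one_div]

/-- The quotient `(F w - F z) / (1 - e ^ (w - z))`, as a function of `w`, with the removable
singularity at `z` filled in by writing it with divided differences based at `z`. -/
noncomputable def expQuotient (F : ℂ → E) (z w : ℂ) : E :=
  -exp z • (dslope exp z w)⁻¹ • dslope F z w

lemma expQuotient_of_ne (F : ℂ → E) {z w : ℂ} (hwz : w ≠ z) :
    expQuotient F z w = (-exp z / (exp w - exp z)) • (F w - F z) := by
  rw [expQuotient, inv_dslope_smul_dslope exp F hwz, smul_smul, div_eq_mul_inv]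

lemma expQuotient_jump (F : ℂ → E) {z : ℂ} (hz : z.im ∈ Ioo (-Real.pi) Real.pi) (t : ℝ) :
    expQuotient F z (t + Real.pi * I) - expQuotient F z (t - Real.pi * I) =
      (1 + exp (t - z))⁻¹ • (F (t + Real.pi * I) - F (t - Real.pi * I)) := by
  have hcoeff : -exp z / (-exp t - exp z) = (1 + exp (t - z))⁻¹ := by
    rw [exp_sub, ← neg_add', neg_div_neg_eq, ← inv_div, add_div, div_self (exp_ne_zero z),
      add_comm]
  rw [expQuotient_of_ne F (ne_of_apply_ne im (by simpa using hz.2.ne')),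
    expQuotient_of_ne F (ne_of_apply_ne im (by simpa using hz.1.ne)),
    exp_add_pi_mul_I, exp_sub_pi_mul_I, hcoeff, ← smul_sub, sub_sub_sub_cancel_right]

variable {F : ℂ → E} {a b : ℝ} {A B : E}

lemma tendsto_expQuotient_atTop (z : ℂ) (hF : F =o[stripEnd atTop a b] exp) :
    Tendsto (expQuotient F z) (stripEnd atTop a b) (𝓝 0) := by
  have hlim := ((hF.sub (const_isLittleO_exp_stripEnd_atTop (F z) a b)).trans_isBigO
    (exp_isBigO_exp_sub_const_stripEnd_atTop (exp z) a b)).tendsto_inv_smul_nhds_zero.const_smul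
      (-exp z)
  rw [smul_zero] at hlim
  refine hlim.congr' ?_
  filter_upwards [(tendsto_re_stripEnd atTop a b).eventually_ne_atTop z.re] with w hw
  rw [expQuotient_of_ne F (ne_of_apply_ne re hw), smul_smul, div_eq_mul_inv]

lemma tendsto_expQuotient_atBot (z : ℂ) (hB : Tendsto F (stripEnd atBot a b) (𝓝 B)) :
    Tendsto (expQuotient F z) (stripEnd atBot a b) (𝓝 (B - F z)) := by
  have hexp := (tendsto_exp_stripEnd_atBot a b).sub_const (exp z)
  have hcoeff := (hexp.inv₀ (by simp)).const_mul (-exp z)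
  have hlim := hcoeff.smul (hB.sub_const (F z))
  rw [zero_sub, mul_inv_cancel₀ (neg_ne_zero.2 (exp_ne_zero z)), one_smul] at hlim
  refine hlim.congr' ?_
  filter_upwards [(tendsto_re_stripEnd atBot a b).eventually_ne_atBot z.re] with w hw
  rw [expQuotient_of_ne F (ne_of_apply_ne re hw), div_eq_mul_inv]

lemma continuous_horizontal_strip {X : Type*} [TopologicalSpace X] {K : ℂ → X}
    (hK : ContinuousOn K (im ⁻¹' Icc a b)) {y : ℝ} (hy : y ∈ Icc a b) :
    Continuous fun t : ℝ ↦ K (t + y * I) :=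
  hK.comp_continuous (by fun_prop) fun t ↦ by simpa using! hy

lemma intervalIntegral_horizontal_sub_eq_vertical_sub (hab : a < b)
    (hF : DiffContOnCl ℂ F (im ⁻¹' Ioo a b)) (S T : ℝ) :
    ∫ t in S..T, (F (t + b * I) - F (t + a * I)) =
      I • ((∫ y in a..b, F (T + y * I)) - ∫ y in a..b, F (S + y * I)) := by
  have hcont : ContinuousOn F (im ⁻¹' Icc a b) := closure_im_preimage_Ioo hab ▸ hF.2
  have hrect := integral_boundary_rect_eq_zero_of_continuousOn_of_differentiableOn F
    (S + a * I) (T + b * I)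
    (hcont.mono fun w hw ↦ by simpa [uIcc_of_le hab.le] using! hw.2)
    (hF.1.mono fun w hw ↦ by simpa [min_eq_left hab.le, max_eq_right hab.le] using! hw.2)
  simp only [add_re, add_im, ofReal_re, ofReal_im, mul_re, mul_im, I_re, I_im, mul_zero, mul_one,
    sub_zero, add_zero, zero_add] at hrect
  rw [intervalIntegral.integral_sub
    ((continuous_horizontal_strip hcont (right_mem_Icc.2 hab.le)).intervalIntegrable _ _)
    ((continuous_horizontal_strip hcont (left_mem_Icc.2 hab.le)).intervalIntegrable _ _), smul_sub]
  linear_combination (norm := module) -hrect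

variable [CompleteSpace E]

lemma tendsto_integral_vertical_stripEnd {l : Filter ℝ} [l.IsCountablyGenerated] (hab : a ≤ b)
    (hF : ContinuousOn F (im ⁻¹' Icc a b)) (hA : Tendsto F (stripEnd l a b) (𝓝 A)) :
    Tendsto (fun R : ℝ ↦ ∫ y in a..b, F (R + y * I)) l (𝓝 ((b - a) • A)) := by
  rw [← intervalIntegral.integral_const]
  have hunif : TendstoUniformlyOn (fun R y : ℝ ↦ F (R + y * I)) (fun _ ↦ A) l (uIcc a b) := by
    rw [uIcc_of_le hab, ← tendsto_prod_principal_iff]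
    exact hA.comp (tendsto_add_mul_I_stripEnd l a b)
  refine hunif.tendsto_intervalIntegral_of_continuousOn (.of_forall fun R ↦ ?_)
  rw [uIcc_of_le hab]
  exact hF.comp (by fun_prop) fun y hy ↦ by simpa using! hy

theorem integral_strip_jump (hab : a < b) (hF : DiffContOnCl ℂ F (im ⁻¹' Ioo a b))
    (hA : Tendsto F (stripEnd atTop a b) (𝓝 A)) (hB : Tendsto F (stripEnd atBot a b) (𝓝 B))
    (hint : Integrable fun t : ℝ ↦ F (t + b * I) - F (t + a * I)) :
    ∫ t : ℝ, (F (t + b * I) - F (t + a * I)) = ((b - a) * I : ℂ) • (A - B) := by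
  have hcont : ContinuousOn F (im ⁻¹' Icc a b) := closure_im_preimage_Ioo hab ▸ hF.2
  have hright := tendsto_integral_vertical_stripEnd hab.le hcont hA
  have hleft :=
    (tendsto_integral_vertical_stripEnd hab.le hcont hB).comp tendsto_neg_atTop_atBot
  have hlim := (hright.sub hleft).const_smul I
  have htop := intervalIntegral_tendsto_integral hint tendsto_neg_atTop_atBot tendsto_id
  simp only [intervalIntegral_horizontal_sub_eq_vertical_sub hab hF] at htop
  rw [tendsto_nhds_unique htop hlim, ← smul_sub, mul_comm, mul_smul, ← ofReal_sub, coe_smul]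

lemma diffContOnCl_dslope {s : Set ℂ} {z : ℂ} (hs : s ∈ 𝓝 z) (hF : DiffContOnCl ℂ F s) :
    DiffContOnCl ℂ (dslope F z) s :=
  ⟨(differentiableOn_dslope hs).2 hF.1,
    (continuousOn_dslope (mem_of_superset hs subset_closure)).2
      ⟨hF.2, hF.differentiableAt' hs⟩⟩

lemma diffContOnCl_expQuotient {s : Set ℂ} {z : ℂ} (hs : s ∈ 𝓝 z) (hF : DiffContOnCl ℂ F s)
    (him : ∀ w ∈ closure s, |w.im - z.im| < 2 * Real.pi) :
    DiffContOnCl ℂ (expQuotient F z) s :=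
  (((diffContOnCl_dslope hs differentiable_exp.diffContOnCl).inv fun w hw ↦
    dslope_exp_ne_zero (him w hw)).smul (diffContOnCl_dslope hs hF)).const_smul (-exp z)

theorem integral_strip_jump_div_one_add_exp {z : ℂ} (hz : z.im ∈ Ioo (-Real.pi) Real.pi)
    (hF : DiffContOnCl ℂ F (im ⁻¹' Ioo (-Real.pi) Real.pi))
    (hF_top : F =o[stripEnd atTop (-Real.pi) Real.pi] exp)
    (hB : Tendsto F (stripEnd atBot (-Real.pi) Real.pi) (𝓝 B))
    (hint : Integrable fun t : ℝ ↦
      (1 + exp (t - z))⁻¹ • (F (t + Real.pi * I) - F (t - Real.pi * I))) :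
    ∫ t : ℝ, (1 + exp (t - z))⁻¹ • (F (t + Real.pi * I) - F (t - Real.pi * I)) =
      (2 * Real.pi * I) • (F z - B) := by
  have neg_pi_lt_pi : -Real.pi < Real.pi := neg_lt_self Real.pi_pos
  have hnhds : im ⁻¹' Ioo (-Real.pi) Real.pi ∈ 𝓝 z :=
    (isOpen_Ioo.preimage continuous_im).mem_nhds hz
  have him : ∀ w ∈ closure (im ⁻¹' Ioo (-Real.pi) Real.pi), |w.im - z.im| < 2 * Real.pi := by
    rw [closure_im_preimage_Ioo neg_pi_lt_pi]
    exact fun w hw ↦ abs_lt.2 ⟨by linarith [hw.1, hz.2], by linarith [hw.2, hz.1]⟩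
  simp only [← expQuotient_jump F hz] at hint ⊢
  have hjump := integral_strip_jump neg_pi_lt_pi (diffContOnCl_expQuotient hnhds hF him)
    (tendsto_expQuotient_atTop z hF_top) (tendsto_expQuotient_atBot z hB)
  simp only [ofReal_neg, neg_mul, ← sub_eq_add_neg, zero_sub, neg_sub, sub_neg_eq_add,
    ← two_mul] at hjump
  exact hjump hint

end Strip

section ExpSubstitution

open Set

variable {E : Type*} [NormedAddCommGroup E] [NormedSpace ℝ E] (f : ℝ → E)

lemma integrableOn_Ioi_iff_integrable_exp_smul_comp_exp :
    IntegrableOn f (Ioi 0) ↔ Integrable fun t ↦ Real.exp t • f (Real.exp t) := by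
  simpa [Real.range_exp] using integrableOn_image_iff_integrableOn_abs_deriv_smul
    MeasurableSet.univ (fun x _ ↦ (Real.hasDerivAt_exp x).hasDerivWithinAt)
    Real.exp_injective.injOn f

lemma integral_Ioi_eq_integral_exp_smul_comp_exp :
    ∫ x in Ioi 0, f x = ∫ t, Real.exp t • f (Real.exp t) := by
  simpa [Real.range_exp] using integral_image_eq_integral_abs_deriv_smul
    MeasurableSet.univ (fun x _ ↦ (Real.hasDerivAt_exp x).hasDerivWithinAt)
    Real.exp_injective.injOn f

end ExpSubstitution

section Density

open Set

/-- The function `h_σ(x) = (1/π) sin(πσ/(1+x)) x^{σ/(1+x)-1}`, the density on `(0, ∞)` of the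
beta-scaled Dirichlet mean of a ratio of independent exponential variables. -/
noncomputable def betaScaledMeanDensity (σ x : ℝ) : ℝ :=
  (1 / Real.pi) * Real.sin (Real.pi * σ / (1 + x)) * x ^ (σ / (1 + x) - 1)

variable {σ x : ℝ}

lemma betaScaledMeanDensity_nonneg (hσ0 : 0 ≤ σ) (hσ1 : σ ≤ 1) (hx : 0 ≤ x) :
    0 ≤ betaScaledMeanDensity σ x := by
  have angle_le_pi : Real.pi * σ / (1 + x) ≤ Real.pi := by
    rw [div_le_iff₀ (by positivity)]
    exact mul_le_mul_of_nonneg_left (by linarith) Real.pi_pos.le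
  have sin_nonneg := Real.sin_nonneg_of_nonneg_of_le_pi (by positivity) angle_le_pi
  unfold betaScaledMeanDensity
  positivity

lemma abs_betaScaledMeanDensity_le_of_le_one (hσ : 0 ≤ σ) (hx0 : 0 < x) (hx1 : x ≤ 1) :
    |betaScaledMeanDensity σ x| ≤ x ^ (σ / 2 - 1) := by
  have inv_pi_le_one : 1 / Real.pi ≤ 1 := by
    rw [div_le_one Real.pi_pos]
    linarith [Real.pi_gt_three]
  calc |betaScaledMeanDensity σ x|
      = 1 / Real.pi * |Real.sin (Real.pi * σ / (1 + x))| * x ^ (σ / (1 + x) - 1) := by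
        rw [betaScaledMeanDensity, abs_mul, abs_mul, abs_of_pos (by positivity : 0 < 1 / Real.pi),
          Real.abs_rpow_of_nonneg hx0.le, abs_of_pos hx0]
    _ ≤ 1 * 1 * x ^ (σ / 2 - 1) := by
        gcongr ?_ * ?_ * ?_
        · exact Real.abs_sin_le_one _
        · refine Real.rpow_le_rpow_of_exponent_ge hx0 hx1 ?_
          gcongr
          linarith
    _ = x ^ (σ / 2 - 1) := by ring

lemma abs_betaScaledMeanDensity_le_of_one_le (hσ : 0 ≤ σ) (hx : 1 ≤ x) :
    |betaScaledMeanDensity σ x| ≤ σ * Real.exp σ * x ^ (-2 : ℝ) := by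
  have hx0 : 0 < x := zero_lt_one.trans_le hx
  have abs_sin_le : |Real.sin (Real.pi * σ / (1 + x))| ≤ Real.pi * σ / x :=
    calc |Real.sin (Real.pi * σ / (1 + x))| ≤ |Real.pi * σ / (1 + x)| := Real.abs_sin_le_abs
      _ = Real.pi * σ / (1 + x) := abs_of_nonneg (by positivity)
      _ ≤ Real.pi * σ / x := by gcongr; linarith
  have rpow_le : x ^ (σ / (1 + x)) ≤ Real.exp σ := by
    rw [Real.rpow_def_of_pos hx0, Real.exp_le_exp, mul_div_assoc', div_le_iff₀ (by positivity),
      mul_comm]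
    exact mul_le_mul_of_nonneg_left (by linarith [Real.log_le_sub_one_of_pos hx0]) hσ
  calc |betaScaledMeanDensity σ x|
      = 1 / Real.pi * |Real.sin (Real.pi * σ / (1 + x))| * (x ^ (σ / (1 + x)) / x) := by
        rw [betaScaledMeanDensity, abs_mul, abs_mul, abs_of_pos (by positivity : 0 < 1 / Real.pi),
          Real.abs_rpow_of_nonneg hx0.le, abs_of_pos hx0, Real.rpow_sub_one hx0.ne']
    _ ≤ 1 / Real.pi * (Real.pi * σ / x) * (Real.exp σ / x) := by gcongr
    _ = σ * Real.exp σ * x ^ (-2 : ℝ) := by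
        rw [Real.rpow_neg hx0.le, Real.rpow_two]
        field_simp

lemma integrableOn_betaScaledMeanDensity (hσ : 0 < σ) :
    IntegrableOn (betaScaledMeanDensity σ) (Ioi 0) := by
  have hmeas : Measurable (betaScaledMeanDensity σ) := by
    unfold betaScaledMeanDensity
    fun_prop
  rw [← Ioc_union_Ioi_eq_Ioi zero_le_one]
  refine .union ?_ ?_
  · have hbound : IntegrableOn (fun x : ℝ ↦ x ^ (σ / 2 - 1)) (Ioc 0 1) := by
      rw [← intervalIntegrable_iff_integrableOn_Ioc_of_le zero_le_one]
      exact intervalIntegral.intervalIntegrable_rpow' (by linarith)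
    exact hbound.mono' hmeas.aestronglyMeasurable <| ae_restrict_of_forall_mem measurableSet_Ioc
      fun x hx ↦ abs_betaScaledMeanDensity_le_of_le_one hσ.le hx.1 hx.2
  · have hbound : IntegrableOn (fun x : ℝ ↦ σ * Real.exp σ * x ^ (-2 : ℝ)) (Ioi 1) :=
      (integrableOn_Ioi_rpow_of_lt (by norm_num) zero_lt_one).const_mul _
    exact hbound.mono' hmeas.aestronglyMeasurable <| ae_restrict_of_forall_mem measurableSet_Ioi
      fun x hx ↦ abs_betaScaledMeanDensity_le_of_one_le hσ.le (le_of_lt hx)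

end Density

section Transform

open Filter Topology Complex Asymptotics Set

/-- The function `exp (-σ ψ(λ))`, with `ψ(λ) = λ log λ / (λ - 1)` the Lévy exponent of a ratio of
independent exponential variables, in the coordinate `λ = e^{-w}`; that is, `exp (σ w / (1 - e^w))`,
whose singularity at `0` is removed by writing `(e^w - 1) / w` as a divided difference. -/
noncomputable def levyTransform (σ : ℝ) (w : ℂ) : ℂ := exp (-σ / dslope exp 0 w)

variable {σ : ℝ}

lemma levyTransform_of_ne (σ : ℝ) {w : ℂ} (hw : w ≠ 0) :
    levyTransform σ w = exp (-σ * (w / (exp w - 1))) := by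
  rw [levyTransform, dslope_of_ne _ hw, slope_def_field, exp_zero, sub_zero, div_div_eq_mul_div,
    mul_div_assoc]

lemma levyTransform_eq_exp_mul_levyTransform_neg (σ : ℝ) {w : ℂ} (hw : |w.im| < 2 * Real.pi) :
    levyTransform σ w = exp (σ * w) * levyTransform σ (-w) := by
  rcases eq_or_ne w 0 with rfl | hw0
  · simp
  have exp_sub_one_ne_zero : exp w - 1 ≠ 0 := sub_ne_zero.2 fun h ↦
    hw0 (eq_of_exp_eq_exp_of_abs_im_sub_lt (h.trans exp_zero.symm) (by simpa using hw))
  have neg_quotient : -w / (exp (-w) - 1) = w + w / (exp w - 1) := by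
    have one_sub_exp_ne_zero : 1 - exp w ≠ 0 := by rwa [← neg_sub, neg_ne_zero]
    rw [exp_neg]
    field_simp
    ring
  rw [levyTransform_of_ne σ hw0, levyTransform_of_ne σ (neg_ne_zero.2 hw0), neg_quotient, ← exp_add]
  ring_nf

lemma diffContOnCl_levyTransform (σ : ℝ) :
    DiffContOnCl ℂ (levyTransform σ) (im ⁻¹' Ioo (-Real.pi) Real.pi) := by
  have neg_pi_lt_pi : -Real.pi < Real.pi := neg_lt_self Real.pi_pos
  have hnhds : im ⁻¹' Ioo (-Real.pi) Real.pi ∈ 𝓝 0 :=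
    (isOpen_Ioo.preimage continuous_im).mem_nhds (by simp [Real.pi_pos])
  have hne : ∀ w ∈ closure (im ⁻¹' Ioo (-Real.pi) Real.pi), dslope exp 0 w ≠ 0 := by
    rw [closure_im_preimage_Ioo neg_pi_lt_pi]
    refine fun w hw ↦ dslope_exp_ne_zero ?_
    rw [zero_im, sub_zero]
    exact (abs_le.2 hw).trans_lt (by linarith [Real.pi_pos])
  exact differentiable_exp.comp_diffContOnCl <|
    ((diffContOnCl_dslope hnhds differentiable_exp.diffContOnCl).inv hne).const_smul (-σ : ℂ)

lemma tendsto_levyTransform_atTop (σ a b : ℝ) :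
    Tendsto (levyTransform σ) (stripEnd atTop a b) (𝓝 1) := by
  have hquot : Tendsto (fun w ↦ w / (exp w - 1)) (stripEnd atTop a b) (𝓝 0) := by
    simpa only [pow_one] using ((pow_isLittleO_exp_stripEnd_atTop 1 a b).trans_isBigO
      (exp_isBigO_exp_sub_const_stripEnd_atTop 1 a b)).tendsto_div_nhds_zero
  have hlim := (hquot.const_mul (-σ : ℂ)).cexp
  rw [mul_zero, exp_zero] at hlim
  refine hlim.congr' ?_
  filter_upwards [(isExpCmpFilter_stripEnd_atTop a b).eventually_ne] with w hw
  rw [levyTransform_of_ne σ hw]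

lemma tendsto_levyTransform_atBot (hσ : 0 < σ) {c : ℝ} (hc : c < 2 * Real.pi) :
    Tendsto (levyTransform σ) (stripEnd atBot (-c) c) (𝓝 0) := by
  have hexp : Tendsto (fun w : ℂ ↦ exp (σ * w)) (stripEnd atBot (-c) c) (𝓝 0) := by
    simpa only [tendsto_exp_nhds_zero_iff, re_ofReal_mul] using
      (tendsto_re_stripEnd atBot (-c) c).const_mul_atBot hσ
  have hlim := hexp.mul
    ((tendsto_levyTransform_atTop σ (-c) c).comp (tendsto_neg_stripEnd_atBot c))
  rw [mul_one] at hlim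
  refine hlim.congr' ?_
  filter_upwards [eventually_im_mem_stripEnd atBot (-c) c] with w hw
  exact (levyTransform_eq_exp_mul_levyTransform_neg σ ((abs_le.2 hw).trans_lt hc)).symm

lemma exp_add_mul_I_sub_exp_sub_mul_I (z w : ℂ) :
    exp (z + w * I) - exp (z - w * I) = 2 * I * (sin w * exp z) := by
  rw [sub_eq_add_neg z, exp_add, exp_add, exp_mul_I, ← neg_mul, exp_mul_I, cos_neg, sin_neg]
  ring

lemma levyTransform_jump (σ t : ℝ) :
    levyTransform σ (t + Real.pi * I) - levyTransform σ (t - Real.pi * I) =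
      2 * Real.pi * I * (Real.exp t * betaScaledMeanDensity σ (Real.exp t) : ℝ) := by
  have boundary_value {w : ℂ} (hw : exp w = -exp t) :
      levyTransform σ w = exp ((σ / (1 + Real.exp t) : ℝ) * w) := by
    have w_ne_zero : w ≠ 0 := by
      rintro rfl
      rw [exp_zero, ← ofReal_exp] at hw
      norm_cast at hw
      linarith [Real.exp_pos t]
    rw [levyTransform_of_ne σ w_ne_zero, hw, ← neg_add', add_comm, div_neg, neg_mul_neg]
    push_cast
    ring_nf
  have density_pullback : Real.exp t * betaScaledMeanDensity σ (Real.exp t) =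
      1 / Real.pi * (Real.sin (σ / (1 + Real.exp t) * Real.pi) *
        Real.exp (σ / (1 + Real.exp t) * t)) := by
    rw [betaScaledMeanDensity, Real.rpow_sub_one (Real.exp_pos t).ne', ← Real.exp_mul]
    field_simp
  rw [boundary_value (exp_add_pi_mul_I t), boundary_value (exp_sub_pi_mul_I t), mul_add, mul_sub,
    ← mul_assoc, ← ofReal_mul _ Real.pi, exp_add_mul_I_sub_exp_sub_mul_I, density_pullback]
  push_cast
  field_simp

lemma levyTransform_neg_log (σ : ℝ) {l : ℝ} (hl0 : 0 < l) (hl1 : l ≠ 1) :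
    levyTransform σ (-Real.log l : ℝ) = (l ^ (-(σ * l / (l - 1))) : ℝ) := by
  have log_ne_zero : ((-Real.log l : ℝ) : ℂ) ≠ 0 :=
    ofReal_ne_zero.2 (neg_ne_zero.2 (Real.log_ne_zero_of_pos_of_ne_one hl0 hl1))
  have exponent_eq : -σ * (-Real.log l / (l⁻¹ - 1)) = Real.log l * -(σ * l / (l - 1)) := by
    have l_sub_one_ne_zero : l - 1 ≠ 0 := sub_ne_zero.2 hl1
    have one_sub_l_ne_zero : 1 - l ≠ 0 := sub_ne_zero.2 hl1.symm
    field_simp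
    ring
  rw [levyTransform_of_ne σ log_ne_zero, Real.rpow_def_of_pos hl0, ← exponent_eq, ofReal_exp]
  push_cast
  rw [exp_neg, ← ofReal_exp, Real.exp_log hl0]

lemma comp_exp_smul_levyTransform_jump (σ : ℝ) (g : ℝ → ℝ) (t : ℝ) :
    (g (Real.exp t) : ℂ) •
        (levyTransform σ (t + Real.pi * I) - levyTransform σ (t - Real.pi * I)) =
      2 * Real.pi * I *
        (Real.exp t • (betaScaledMeanDensity σ (Real.exp t) * g (Real.exp t)) : ℝ) := by
  rw [levyTransform_jump, smul_eq_mul, smul_eq_mul]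
  push_cast
  ring

lemma integrable_comp_exp_smul_levyTransform_jump {g : ℝ → ℝ}
    (hg : IntegrableOn (fun x ↦ betaScaledMeanDensity σ x * g x) (Ioi 0)) :
    Integrable fun t : ℝ ↦ (g (Real.exp t) : ℂ) •
      (levyTransform σ (t + Real.pi * I) - levyTransform σ (t - Real.pi * I)) := by
  simp only [comp_exp_smul_levyTransform_jump]
  exact ((integrableOn_Ioi_iff_integrable_exp_smul_comp_exp _).1 hg).ofReal.const_mul _

lemma integral_comp_exp_smul_levyTransform_jump (σ : ℝ) (g : ℝ → ℝ) :
    ∫ t : ℝ, (g (Real.exp t) : ℂ) •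
        (levyTransform σ (t + Real.pi * I) - levyTransform σ (t - Real.pi * I)) =
      2 * Real.pi * I * (∫ x in Ioi 0, betaScaledMeanDensity σ x * g x : ℝ) := by
  simp only [comp_exp_smul_levyTransform_jump]
  rw [integral_const_mul, integral_complex_ofReal, integral_Ioi_eq_integral_exp_smul_comp_exp]

theorem integral_betaScaledMeanDensity (hσ : 0 < σ) :
    ∫ x in Ioi 0, betaScaledMeanDensity σ x = 1 := by
  have hint := integrable_comp_exp_smul_levyTransform_jump (σ := σ) (g := fun _ ↦ 1)
    (by simpa using integrableOn_betaScaledMeanDensity hσ)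
  have htransform := integral_comp_exp_smul_levyTransform_jump σ fun _ ↦ 1
  have hcauchy := integral_strip_jump (neg_lt_self Real.pi_pos) (diffContOnCl_levyTransform σ)
    (tendsto_levyTransform_atTop σ _ _)
    (tendsto_levyTransform_atBot hσ (by linarith [Real.pi_pos]))
  simp only [ofReal_neg, neg_mul, ← sub_eq_add_neg, sub_neg_eq_add, ← two_mul, sub_zero,
    smul_eq_mul] at hcauchy
  simp only [ofReal_one, one_smul, mul_one] at hint htransform
  rw [hcauchy hint] at htransform
  exact_mod_cast (mul_left_cancel₀ two_pi_I_ne_zero htransform).symm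

lemma integrableOn_betaScaledMeanDensity_mul_inv (hσ : 0 < σ) {l : ℝ} (hl : 0 ≤ l) :
    IntegrableOn (fun x ↦ betaScaledMeanDensity σ x * (1 + l * x)⁻¹) (Ioi 0) := by
  refine (integrableOn_betaScaledMeanDensity hσ).mul_bdd (c := 1)
    (by fun_prop : Measurable fun x : ℝ ↦ (1 + l * x)⁻¹).aestronglyMeasurable
    (ae_restrict_of_forall_mem measurableSet_Ioi fun x (hx : 0 < x) ↦ ?_)
  rw [Real.norm_of_nonneg (by positivity)]
  exact inv_le_one_of_one_le₀ (le_add_of_nonneg_right (by positivity))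

theorem stieltjesTransform_betaScaledMeanDensity (hσ : 0 < σ) {l : ℝ} (hl : 0 < l) :
    ((∫ x in Ioi 0, betaScaledMeanDensity σ x * (1 + l * x)⁻¹ : ℝ) : ℂ) =
      levyTransform σ (-Real.log l : ℝ) := by
  have hkernel (t : ℝ) :
      (1 + exp (t - (-Real.log l : ℝ)))⁻¹ = (((1 + l * Real.exp t)⁻¹ : ℝ) : ℂ) := by
    rw [← ofReal_sub, ← ofReal_exp, sub_neg_eq_add, Real.exp_add, Real.exp_log hl, mul_comm l]
    push_cast
    rfl
  have hcauchy := integral_strip_jump_div_one_add_exp (z := (-Real.log l : ℝ))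
    (by simp [Real.pi_pos]) (diffContOnCl_levyTransform σ)
    (((tendsto_levyTransform_atTop σ _ _).isBigO_one ℂ).trans_isLittleO
      (const_isLittleO_exp_stripEnd_atTop 1 _ _))
    (tendsto_levyTransform_atBot hσ (by linarith [Real.pi_pos]))
  simp only [hkernel, sub_zero] at hcauchy
  rw [← mul_right_inj' two_pi_I_ne_zero, ← integral_comp_exp_smul_levyTransform_jump]
  exact hcauchy (integrable_comp_exp_smul_levyTransform_jump
    (integrableOn_betaScaledMeanDensity_mul_inv hσ hl.le))

end Transform

theorem density_of_beta_scaled_ratio_exponentials_mean_general (σ : ℝ) (hσ : 0 < σ) :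
    (σ ≤ 1 → ∀ x ∈ Set.Ioi (0:ℝ), 0 ≤ betaScaledMeanDensity σ x) ∧
    (∫ x in Set.Ioi (0:ℝ), betaScaledMeanDensity σ x = 1) ∧
    (∀ l : ℝ, 0 < l → l ≠ 1 →
      ∫ x in Set.Ioi (0:ℝ), betaScaledMeanDensity σ x * (1 + l * x)⁻¹ =
        l ^ (-(σ * l / (l - 1)))) := by
  refine ⟨fun hσ1 x hx ↦ betaScaledMeanDensity_nonneg hσ.le hσ1 (le_of_lt hx),
    integral_betaScaledMeanDensity hσ, fun l hl0 hl1 ↦ ?_⟩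
  rw [← Complex.ofReal_inj, stieltjesTransform_betaScaledMeanDensity hσ hl0,
    levyTransform_neg_log σ hl0 hl1]

/-- Proposition 4.2(iv): for `0 < σ ≤ 1`, the function
`h_σ(x) = (1/π)·sin(πσ/(1+x))·x^{σ/(1+x)−1}` is a probability density on `(0,∞)`,
and for every `λ > 0` with `λ ≠ 1`,
`∫₀^∞ h_σ(x)/(1+λx) dx = λ^{−σλ/(λ−1)}`. -/
theorem density_of_beta_scaled_ratio_exponentials_mean
    (σ : ℝ) (hσ0 : 0 < σ) (hσ1 : σ ≤ 1) :
    (∀ x ∈ Set.Ioi (0:ℝ),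
      0 ≤ (1 / Real.pi) * Real.sin (Real.pi * σ / (1 + x)) * x ^ (σ / (1 + x) - 1)) ∧
    (∫ x in Set.Ioi (0:ℝ),
      (1 / Real.pi) * Real.sin (Real.pi * σ / (1 + x)) * x ^ (σ / (1 + x) - 1) = 1) ∧
    (∀ l : ℝ, 0 < l → l ≠ 1 →
      ∫ x in Set.Ioi (0:ℝ),
        (1 / Real.pi) * Real.sin (Real.pi * σ / (1 + x)) * x ^ (σ / (1 + x) - 1)
          * (1 + l * x)⁻¹
        = l ^ (-(σ * l / (l - 1)))) := by
  obtain ⟨hnonneg, hmass, hstieltjes⟩ :=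
    density_of_beta_scaled_ratio_exponentials_mean_general σ hσ0
  exact ⟨hnonneg hσ1, hmass, hstieltjes⟩
end

section
/- Let 0 < α < 1 and let f_𝔾 be the function on (0,1) given by f_𝔾(u) = (α·sin(πα)/((1−α)π))·u^{α−1}(1−u)^{α−1}/(u^{2α} − 2u^α(1−u)^α cos(πα) + (1−u)^{2α}). Then f_𝔾 is a probability density on (0,1), and for every λ ≥ 0, exp(−(1−α)·∫₀¹ log(1 + λ/u)·f_𝔾(u) du) = (1+λ)^α − λ^α. (The Laplace exponent identity for the BFRY subordinator: Σ_α is GGC(1−α, F_{1/𝔾_α}) with E[e^{−λΣ_α}] = (1+λ)^α − λ^α.) -/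
open MeasureTheory

/-- The density of the BFRY random variable `𝔾_α` on (0,1). -/
noncomputable def bfryDensity (α : ℝ) : ℝ → ℝ := fun u =>
  α * Real.sin (Real.pi * α) / ((1 - α) * Real.pi) *
    (u ^ (α - 1) * (1 - u) ^ (α - 1) /
      (u ^ (2 * α) - 2 * u ^ α * (1 - u) ^ α * Real.cos (Real.pi * α) + (1 - u) ^ (2 * α)))

/-!
In the logit coordinate `u = e ^ t / (1 + e ^ t)` the density `f_𝔾` becomes a constant multiple of
`1 / (cosh (α t) - cos (π α))`. Up to the factor `2 π i (1 - α)`, this is the jump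
`g (t + i π) - g (t - i π)` of the logarithmic derivative `g` of `(1 - e ^ w) / (1 - e ^ (α w))`,
which is holomorphic on the strip `|im w| ≤ π` and tends to `1 - α` and `0` at its two ends.
Cauchy's theorem on the strip gives the total mass. Applied to the difference quotient
`(g w - g w₀) / (e ^ w - μ)` with `w₀ = log μ`, which tends to `0` and `g w₀ / μ` at the two ends,
it gives the Stieltjes transform `(1 - α) E[1 / (e ^ T + μ)] = d/dμ log ((1 - μ) / (1 - μ ^ α))` of
the logit `T` of `𝔾_α`. Integrating over `μ` from `0` to `l / (1 + l)` yields the logarithmic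
moment, because `1 + l / u = (1 + l) (1 + l / (1 + l) * e ^ (-t))`.
-/

section Strip

open Complex Filter Set Topology
open scoped Real

variable {E : Type*} [NormedAddCommGroup E] [NormedSpace ℂ E] {G : ℂ → E}

lemma tendsto_integral_vertical_segment [CompleteSpace E] {a b : ℝ} {A : E} {l : Filter ℝ}
    [l.IsCountablyGenerated] (hab : a ≤ b) (hG : ContinuousOn G (im ⁻¹' Icc a b))
    (hA : Tendsto G (comap re l ⊓ 𝓟 (im ⁻¹' Icc a b)) (𝓝 A)) :
    Tendsto (fun R : ℝ ↦ ∫ y in a..b, G (R + y * I)) l (𝓝 ((b - a) • A)) := by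
  rw [← intervalIntegral.integral_const]
  refine TendstoUniformlyOn.tendsto_intervalIntegral_of_continuousOn (.of_forall fun R ↦ ?_) ?_
  · exact hG.comp (by fun_prop) fun y hy ↦ by simpa [uIcc_of_le hab] using hy
  · rw [Metric.tendstoUniformlyOn_iff]
    intro ε hε
    have hball := hA.eventually (Metric.ball_mem_nhds A hε)
    rw [eventually_inf_principal, eventually_comap] at hball
    filter_upwards [hball] with R hR y hy
    rw [dist_comm]
    exact hR (R + y * I) (by simp) (by simpa [uIcc_of_le hab] using hy)

lemma tendsto_integral_sub_of_diffContOnCl_strip [CompleteSpace E] {a b : ℝ} {L M : E}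
    (hab : a < b) (hG : DiffContOnCl ℂ G (im ⁻¹' Ioo a b))
    (hL : Tendsto G (comap re atTop ⊓ 𝓟 (im ⁻¹' Icc a b)) (𝓝 L))
    (hM : Tendsto G (comap re atBot ⊓ 𝓟 (im ⁻¹' Icc a b)) (𝓝 M)) :
    Tendsto (fun R : ℝ ↦ ∫ t in -R..R, (G (t + b * I) - G (t + a * I))) atTop
      (𝓝 (I • (b - a) • (L - M))) := by
  have hcont : ContinuousOn G (im ⁻¹' Icc a b) := by
    simpa [closure_preimage_im, closure_Ioo hab.ne] using hG.continuousOn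
  have hline : ∀ y ∈ Icc a b, Continuous fun t : ℝ ↦ G (t + y * I) := fun y hy ↦
    hcont.comp_continuous (by fun_prop) fun t ↦ by simpa using hy
  have hrect : ∀ R : ℝ, ∫ t in -R..R, (G (t + b * I) - G (t + a * I)) =
      I • ((∫ y in a..b, G (R + y * I)) - ∫ y in a..b, G ((-R : ℝ) + y * I)) := fun R ↦ by
    have hCauchy := integral_boundary_rect_eq_zero_of_continuousOn_of_differentiableOn G
      ⟨-R, a⟩ ⟨R, b⟩ (hcont.mono fun w hw ↦ by simpa [uIcc_of_le hab.le] using hw.2)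
      (hG.differentiableOn.mono fun w hw ↦ by simpa [hab.le] using hw.2)
    rw [intervalIntegral.integral_sub ((hline b (right_mem_Icc.2 hab.le)).intervalIntegrable _ _)
      ((hline a (left_mem_Icc.2 hab.le)).intervalIntegrable _ _), smul_sub, ← sub_eq_zero,
      ← neg_eq_zero, ← hCauchy]
    abel
  simp_rw [hrect, smul_sub (b - a)]
  exact ((tendsto_integral_vertical_segment hab.le hcont hL).sub
    ((tendsto_integral_vertical_segment hab.le hcont hM).comp
      tendsto_neg_atTop_atBot)).const_smul I

lemma exp_ne_one_of_abs_im_lt {z : ℂ} (hz : z ≠ 0) (him : |z.im| < 2 * π) : exp z ≠ 1 := by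
  rw [Ne, exp_eq_one_iff]
  rintro ⟨n, rfl⟩
  have hn : |(n : ℝ)| < 1 := by
    have him' : |(n : ℝ)| * (2 * π) < 1 * (2 * π) := by
      simpa [abs_mul, abs_of_pos Real.pi_pos] using him
    exact lt_of_mul_lt_mul_right him' Real.two_pi_pos.le
  have hn0 : n = 0 := Int.abs_lt_one_iff.1 (by exact_mod_cast hn)
  simp [hn0] at hz

lemma differentiable_dslope_exp (w₀ : ℂ) : Differentiable ℂ (dslope exp w₀) := by
  rw [← differentiableOn_univ, differentiableOn_dslope univ_mem]
  exact differentiable_exp.differentiableOn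

lemma dslope_exp_ne_zero_s14 {w₀ w : ℂ} (h : |(w - w₀).im| < 2 * π) : dslope exp w₀ w ≠ 0 := by
  rcases eq_or_ne w w₀ with rfl | hne
  · simp [exp_ne_zero]
  · rw [dslope_of_ne _ hne, slope_def_field, div_ne_zero_iff, sub_ne_zero, sub_ne_zero]
    refine ⟨fun heq ↦ exp_ne_one_of_abs_im_lt (sub_ne_zero.2 hne) h ?_, hne⟩
    rw [exp_sub, heq, div_self (exp_ne_zero _)]

/-- The difference quotient `(G w - G w₀) / (exp w - exp w₀)` of `G` with respect to `exp`, with the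
removable singularity at `w₀` filled in. Dividing two `dslope`s keeps it holomorphic there. -/
noncomputable def expDslope (G : ℂ → E) (w₀ w : ℂ) : E := (dslope exp w₀ w)⁻¹ • dslope G w₀ w

lemma expDslope_of_ne {w₀ w : ℂ} (hw : w ≠ w₀) :
    expDslope G w₀ w = (exp w - exp w₀)⁻¹ • (G w - G w₀) := by
  have hw' : w - w₀ ≠ 0 := sub_ne_zero.2 hw
  rw [expDslope, dslope_of_ne _ hw, dslope_of_ne _ hw, slope_def_field, slope, vsub_eq_sub,
    smul_smul]
  congr 1
  field_simp

lemma expDslope_eventuallyEq {w₀ : ℂ} {l : Filter ℝ} (hl : ∀ᶠ x in l, x ≠ w₀.re) :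
    (fun w ↦ (exp w - exp w₀)⁻¹ • (G w - G w₀)) =ᶠ[comap re l] expDslope G w₀ :=
  (tendsto_comap.eventually hl).mono fun _ hw ↦
    (expDslope_of_ne fun h ↦ hw (congrArg re h)).symm

lemma tendsto_expDslope_atTop {w₀ : ℂ} {s : Set ℂ} {L : E}
    (hL : Tendsto G (comap re atTop ⊓ 𝓟 s) (𝓝 L)) :
    Tendsto (expDslope G w₀) (comap re atTop ⊓ 𝓟 s) (𝓝 0) := by
  have hexp : Tendsto (fun w ↦ exp w - exp w₀) (comap re atTop) (Bornology.cobounded ℂ) :=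
    (tendsto_sub_const_cobounded _).comp tendsto_exp_comap_re_atTop
  simpa using ((tendsto_inv₀_cobounded.comp (hexp.mono_left inf_le_left)).smul
    (hL.sub_const (G w₀))).congr'
      ((expDslope_eventuallyEq (eventually_ne_atTop _)).filter_mono inf_le_left)

lemma tendsto_expDslope_atBot {w₀ : ℂ} {s : Set ℂ} {M : E}
    (hM : Tendsto G (comap re atBot ⊓ 𝓟 s) (𝓝 M)) :
    Tendsto (expDslope G w₀) (comap re atBot ⊓ 𝓟 s) (𝓝 ((exp w₀)⁻¹ • (G w₀ - M))) := by
  have hexp : Tendsto (fun w ↦ (exp w - exp w₀)⁻¹) (comap re atBot) (𝓝 (-(exp w₀)⁻¹)) := by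
    simpa [inv_neg] using
      (tendsto_exp_comap_re_atBot.sub_const (exp w₀)).inv₀ (by simp [exp_ne_zero])
  have hlim := ((hexp.mono_left inf_le_left).smul (hM.sub_const (G w₀))).congr'
    ((expDslope_eventuallyEq (eventually_ne_atBot _)).filter_mono inf_le_left)
  rwa [neg_smul, ← smul_neg, neg_sub] at hlim

lemma expDslope_jump {w₀ : ℂ} (hw₀ : w₀.im ∈ Ioo (-π) π) (t : ℝ) :
    expDslope G w₀ (t + π * I) - expDslope G w₀ (t + (-π : ℝ) * I) =
      -((exp t + exp w₀)⁻¹ • (G (t + π * I) - G (t + (-π : ℝ) * I))) := by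
  have hne {y : ℝ} (hy : y ∉ Ioo (-π) π) : (t + y * I : ℂ) ≠ w₀ := by
    rintro rfl
    exact hy (by simpa using hw₀)
  have hexp_pi : exp (t + π * I) = -exp t := by simp [exp_add]
  have hexp_neg_pi : exp (t + (-π : ℝ) * I) = -exp t := by simp [exp_add, exp_neg]
  rw [expDslope_of_ne (hne (by simp)), expDslope_of_ne (hne (by simp)), hexp_pi, hexp_neg_pi,
    ← smul_sub, sub_sub_sub_cancel_right, ← neg_add', inv_neg, neg_smul]

variable [CompleteSpace E]

lemma diffContOnCl_expDslope {w₀ : ℂ} (hw₀ : w₀.im ∈ Ioo (-π) π)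
    (hG : DiffContOnCl ℂ G (im ⁻¹' Ioo (-π) π)) :
    DiffContOnCl ℂ (expDslope G w₀) (im ⁻¹' Ioo (-π) π) := by
  have hnhds : im ⁻¹' Ioo (-π) π ∈ 𝓝 w₀ := (isOpen_Ioo.preimage continuous_im).mem_nhds hw₀
  refine ((differentiable_dslope_exp w₀).diffContOnCl.inv fun w hw ↦ ?_).smul
    ⟨(differentiableOn_dslope hnhds).2 hG.differentiableOn,
      (continuousOn_dslope (mem_of_superset hnhds subset_closure)).2
        ⟨hG.continuousOn, hG.differentiableAt' hnhds⟩⟩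
  rw [closure_preimage_im, closure_Ioo (neg_lt_self Real.pi_pos).ne, mem_preimage, mem_Icc] at hw
  apply dslope_exp_ne_zero_s14
  rw [sub_im, abs_lt]
  constructor <;> linarith [hw.1, hw.2, hw₀.1, hw₀.2]

-- In the variable `z = exp w` this is Cauchy's formula on the plane slit along `(-∞, 0]`.
lemma tendsto_integral_inv_exp_add_exp_smul_sub {w₀ : ℂ} {L M : E}
    (hw₀ : w₀.im ∈ Ioo (-π) π) (hG : DiffContOnCl ℂ G (im ⁻¹' Ioo (-π) π))
    (hL : Tendsto G (comap re atTop ⊓ 𝓟 (im ⁻¹' Icc (-π) π)) (𝓝 L))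
    (hM : Tendsto G (comap re atBot ⊓ 𝓟 (im ⁻¹' Icc (-π) π)) (𝓝 M)) :
    Tendsto (fun R : ℝ ↦ ∫ t in -R..R,
        (exp t + exp w₀)⁻¹ • (G (t + π * I) - G (t + (-π : ℝ) * I))) atTop
      (𝓝 ((2 * π * I / exp w₀) • (G w₀ - M))) := by
  have hlim := (tendsto_integral_sub_of_diffContOnCl_strip (neg_lt_self Real.pi_pos)
    (diffContOnCl_expDslope hw₀ hG) (tendsto_expDslope_atTop hL) (tendsto_expDslope_atBot hM)).neg
  simp_rw [expDslope_jump hw₀, intervalIntegral.integral_neg, neg_neg] at hlim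
  convert hlim using 2
  rw [zero_sub, smul_neg, smul_neg, neg_neg, ← Complex.coe_smul, smul_smul, smul_smul]
  congr 1
  push_cast
  ring

end Strip

section LogDerivative

open Bornology Complex Filter Set Topology
open scoped Real

lemma ne_zero_of_exp_ne_one {w : ℂ} (hexp : exp w ≠ 1) : w ≠ 0 :=
  fun h ↦ hexp (h ▸ exp_zero)

lemma logDeriv_dslope_exp_zero {w : ℂ} (hexp : exp w ≠ 1) :
    logDeriv (dslope exp 0) w = (1 - exp (-w))⁻¹ - w⁻¹ := by
  have hw : w ≠ 0 := ne_zero_of_exp_ne_one hexp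
  have hexp' : exp w - 1 ≠ 0 := sub_ne_zero.2 hexp
  have heq : dslope exp 0 =ᶠ[𝓝 w] fun z ↦ (exp z - 1) / z := by
    filter_upwards [dslope_eventuallyEq_slope_of_ne exp hw] with z hz
    simp [hz, slope_def_field]
  have hden : 1 - exp (-w) = (exp w - 1) / exp w := by
    rw [exp_neg]
    field_simp [exp_ne_zero w]
  rw [(logDeriv_congr_nhds heq).eq_of_nhds,
    logDeriv_div (f := fun z ↦ exp z - 1) (g := fun z ↦ z) w hexp' hw (by fun_prop) (by fun_prop),
    hden]
  simp [logDeriv_apply]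

lemma differentiableAt_logDeriv_dslope_exp_zero {w : ℂ} (hw : |w.im| < 2 * π) :
    DifferentiableAt ℂ (logDeriv (dslope exp 0)) w :=
  (differentiable_dslope_exp 0).deriv.differentiableAt.div
    (differentiable_dslope_exp 0 w) (dslope_exp_ne_zero_s14 (by simpa using hw))

lemma tendsto_logDeriv_dslope_exp_zero_comap_re {l : Filter ℝ} {A : ℂ} (hl : l ≤ cobounded ℝ)
    (hA : Tendsto (fun w ↦ (1 - exp (-w))⁻¹) (comap re l) (𝓝 A)) :
    Tendsto (logDeriv (dslope exp 0)) (comap re l) (𝓝 A) := by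
  have hcob : comap re l ≤ cobounded ℂ := by
    rw [← tendsto_id', ← tendsto_norm_atTop_iff_cobounded]
    exact tendsto_atTop_mono abs_re_le_norm
      ((tendsto_norm_cobounded_atTop.mono_left hl).comp tendsto_comap)
  have hre : ∀ᶠ w in comap re l, w.re ≠ 0 :=
    tendsto_comap.eventually (hl (eventually_ne_cobounded 0))
  have hlim := hA.sub (tendsto_inv₀_cobounded.mono_left hcob)
  rw [sub_zero] at hlim
  refine hlim.congr' (hre.mono fun w hw ↦ (logDeriv_dslope_exp_zero fun hexp ↦ hw ?_).symm)
  rw [← Real.exp_eq_one_iff, ← norm_exp, hexp, norm_one]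

lemma tendsto_logDeriv_dslope_exp_zero_atBot :
    Tendsto (logDeriv (dslope exp 0)) (comap re atBot) (𝓝 0) := by
  have hneg : Tendsto (fun w : ℂ ↦ -w) (comap re atBot) (comap re atTop) :=
    tendsto_comap_iff.2 (tendsto_neg_atBot_atTop.comp tendsto_comap)
  exact tendsto_logDeriv_dslope_exp_zero_comap_re IsOrderBornology.atBot_le_cobounded <|
    tendsto_inv₀_cobounded.comp ((tendsto_const_sub_cobounded 1).comp
      (tendsto_exp_comap_re_atTop.comp hneg))

lemma tendsto_logDeriv_dslope_exp_zero_atTop :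
    Tendsto (logDeriv (dslope exp 0)) (comap re atTop) (𝓝 1) := by
  have hneg : Tendsto (fun w : ℂ ↦ -w) (comap re atTop) (comap re atBot) :=
    tendsto_comap_iff.2 (tendsto_neg_atTop_atBot.comp tendsto_comap)
  refine tendsto_logDeriv_dslope_exp_zero_comap_re IsOrderBornology.atTop_le_cobounded ?_
  simpa using ((tendsto_exp_comap_re_atBot.comp hneg).const_sub 1).inv₀ (by simp)

/-- The logarithmic derivative of `(1 - exp w) / (1 - exp (α * w))`, continued analytically to the
removable singularity at `0` by writing `1 - exp w` as `-w * dslope exp 0 w`. -/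
noncomputable def expRatioLogDeriv (α : ℝ) (w : ℂ) : ℂ :=
  logDeriv (dslope exp 0) w - α * logDeriv (dslope exp 0) (α * w)

lemma expRatioLogDeriv_of_exp_ne_one {α : ℝ} {w : ℂ} (hexp : exp w ≠ 1)
    (hexpα : exp (α * w) ≠ 1) :
    expRatioLogDeriv α w = (1 - exp (-w))⁻¹ - α * (1 - exp (-(α * w)))⁻¹ := by
  have hw : w ≠ 0 := ne_zero_of_exp_ne_one hexp
  have hα : (α : ℂ) ≠ 0 := left_ne_zero_of_mul (ne_zero_of_exp_ne_one hexpα)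
  rw [expRatioLogDeriv, logDeriv_dslope_exp_zero hexp, logDeriv_dslope_exp_zero hexpα]
  field_simp
  ring

lemma diffContOnCl_expRatioLogDeriv {α : ℝ} (hα : |α| < 2) :
    DiffContOnCl ℂ (expRatioLogDeriv α) (im ⁻¹' Ioo (-π) π) := by
  refine DifferentiableOn.diffContOnCl fun w hw ↦ DifferentiableAt.differentiableWithinAt ?_
  have him : |w.im| ≤ π := by
    simpa [closure_preimage_im, closure_Ioo (neg_lt_self Real.pi_pos).ne, abs_le] using hw
  have himα : |(α * w : ℂ).im| < 2 * π := by
    rw [im_ofReal_mul, abs_mul]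
    nlinarith [Real.pi_pos, abs_nonneg α]
  exact (differentiableAt_logDeriv_dslope_exp_zero (by linarith [Real.pi_pos])).sub
    (((differentiableAt_logDeriv_dslope_exp_zero himα).comp w (by fun_prop)).const_mul _)

lemma tendsto_expRatioLogDeriv_atTop {α : ℝ} (hα : 0 < α) :
    Tendsto (expRatioLogDeriv α) (comap re atTop) (𝓝 (1 - α)) := by
  have hmul : Tendsto (fun w : ℂ ↦ α * w) (comap re atTop) (comap re atTop) := by
    simpa [tendsto_comap_iff, Function.comp_def] using tendsto_comap.const_mul_atTop hα
  have hlim := tendsto_logDeriv_dslope_exp_zero_atTop.sub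
    ((tendsto_logDeriv_dslope_exp_zero_atTop.comp hmul).const_mul (α : ℂ))
  rwa [mul_one] at hlim

lemma tendsto_expRatioLogDeriv_atBot {α : ℝ} (hα : 0 < α) :
    Tendsto (expRatioLogDeriv α) (comap re atBot) (𝓝 0) := by
  have hmul : Tendsto (fun w : ℂ ↦ α * w) (comap re atBot) (comap re atBot) := by
    simpa [tendsto_comap_iff, Function.comp_def] using tendsto_comap.const_mul_atBot hα
  have hlim := tendsto_logDeriv_dslope_exp_zero_atBot.sub
    ((tendsto_logDeriv_dslope_exp_zero_atBot.comp hmul).const_mul (α : ℂ))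
  rwa [mul_zero, sub_zero] at hlim

lemma inv_one_sub_exp_neg_sub_conj {x y : ℝ} (h : Real.cosh x ≠ Real.cos y) :
    (1 - exp (-(x + y * I)))⁻¹ - (1 - exp (-(x + (-y : ℝ) * I)))⁻¹ =
      -I * (Real.sin y / (Real.cosh x - Real.cos y) : ℝ) := by
  have hexp : exp (-(x + y * I)) = exp (-x) * (cos y - sin y * I) := by
    rw [neg_add, exp_add, ← neg_mul, exp_mul_I, cos_neg, sin_neg]
    ring
  have hexp' : exp (-(x + (-y : ℝ) * I)) = exp (-x) * (cos y + sin y * I) := by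
    rw [neg_add, exp_add, ← neg_mul, ofReal_neg, neg_neg, exp_mul_I]
  have hsub : cosh x - cos y ≠ 0 := mod_cast sub_ne_zero.2 h
  have hinv : exp (-x) * exp x = 1 := by rw [← exp_add, neg_add_cancel, exp_zero]
  have hmul : (1 - exp (-(x + y * I))) * (1 - exp (-(x + (-y : ℝ) * I))) =
      2 * exp (-x) * (cosh x - cos y) := by
    rw [hexp, hexp', cosh]
    linear_combination exp (-x) ^ 2 * sin_sq_add_cos_sq (y : ℂ) - exp (-x) ^ 2 * sin y ^ 2 * I_sq
      - hinv
  have hne := mul_ne_zero (mul_ne_zero two_ne_zero (exp_ne_zero (-x))) hsub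
  rw [← hmul, mul_ne_zero_iff] at hne
  rw [inv_sub_inv hne.1 hne.2, hmul, hexp, hexp']
  push_cast
  field_simp
  ring

lemma cos_pi_mul_lt_cosh {α : ℝ} (hα0 : α ≠ 0) (hα2 : |α| < 2) (x : ℝ) :
    Real.cos (π * α) < Real.cosh x := by
  refine lt_of_lt_of_le ((Real.cos_le_one _).lt_of_ne fun h ↦ ?_) (Real.one_le_cosh x)
  rw [abs_lt] at hα2
  rw [Real.cos_eq_one_iff_of_lt_of_lt (by nlinarith [Real.pi_pos]) (by nlinarith [Real.pi_pos])]
    at h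
  exact mul_ne_zero Real.pi_ne_zero hα0 h

lemma expRatioLogDeriv_jump {α : ℝ} (hα0 : α ≠ 0) (hα2 : |α| < 2) (t : ℝ) :
    expRatioLogDeriv α (t + π * I) - expRatioLogDeriv α (t + (-π : ℝ) * I) =
      I * (α * Real.sin (π * α) / (Real.cosh (α * t) - Real.cos (π * α)) : ℝ) := by
  have hformula {y : ℝ} (hy : |y| = π) : expRatioLogDeriv α (t + y * I) =
      (1 - exp (-(t + y * I)))⁻¹ - α * (1 - exp (-((α * t : ℝ) + (α * y : ℝ) * I)))⁻¹ := by
    have hpi := Real.pi_pos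
    have hne : (t + y * I : ℂ) ≠ 0 := fun h ↦ by
      have hy0 : y = 0 := by simpa using congrArg im h
      exact hpi.ne' (by rw [← hy, hy0, abs_zero])
    rw [expRatioLogDeriv_of_exp_ne_one (exp_ne_one_of_abs_im_lt hne (by simp [hy, hpi]))
      (exp_ne_one_of_abs_im_lt (mul_ne_zero (mod_cast hα0) hne) ?_)]
    · push_cast
      ring_nf
    · simpa [abs_mul, hy] using mul_lt_mul_of_pos_right hα2 hpi
  have hjump := inv_one_sub_exp_neg_sub_conj (x := t) (y := π)
    (by simpa using (neg_one_lt_zero.trans (Real.cosh_pos t)).ne')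
  have hjumpα := inv_one_sub_exp_neg_sub_conj (cos_pi_mul_lt_cosh hα0 hα2 (α * t)).ne'
  rw [hformula (abs_of_pos Real.pi_pos), hformula (by rw [abs_neg, abs_of_pos Real.pi_pos]),
    mul_neg, mul_comm α π, sub_sub_sub_comm, hjump, ← mul_sub, hjumpα, Real.sin_pi]
  push_cast
  ring

end LogDerivative

section LogitDensity

open Filter Set Topology
open scoped Real

lemma integrable_and_integral_eq_of_tendsto_const_mul {k : ℝ → ℝ} {c : ℂ} {A : ℝ}
    (hk : Continuous k) (hk0 : 0 ≤ k) (hc : c ≠ 0)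
    (hlim : Tendsto (fun R : ℝ ↦ ∫ t in -R..R, c * (k t : ℂ)) atTop (𝓝 (c * A))) :
    Integrable k ∧ ∫ t, k t = A := by
  have hreal : Tendsto (fun R : ℝ ↦ ∫ t in -R..R, k t) atTop (𝓝 A) := by
    have hdiv := hlim.const_mul c⁻¹
    simp_rw [intervalIntegral.integral_const_mul, intervalIntegral.integral_ofReal,
      inv_mul_cancel_left₀ hc] at hdiv
    exact tendsto_ofReal_iff.1 hdiv
  have hint : Integrable k :=
    integrable_of_intervalIntegral_norm_tendsto A (fun R ↦ hk.integrableOn_Ioc)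
      tendsto_neg_atTop_atBot tendsto_id (by simpa [abs_of_nonneg (hk0 _)] using hreal)
  exact ⟨hint, tendsto_nhds_unique
    (intervalIntegral_tendsto_integral hint tendsto_neg_atTop_atBot tendsto_id) hreal⟩

/-- The density of the logit `log (𝔾_α / (1 - 𝔾_α))` of the random variable `𝔾_α` with density
`bfryDensity α`. -/
noncomputable def bfryLogitDensity (α t : ℝ) : ℝ :=
  α * Real.sin (π * α) / ((1 - α) * π) / (2 * (Real.cosh (α * t) - Real.cos (π * α)))

variable {α : ℝ}

lemma continuous_bfryLogitDensity (hα0 : α ≠ 0) (hα2 : |α| < 2) :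
    Continuous (bfryLogitDensity α) :=
  continuous_const.div (by fun_prop) fun t ↦
    mul_ne_zero two_ne_zero (sub_pos.2 (cos_pi_mul_lt_cosh hα0 hα2 (α * t))).ne'

lemma sin_pi_mul_div_one_sub_nonneg (hα0 : 0 < α) (hα2 : α < 2) :
    0 ≤ Real.sin (π * α) / (1 - α) := by
  have hpi := Real.pi_pos
  rcases le_total α 1 with h | h
  · exact div_nonneg (Real.sin_nonneg_of_nonneg_of_le_pi (by positivity) (by nlinarith))
      (sub_nonneg.2 h)
  · refine div_nonneg_of_nonpos ?_ (sub_nonpos.2 h)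
    rw [← neg_nonneg, ← Real.sin_sub_pi]
    exact Real.sin_nonneg_of_nonneg_of_le_pi (by nlinarith) (by nlinarith)

lemma bfryLogitDensity_nonneg (hα0 : 0 < α) (hα2 : α < 2) (t : ℝ) :
    0 ≤ bfryLogitDensity α t := by
  have hcosh := sub_pos.2 (cos_pi_mul_lt_cosh hα0.ne' (by rwa [abs_of_pos hα0]) (α * t))
  have hsin := sin_pi_mul_div_one_sub_nonneg hα0 hα2
  rw [bfryLogitDensity, mul_comm α (Real.sin _), mul_div_mul_comm]
  positivity

lemma expRatioLogDeriv_jump_eq_bfryLogitDensity (hα0 : α ≠ 0) (hα1 : α ≠ 1) (hα2 : |α| < 2)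
    (t : ℝ) :
    expRatioLogDeriv α (t + π * Complex.I) - expRatioLogDeriv α (t + (-π : ℝ) * Complex.I) =
      2 * π * Complex.I * (1 - α) * bfryLogitDensity α t := by
  have h1 : (1 - α : ℂ) ≠ 0 := mod_cast sub_ne_zero.2 hα1.symm
  rw [expRatioLogDeriv_jump hα0 hα2, bfryLogitDensity]
  push_cast
  field_simp

lemma integrable_and_integral_bfryLogitDensity (hα0 : 0 < α) (hα1 : α ≠ 1) (hα2 : α < 2) :
    Integrable (bfryLogitDensity α) ∧ ∫ t, bfryLogitDensity α t = 1 := by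
  have hαabs : |α| < 2 := by rwa [abs_of_pos hα0]
  have hc : (2 * π * Complex.I * (1 - α) : ℂ) ≠ 0 :=
    mul_ne_zero Complex.two_pi_I_ne_zero (mod_cast sub_ne_zero.2 hα1.symm)
  refine integrable_and_integral_eq_of_tendsto_const_mul
    (continuous_bfryLogitDensity hα0.ne' hαabs) (bfryLogitDensity_nonneg hα0 hα2) hc ?_
  have hlim := tendsto_integral_sub_of_diffContOnCl_strip (neg_lt_self Real.pi_pos)
    (diffContOnCl_expRatioLogDeriv hαabs)
    ((tendsto_expRatioLogDeriv_atTop hα0).mono_left inf_le_left)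
    ((tendsto_expRatioLogDeriv_atBot hα0).mono_left inf_le_left)
  simp_rw [expRatioLogDeriv_jump_eq_bfryLogitDensity hα0.ne' hα1 hαabs] at hlim
  convert hlim using 2
  rw [← Complex.coe_smul, smul_eq_mul, smul_eq_mul]
  push_cast
  ring

lemma inv_one_sub_inv {𝕜 : Type*} [Field 𝕜] {x : 𝕜} (hx : x ≠ 0) :
    (1 - x⁻¹)⁻¹ = -x / (1 - x) := by
  have hdiv : 1 - x⁻¹ = (1 - x) / -x := by
    field_simp
    ring
  rw [hdiv, inv_div]

lemma expRatioLogDeriv_log {μ : ℝ} (hα : α ≠ 0) (hμ0 : 0 < μ) (hμ1 : μ ≠ 1) :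
    expRatioLogDeriv α (Real.log μ) =
      (μ * (α * μ ^ (α - 1) / (1 - μ ^ α) - (1 - μ)⁻¹) : ℝ) := by
  have hμα1 : μ ^ α ≠ 1 := fun h ↦
    hμ1 ((Real.rpow_left_inj hμ0.le zero_le_one hα).1 (h.trans (Real.one_rpow α).symm))
  have hexp : Complex.exp (Real.log μ) = μ := by rw [← Complex.ofReal_exp, Real.exp_log hμ0]
  have hexpα : Complex.exp (α * Real.log μ) = (μ ^ α : ℝ) := by
    rw [Real.rpow_def_of_pos hμ0, mul_comm]
    push_cast
    rfl
  rw [expRatioLogDeriv_of_exp_ne_one (hexp.trans_ne (mod_cast hμ1))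
    (hexpα.trans_ne (mod_cast hμα1)), Complex.exp_neg, Complex.exp_neg, hexp, hexpα,
    Real.rpow_sub_one hμ0.ne']
  norm_cast
  rw [inv_one_sub_inv hμ0.ne', inv_one_sub_inv (Real.rpow_pos_of_pos hμ0 α).ne']
  field_simp
  ring

lemma integrable_and_integral_bfryLogitDensity_div_exp_add (hα0 : 0 < α) (hα1 : α ≠ 1)
    (hα2 : α < 2) {μ : ℝ} (hμ0 : 0 < μ) (hμ1 : μ ≠ 1) :
    Integrable (fun t ↦ bfryLogitDensity α t / (Real.exp t + μ)) ∧
      ∫ t, bfryLogitDensity α t / (Real.exp t + μ) =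
        (α * μ ^ (α - 1) / (1 - μ ^ α) - (1 - μ)⁻¹) / (1 - α) := by
  have hαabs : |α| < 2 := by rwa [abs_of_pos hα0]
  have hc : (2 * π * Complex.I * (1 - α) : ℂ) ≠ 0 :=
    mul_ne_zero Complex.two_pi_I_ne_zero (mod_cast sub_ne_zero.2 hα1.symm)
  have hexp : Complex.exp (Real.log μ) = μ := by rw [← Complex.ofReal_exp, Real.exp_log hμ0]
  have hlim := tendsto_integral_inv_exp_add_exp_smul_sub (w₀ := (Real.log μ : ℂ))
    (by simp [Real.pi_pos]) (diffContOnCl_expRatioLogDeriv hαabs)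
    ((tendsto_expRatioLogDeriv_atTop hα0).mono_left inf_le_left)
    ((tendsto_expRatioLogDeriv_atBot hα0).mono_left inf_le_left)
  rw [expRatioLogDeriv_log hα0.ne' hμ0 hμ1, hexp] at hlim
  simp_rw [expRatioLogDeriv_jump_eq_bfryLogitDensity hα0.ne' hα1 hαabs] at hlim
  refine integrable_and_integral_eq_of_tendsto_const_mul
    ((continuous_bfryLogitDensity hα0.ne' hαabs).div (by fun_prop) fun t ↦
      (add_pos (Real.exp_pos t) hμ0).ne')
    (fun t ↦ div_nonneg (bfryLogitDensity_nonneg hα0 hα2 t)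
      (add_pos (Real.exp_pos t) hμ0).le) hc ?_
  convert hlim using 2
  · congr 1 with t
    push_cast
    rw [smul_eq_mul]
    ring
  · have hμ0' : (μ : ℂ) ≠ 0 := mod_cast hμ0.ne'
    have hα1' : (1 - α : ℂ) ≠ 0 := mod_cast sub_ne_zero.2 hα1.symm
    push_cast
    rw [smul_eq_mul, sub_zero, mul_assoc, mul_div_cancel₀ _ hα1', ← mul_assoc,
      div_mul_cancel₀ _ hμ0']

end LogitDensity

section LogMoment

open Set

lemma integral_Ioo_inv_add {x μ : ℝ} (hx : 0 < x) (hμ : 0 ≤ μ) :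
    ∫ s in Ioo 0 μ, (x + s)⁻¹ = Real.log (1 + μ / x) := by
  rw [← integral_Ioc_eq_integral_Ioo, ← intervalIntegral.integral_of_le hμ,
    intervalIntegral.integral_comp_add_left (fun s ↦ s⁻¹), add_zero,
    integral_inv_of_pos hx (by positivity), add_div, div_self hx.ne']

-- Fubini applied to `log (1 + μ / X) = ∫ s in 0..μ, (X + s)⁻¹`.
lemma integrable_and_integral_log_one_add_div_mul {Ω : Type*} [MeasurableSpace Ω] {ρ : Measure Ω}
    [SFinite ρ] {X k : Ω → ℝ} {h : ℝ → ℝ} {μ : ℝ} (hμ : 0 ≤ μ) (hX : Measurable X)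
    (hX0 : ∀ ω, 0 < X ω) (hk : Measurable k) (hk0 : 0 ≤ k) (hcont : ContinuousOn h (Icc 0 μ))
    (hint : ∀ s ∈ Ioo 0 μ, Integrable (fun ω ↦ k ω / (X ω + s)) ρ)
    (hderiv : ∀ s ∈ Ioo 0 μ, HasDerivAt h (∫ ω, k ω / (X ω + s) ∂ρ) s) :
    Integrable (fun ω ↦ Real.log (1 + μ / X ω) * k ω) ρ ∧
      ∫ ω, Real.log (1 + μ / X ω) * k ω ∂ρ = h μ - h 0 := by
  have hnonneg {s : ℝ} (hs : s ∈ Ioo 0 μ) (ω : Ω) : 0 ≤ k ω / (X ω + s) :=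
    div_nonneg (hk0 ω) (add_pos (hX0 ω) hs.1).le
  have hInt : IntegrableOn (fun s ↦ ∫ ω, k ω / (X ω + s) ∂ρ) (Ioc 0 μ) :=
    intervalIntegral.integrableOn_deriv_of_nonneg hcont hderiv
      fun s hs ↦ integral_nonneg (hnonneg hs)
  have hprod : Integrable (fun p : ℝ × Ω ↦ k p.2 / (X p.2 + p.1))
      ((volume.restrict (Ioo 0 μ)).prod ρ) := by
    rw [integrable_prod_iff (Measurable.aestronglyMeasurable (by fun_prop))]
    refine ⟨(ae_restrict_mem measurableSet_Ioo).mono hint,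
      (hInt.mono_set Ioo_subset_Ioc_self).congr
        ((ae_restrict_mem measurableSet_Ioo).mono fun s hs ↦ ?_)⟩
    simp only [Real.norm_of_nonneg (hnonneg hs _)]
  have hlog (ω : Ω) : ∫ s in Ioo 0 μ, k ω / (X ω + s) = Real.log (1 + μ / X ω) * k ω := by
    simp_rw [div_eq_mul_inv (k ω), integral_const_mul, integral_Ioo_inv_add (hX0 ω) hμ, mul_comm]
  constructor
  · simpa only [hlog] using hprod.integral_prod_right
  · simp_rw [← hlog]
    rw [← integral_integral_swap hprod, ← integral_Ioc_eq_integral_Ioo,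
      ← intervalIntegral.integral_of_le hμ]
    exact intervalIntegral.integral_eq_sub_of_hasDerivAt_of_le hμ hcont hderiv
      ((intervalIntegrable_iff_integrableOn_Ioc_of_le hμ).2 hInt)

end LogMoment

section Logit

open Set Real

variable {α : ℝ}

lemma hasDerivAt_log_one_sub_sub_log_one_sub_rpow {μ : ℝ} (hα : 0 < α) (hμ : μ ∈ Ioo (0 : ℝ) 1) :
    HasDerivAt (fun μ ↦ log (1 - μ) - log (1 - μ ^ α))
      (α * μ ^ (α - 1) / (1 - μ ^ α) - (1 - μ)⁻¹) μ := by
  have hμα : μ ^ α < 1 := rpow_lt_one hμ.1.le hμ.2 hα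
  have hderiv := (((hasDerivAt_id μ).const_sub 1).log (sub_pos.2 hμ.2).ne').sub
    (((hasDerivAt_rpow_const (p := α) (.inl hμ.1.ne')).const_sub 1).log (sub_pos.2 hμα).ne')
  refine hderiv.congr_deriv ?_
  simp only [id]
  ring

lemma integrable_and_integral_log_one_add_div_exp_mul_bfryLogitDensity (hα0 : 0 < α) (hα1 : α ≠ 1)
    (hα2 : α < 2) {μ : ℝ} (hμ : μ ∈ Ico (0 : ℝ) 1) :
    Integrable (fun t ↦ log (1 + μ / exp t) * bfryLogitDensity α t) ∧
      ∫ t, log (1 + μ / exp t) * bfryLogitDensity α t =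
        (log (1 - μ) - log (1 - μ ^ α)) / (1 - α) := by
  have hαabs : |α| < 2 := by rwa [abs_of_pos hα0]
  have hsub {s : ℝ} (hs : s ∈ Ioo 0 μ) : s ∈ Ioo 0 1 := ⟨hs.1, hs.2.trans hμ.2⟩
  have hstieltjes {s : ℝ} (hs : s ∈ Ioo 0 μ) :=
    integrable_and_integral_bfryLogitDensity_div_exp_add hα0 hα1 hα2 hs.1 (hsub hs).2.ne
  have hcont : ContinuousOn (fun s ↦ (log (1 - s) - log (1 - s ^ α)) / (1 - α)) (Icc 0 μ) := by
    refine ContinuousOn.div_const (.sub (.log (by fun_prop) fun s hs ↦ ?_)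
      (.log (continuous_const.sub (continuous_rpow_const hα0.le)).continuousOn fun s hs ↦ ?_)) _
    · exact (sub_pos.2 (hs.2.trans_lt hμ.2)).ne'
    · exact (sub_pos.2 (rpow_lt_one hs.1 (hs.2.trans_lt hμ.2) hα0)).ne'
  have hlog := integrable_and_integral_log_one_add_div_mul (ρ := volume) (X := exp)
    (k := bfryLogitDensity α) hμ.1 measurable_exp exp_pos
    (continuous_bfryLogitDensity hα0.ne' hαabs).measurable (bfryLogitDensity_nonneg hα0 hα2) hcont
    (fun s hs ↦ (hstieltjes hs).1) fun s hs ↦ by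
      rw [(hstieltjes hs).2]
      exact (hasDerivAt_log_one_sub_sub_log_one_sub_rpow hα0 (hsub hs)).div_const _
  simpa [zero_rpow hα0.ne'] using hlog

lemma setIntegral_Ioo_zero_one_eq_integral_sigmoid (F : ℝ → ℝ) :
    ∫ u in Ioo 0 1, F u = ∫ t, sigmoid t * (1 - sigmoid t) * F (sigmoid t) := by
  have hcov := integral_image_eq_integral_abs_deriv_smul (g := F) MeasurableSet.univ
    (fun t _ ↦ (hasDerivAt_sigmoid t).hasDerivWithinAt) sigmoid_injective.injOn
  rw [image_univ, range_sigmoid] at hcov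
  rw [hcov, setIntegral_univ]
  congr 1 with t
  rw [abs_of_pos (mul_pos (sigmoid_pos t) (sub_pos.2 (sigmoid_lt_one t))), smul_eq_mul]

lemma exp_mul_rpow_mul_rpow_div_eq_inv_cosh_sub {v : ℝ} (hv : 0 < v) (α t c : ℝ) :
    (exp t * v) ^ α * v ^ α /
        ((exp t * v) ^ (2 * α) - 2 * (exp t * v) ^ α * v ^ α * c + v ^ (2 * α)) =
      (2 * (cosh (α * t) - c))⁻¹ := by
  have hsq (x : ℝ) (hx : 0 < x) : x ^ (2 * α) = (x ^ α) ^ 2 := by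
    rw [mul_comm, rpow_mul hx.le, rpow_two]
  have hne : exp (α * t) * (v ^ α) ^ 2 ≠ 0 := by positivity
  have hcosh : 2 * exp (α * t) * cosh (α * t) = exp (α * t) ^ 2 + 1 := by
    have hinv : exp (α * t) * exp (-(α * t)) = 1 := by rw [← exp_add, add_neg_cancel, exp_zero]
    rw [cosh_eq]
    linear_combination hinv
  rw [hsq _ (by positivity), hsq v hv, mul_rpow (exp_pos t).le hv.le, ← exp_mul, mul_comm t,
    ← div_mul_cancel_left₀ hne]
  congr 1
  · ring
  · linear_combination -(v ^ α) ^ 2 * hcosh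

lemma sigmoid_mul_one_sub_sigmoid_mul_bfryDensity (α t : ℝ) :
    sigmoid t * (1 - sigmoid t) * bfryDensity α (sigmoid t) = bfryLogitDensity α t := by
  have hv : 0 < 1 - sigmoid t := sub_pos.2 (sigmoid_lt_one t)
  have hu : sigmoid t = exp t * (1 - sigmoid t) := by
    rw [← sigmoid_neg, mul_comm]
    simpa using (sigmoid_mul_rexp_neg (-t)).symm
  have hquot := exp_mul_rpow_mul_rpow_div_eq_inv_cosh_sub hv α t (cos (π * α))
  rw [← hu] at hquot
  have hu0 := (sigmoid_pos t).ne'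
  rw [bfryLogitDensity, ← inv_inv (2 * _), div_inv_eq_mul, ← hquot, bfryDensity,
    rpow_sub_one hv.ne', rpow_sub_one hu0]
  field_simp

lemma setIntegral_mul_bfryDensity (α : ℝ) (F : ℝ → ℝ) :
    ∫ u in Ioo 0 1, F u * bfryDensity α u = ∫ t, F (sigmoid t) * bfryLogitDensity α t := by
  simp_rw [setIntegral_Ioo_zero_one_eq_integral_sigmoid, mul_left_comm _ (F _),
    sigmoid_mul_one_sub_sigmoid_mul_bfryDensity]

lemma bfryDensity_nonneg (hα0 : 0 < α) (hα2 : α < 2) {u : ℝ} (hu : u ∈ Ioo (0 : ℝ) 1) :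
    0 ≤ bfryDensity α u := by
  rw [← range_sigmoid] at hu
  obtain ⟨t, rfl⟩ := hu
  have hpos : 0 < sigmoid t * (1 - sigmoid t) :=
    mul_pos (sigmoid_pos t) (sub_pos.2 (sigmoid_lt_one t))
  rw [← mul_nonneg_iff_of_pos_left hpos, sigmoid_mul_one_sub_sigmoid_mul_bfryDensity]
  exact bfryLogitDensity_nonneg hα0 hα2 t

lemma log_one_add_div_sigmoid {l : ℝ} (hl : 0 ≤ l) (t : ℝ) :
    log (1 + l / sigmoid t) = log (1 + l) + log (1 + l / (1 + l) / exp t) := by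
  rw [← log_mul (by positivity) (by positivity), sigmoid_def, div_inv_eq_mul, exp_neg]
  congr 1
  field_simp
  ring

lemma log_one_sub_sub_log_one_sub_rpow_div_one_add (hα : 0 < α) {l : ℝ} (hl : 0 ≤ l) :
    (1 - α) * log (1 + l) +
        (log (1 - l / (1 + l)) - log (1 - (l / (1 + l)) ^ α)) =
      -log ((1 + l) ^ α - l ^ α) := by
  have hl1 : 0 < 1 + l := by positivity
  have hpow : l ^ α < (1 + l) ^ α := rpow_lt_rpow hl (by linarith) hα
  have hsub : 1 - l / (1 + l) = (1 + l)⁻¹ := by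
    field_simp
    ring
  have hsubα : 1 - (l / (1 + l)) ^ α = ((1 + l) ^ α - l ^ α) / (1 + l) ^ α := by
    rw [div_rpow hl hl1.le, sub_div, div_self (by positivity)]
  rw [hsub, hsubα, log_inv, log_div (sub_pos.2 hpow).ne' (by positivity), log_rpow hl1]
  ring

lemma integral_log_one_add_div_mul_bfryDensity (hα0 : 0 < α) (hα1 : α ≠ 1) (hα2 : α < 2) {l : ℝ}
    (hl : 0 ≤ l) :
    (1 - α) * ∫ u in Ioo (0 : ℝ) 1, log (1 + l / u) * bfryDensity α u =
      -log ((1 + l) ^ α - l ^ α) := by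
  obtain ⟨hint, hone⟩ := integrable_and_integral_bfryLogitDensity hα0 hα1 hα2
  obtain ⟨hintlog, hlog⟩ := integrable_and_integral_log_one_add_div_exp_mul_bfryLogitDensity
    hα0 hα1 hα2 (μ := l / (1 + l))
    ⟨by positivity, (div_lt_one (by positivity)).2 (by linarith)⟩
  rw [← log_one_sub_sub_log_one_sub_rpow_div_one_add hα0 hl, setIntegral_mul_bfryDensity]
  simp_rw [log_one_add_div_sigmoid hl, add_mul]
  rw [integral_add (hint.const_mul _) hintlog, integral_const_mul, hone, hlog, mul_one, mul_add,
    mul_div_cancel₀ _ (sub_ne_zero.2 hα1.symm)]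

end Logit

theorem bfry_laplace_exponent_general (α : ℝ) (hα0 : 0 < α) (hα1 : α ≠ 1) (hα2 : α < 2) :
    (∀ u ∈ Set.Ioo (0:ℝ) 1, 0 ≤ bfryDensity α u) ∧
    (∫ u in Set.Ioo (0:ℝ) 1, bfryDensity α u = 1) ∧
    (∀ l : ℝ, 0 ≤ l →
      Real.exp (-((1 - α) * ∫ u in Set.Ioo (0:ℝ) 1, Real.log (1 + l / u) * bfryDensity α u))
        = (1 + l) ^ α - l ^ α) := by
  refine ⟨fun u hu ↦ bfryDensity_nonneg hα0 hα2 hu, ?_, fun l hl ↦ ?_⟩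
  · simpa [(integrable_and_integral_bfryLogitDensity hα0 hα1 hα2).2] using
      setIntegral_mul_bfryDensity α 1
  · have hpow : l ^ α < (1 + l) ^ α := Real.rpow_lt_rpow hl (by linarith) hα0
    rw [integral_log_one_add_div_mul_bfryDensity hα0 hα1 hα2 hl, neg_neg,
      Real.exp_log (sub_pos.2 hpow)]

/-- `f_𝔾` is a probability density on `(0,1)` and for every `λ ≥ 0`,
`exp(−(1−α)·∫₀¹ log(1 + λ/u)·f_𝔾(u) du) = (1+λ)^α − λ^α`. -/
theorem bfry_laplace_exponent
    (α : ℝ) (hα0 : 0 < α) (hα1 : α < 1) :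
    (∀ u ∈ Set.Ioo (0:ℝ) 1, 0 ≤ bfryDensity α u) ∧
    (∫ u in Set.Ioo (0:ℝ) 1, bfryDensity α u = 1) ∧
    (∀ l : ℝ, 0 ≤ l →
      Real.exp (-((1 - α) * ∫ u in Set.Ioo (0:ℝ) 1, Real.log (1 + l / u) * bfryDensity α u))
        = (1 + l) ^ α - l ^ α) :=
  bfry_laplace_exponent_general α hα0 hα1.ne (hα1.trans one_lt_two)
end

section
/- Let 0 < α < 1 and let 𝔾 be a random variable on (0,1) with density f_𝔾(u) = (α·sin(πα)/((1−α)π))·u^{α−1}(1−u)^{α−1}/(u^{2α} − 2u^α(1−u)^α cos(πα) + (1−u)^{2α}). Define R_α(x) = E[log|x − 1/𝔾|·1(1/𝔾 ≠ x)] for x > 0. Then R_α(x) = (1/(2(1−α)))·log( x² / ((x−1)^{2α} − 2(x−1)^α cos(πα) + 1) ) for x > 1, and R_α(x) = (1/(1−α))·log( x / (1 − (1−x)^α) ) for 0 < x ≤ 1. (Proposition 5.1.) -/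
open MeasureTheory ProbabilityTheory

/-!
The variable `T = log (1 / 𝔾_α - 1)` has the even density
`q t = α sin (πα) / (2π (1 - α) (cosh (αt) - cos (πα)))`, and `1 / 𝔾_α = 1 + exp T`, so `R_α` is
read off the logarithmic potential `U l = E[log |exp l + exp T|]` at `exp l = 1 - x`.

Let `B z = (exp z - 1) / (exp (αz) - 1)` and `N = logDeriv B`. The jump of `N` between the lines
`Im z = ±π` is a constant multiple of `q`, while `exp (z - l)` takes the same value `-exp (t - l)`
at `z = t ± iπ`. Cauchy's theorem for `(N z - N l) / (1 - exp (z - l))` on the strip `|Im z| ≤ π`,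
whose singularity at `l` is removable, therefore gives `E[1 / (1 + exp (T - l))] = N l / (1 - α)`.

The real part of the left side is the derivative of `U` along horizontal lines, so
`U - log |B| / (1 - α)` is constant on each of them. At `-∞` it tends to `E[T] = 0`, hence it
vanishes for `|Im l| < π`, and by continuity also for `Im l = π`, which is the case `x > 1`.
-/

section

open Set Filter Topology
open Complex (I)
open scoped Real

theorem tendsto_intervalIntegral_vertical {l : Filter ℝ} {f : ℂ → ℂ} {L : ℂ} {a b : ℝ}
    (hf : Tendsto f (comap Complex.re l) (𝓝 L))
    (hc : ∀ T : ℝ, ContinuousOn (fun y : ℝ => f (T + y * I)) (uIcc a b)) :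
    Tendsto (fun T : ℝ => ∫ y in a..b, f (T + y * I)) l (𝓝 ((b - a) * L)) := by
  rw [Metric.tendsto_nhds]
  intro ε hε
  set δ : ℝ := ε / (|b - a| + 1)
  have hδ : 0 < δ := by positivity
  have hclose := Metric.tendsto_nhds.1 hf δ hδ
  rw [eventually_comap] at hclose
  filter_upwards [hclose] with T hT
  have hconst : (b - a) * L = ∫ _ in a..b, L := by
    rw [intervalIntegral.integral_const, Complex.real_smul, Complex.ofReal_sub]
  rw [dist_eq_norm, hconst,
    ← intervalIntegral.integral_sub (hc T).intervalIntegrable intervalIntegrable_const]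
  calc ‖∫ y in a..b, (f (T + y * I) - L)‖
      ≤ δ * |b - a| := intervalIntegral.norm_integral_le_of_norm_le_const fun y _ => by
        rw [← dist_eq_norm]
        exact (hT _ (by simp)).le
    _ < δ * (|b - a| + 1) := by gcongr; exact lt_add_one _
    _ = ε := div_mul_cancel₀ _ (by positivity)

theorem integral_sub_conj_boundary_strip {f : ℂ → ℂ} {b : ℝ} {A B : ℂ} (hb : 0 ≤ b)
    (hf : DifferentiableOn ℂ f {z | |z.im| ≤ b})
    (hA : Tendsto f (comap Complex.re atBot) (𝓝 A))
    (hB : Tendsto f (comap Complex.re atTop) (𝓝 B))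
    (hint : Integrable fun t : ℝ => f (t - b * I) - f (t + b * I)) :
    ∫ t : ℝ, (f (t - b * I) - f (t + b * I)) = 2 * b * I * (A - B) := by
  have hseg : ∀ y ∈ uIcc (-b) b, |y| ≤ b := fun y hy => by
    rwa [uIcc_of_le (by linarith), mem_Icc, ← abs_le] at hy
  have hvert : ∀ T : ℝ, ContinuousOn (fun y : ℝ => f (T + y * I)) (uIcc (-b) b) := fun T =>
    hf.continuousOn.comp (by fun_prop) fun y hy => by simpa using hseg y hy
  have hhor : ∀ s : ℝ, |s| ≤ b → Continuous fun x : ℝ => f (x + s * I) := fun s hs =>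
    hf.continuousOn.comp_continuous (by fun_prop) fun x => by simpa using hs
  have hrect : ∀ T : ℝ, ∫ t in (-T)..T, (f (t - b * I) - f (t + b * I)) =
      I * ((∫ y in (-b)..b, f ((-T : ℝ) + y * I)) - ∫ y in (-b)..b, f (T + y * I)) := fun T => by
    have hcauchy := Complex.integral_boundary_rect_eq_zero_of_differentiableOn f
      ((-T : ℝ) + (-b : ℝ) * I) (T + b * I)
      (hf.mono fun z hz => hseg _ (by simpa using hz.2))
    simp only [Complex.add_re, Complex.add_im, Complex.ofReal_re, Complex.ofReal_im,
      Complex.re_ofReal_mul, Complex.im_ofReal_mul, Complex.I_re, Complex.I_im, mul_zero, mul_one,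
      add_zero, zero_add, smul_eq_mul] at hcauchy
    have hlow := hhor (-b) (by rw [abs_neg, abs_of_nonneg hb])
    simp only [Complex.ofReal_neg, neg_mul, ← sub_eq_add_neg] at hcauchy hlow ⊢
    rw [intervalIntegral.integral_sub (hlow.intervalIntegrable _ _)
      ((hhor b (abs_of_nonneg hb).le).intervalIntegrable _ _)]
    linear_combination hcauchy
  have hlim := intervalIntegral_tendsto_integral hint tendsto_neg_atTop_atBot tendsto_id
  refine tendsto_nhds_unique hlim (Tendsto.congr (fun T => (hrect T).symm) ?_)
  have hleft := (tendsto_intervalIntegral_vertical hA hvert).comp tendsto_neg_atTop_atBot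
  have hright := tendsto_intervalIntegral_vertical hB hvert
  rw [show 2 * b * I * (A - B) = I * ((b - (-b : ℝ)) * A - (b - (-b : ℝ)) * B) by push_cast; ring]
  exact (hleft.sub hright).const_mul I

theorem isOpen_abs_im_lt (b : ℝ) : IsOpen {z : ℂ | |z.im| < b} :=
  isOpen_lt (by fun_prop) continuous_const

theorem cexp_ne_one {w : ℂ} (him : |w.im| < 2 * π) (hw : w ≠ 0) : Complex.exp w ≠ 1 := by
  rw [Ne, Complex.exp_eq_one_iff]
  rintro ⟨n, rfl⟩
  have hn : |(n : ℝ)| < 1 := by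
    simpa [abs_mul, abs_of_pos Real.pi_pos, Real.pi_pos] using him
  obtain rfl : n = 0 := Int.abs_lt_one_iff.1 (by exact_mod_cast hn)
  simp at hw

theorem tendsto_inv_one_sub_cexp_neg_one {ι : Type*} {k : Filter ι} {w : ι → ℂ}
    (hw : Tendsto (fun i => (w i).re) k atTop) :
    Tendsto (fun i => (1 - Complex.exp (-w i))⁻¹) k (𝓝 1) := by
  have hexp : Tendsto (fun i => Complex.exp (-w i)) k (𝓝 0) :=
    Complex.tendsto_exp_nhds_zero_iff.2 (tendsto_neg_atTop_atBot.comp hw)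
  simpa using (hexp.const_sub 1).inv₀ (by simp)

theorem tendsto_inv_one_sub_cexp_neg_zero {ι : Type*} {k : Filter ι} {w : ι → ℂ}
    (hw : Tendsto (fun i => (w i).re) k atBot) :
    Tendsto (fun i => (1 - Complex.exp (-w i))⁻¹) k (𝓝 0) :=
  tendsto_inv₀_cobounded.comp <| (tendsto_const_sub_cobounded 1).comp <|
    Complex.tendsto_exp_comap_re_atTop.comp <| tendsto_comap_iff.2 <|
      tendsto_neg_atBot_atTop.comp hw

/-- The entire function `w ↦ (exp w - 1) / w`, with the value `1` at `0`. -/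
noncomputable def expSubOneDiv : ℂ → ℂ := dslope Complex.exp 0

theorem expSubOneDiv_of_ne {w : ℂ} (hw : w ≠ 0) : expSubOneDiv w = (Complex.exp w - 1) / w := by
  rw [expSubOneDiv, dslope_of_ne _ hw, slope_def_field, Complex.exp_zero, sub_zero]

theorem differentiable_expSubOneDiv : Differentiable ℂ expSubOneDiv := by
  rw [← differentiableOn_univ, expSubOneDiv, Complex.differentiableOn_dslope univ_mem]
  exact Complex.differentiable_exp.differentiableOn

theorem expSubOneDiv_ne_zero {w : ℂ} (him : |w.im| < 2 * π) : expSubOneDiv w ≠ 0 := by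
  rcases eq_or_ne w 0 with rfl | hw
  · simp [expSubOneDiv]
  · rw [expSubOneDiv_of_ne hw]
    exact div_ne_zero (sub_ne_zero.2 (cexp_ne_one him hw)) hw

theorem logDeriv_expSubOneDiv {w : ℂ} (hw : Complex.exp w ≠ 1) :
    logDeriv expSubOneDiv w = (1 - Complex.exp (-w))⁻¹ - w⁻¹ := by
  have hw0 : w ≠ 0 := by rintro rfl; exact hw Complex.exp_zero
  have hloc : expSubOneDiv =ᶠ[𝓝 w] fun z => (Complex.exp z - 1) / z :=
    (eventually_ne_nhds hw0).mono fun z => expSubOneDiv_of_ne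
  have hw1 := sub_ne_zero.2 hw
  have hexp := Complex.exp_ne_zero w
  rw [(logDeriv_congr_nhds hloc).eq_of_nhds, logDeriv_div w hw1 hw0 (by fun_prop) (by fun_prop),
    logDeriv_apply, deriv_sub_const, Complex.deriv_exp, logDeriv_id', one_div, Complex.exp_neg]
  field_simp

/-- `(N z - N l) / (1 - exp (z - l))` as a function of `z`, extended over the removable
singularity `z = l`. -/
noncomputable def cauchyQuotient (N : ℂ → ℂ) (l z : ℂ) : ℂ :=
  -dslope N l z / expSubOneDiv (z - l)

theorem cauchyQuotient_of_ne (N : ℂ → ℂ) {l z : ℂ} (hz : z ≠ l) :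
    cauchyQuotient N l z = (N z - N l) * (1 - Complex.exp (z - l))⁻¹ := by
  have hzl : z - l ≠ 0 := sub_ne_zero.2 hz
  rw [cauchyQuotient, dslope_of_ne _ hz, slope_def_field, expSubOneDiv_of_ne hzl, neg_div,
    div_div_div_cancel_right₀ hzl, ← div_neg, neg_sub, div_eq_mul_inv]

theorem differentiableOn_cauchyQuotient {N : ℂ → ℂ} {b : ℝ} {l : ℂ} (hb : π < b)
    (hN : DifferentiableOn ℂ N {z | |z.im| < b}) (hl : |l.im| < π) :
    DifferentiableOn ℂ (cauchyQuotient N l) {z | |z.im| ≤ π} := by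
  have hstrip : {z : ℂ | |z.im| < b} ∈ 𝓝 l :=
    (isOpen_abs_im_lt b).mem_nhds (hl.trans hb)
  refine DifferentiableOn.div
    (((Complex.differentiableOn_dslope hstrip).2 hN).mono fun z hz => hz.trans_lt hb).neg
    (differentiable_expSubOneDiv.comp (by fun_prop)).differentiableOn fun z hz =>
      expSubOneDiv_ne_zero ?_
  rw [Complex.sub_im, two_mul]
  exact (abs_sub _ _).trans_lt (add_lt_add_of_le_of_lt hz hl)

theorem tendsto_cauchyQuotient_atBot {N : ℂ → ℂ} {A : ℂ}
    (hA : Tendsto N (comap Complex.re atBot) (𝓝 A)) (l : ℂ) :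
    Tendsto (cauchyQuotient N l) (comap Complex.re atBot) (𝓝 (A - N l)) := by
  have hre : Tendsto (fun z : ℂ => (l - z).re) (comap Complex.re atBot) atTop :=
    tendsto_atTop_add_const_left _ l.re (tendsto_neg_atBot_atTop.comp tendsto_comap)
  have hlim := (hA.sub_const (N l)).mul (tendsto_inv_one_sub_cexp_neg_one hre)
  rw [mul_one] at hlim
  refine hlim.congr' ((tendsto_comap.eventually (eventually_ne_atBot l.re)).mono fun z hz => ?_)
  rw [cauchyQuotient_of_ne N (ne_of_apply_ne Complex.re hz), neg_sub]

theorem tendsto_cauchyQuotient_atTop {N : ℂ → ℂ} {C : ℂ}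
    (hC : Tendsto N (comap Complex.re atTop) (𝓝 C)) (l : ℂ) :
    Tendsto (cauchyQuotient N l) (comap Complex.re atTop) (𝓝 0) := by
  have hre : Tendsto (fun z : ℂ => (l - z).re) (comap Complex.re atTop) atBot :=
    tendsto_atBot_add_const_left _ l.re (tendsto_neg_atTop_atBot.comp tendsto_comap)
  have hlim := (hC.sub_const (N l)).mul (tendsto_inv_one_sub_cexp_neg_zero hre)
  rw [mul_zero] at hlim
  refine hlim.congr' ((tendsto_comap.eventually (eventually_ne_atTop l.re)).mono fun z hz => ?_)
  rw [cauchyQuotient_of_ne N (ne_of_apply_ne Complex.re hz), neg_sub]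

theorem integral_jump_div_one_add_cexp {N : ℂ → ℂ} {b : ℝ} {A C l : ℂ} (hb : π < b)
    (hN : DifferentiableOn ℂ N {z | |z.im| < b})
    (hA : Tendsto N (comap Complex.re atBot) (𝓝 A))
    (hC : Tendsto N (comap Complex.re atTop) (𝓝 C)) (hl : |l.im| < π)
    (hint : Integrable fun t : ℝ =>
      (N (t - π * I) - N (t + π * I)) / (1 + Complex.exp (t - l))) :
    ∫ t : ℝ, (N (t - π * I) - N (t + π * I)) / (1 + Complex.exp (t - l)) =
      2 * π * I * (A - N l) := by
  have hjump : ∀ t : ℝ, cauchyQuotient N l (t - π * I) - cauchyQuotient N l (t + π * I) =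
      (N (t - π * I) - N (t + π * I)) / (1 + Complex.exp (t - l)) := fun t => by
    have hlow : Complex.exp (t - π * I - l) = -Complex.exp (t - l) := by
      rw [sub_right_comm, Complex.exp_sub_pi_mul_I]
    have hupp : Complex.exp (t + π * I - l) = -Complex.exp (t - l) := by
      rw [add_sub_right_comm, Complex.exp_add_pi_mul_I]
    have hne : ∀ s : ℂ, |s.im| = π → s ≠ l := by
      rintro s hs rfl
      exact hl.ne hs
    rw [cauchyQuotient_of_ne N (hne _ (by simp [abs_of_pos Real.pi_pos])),
      cauchyQuotient_of_ne N (hne _ (by simp [abs_of_pos Real.pi_pos])), hlow, hupp,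
      sub_neg_eq_add, ← sub_mul, sub_sub_sub_cancel_right, div_eq_mul_inv]
  simp only [← hjump] at hint ⊢
  rw [integral_sub_conj_boundary_strip Real.pi_pos.le (differentiableOn_cauchyQuotient hb hN hl)
    (tendsto_cauchyQuotient_atBot hA l) (tendsto_cauchyQuotient_atTop hC l) hint, sub_zero]

/-- The holomorphic extension of `(exp z - 1) / (exp (α z) - 1)`; the logarithmic potential of the
law of `log (1 / 𝔾_α - 1)` is a multiple of the logarithm of its modulus. -/
noncomputable def bfryRatio (α : ℝ) (z : ℂ) : ℂ :=
  expSubOneDiv z / (α * expSubOneDiv (α * z))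

theorem bfryRatio_of_ne {α : ℝ} (h0 : 0 < α) {z : ℂ} (hz : z ≠ 0) :
    bfryRatio α z = (Complex.exp z - 1) / (Complex.exp (α * z) - 1) := by
  have hα : (α : ℂ) ≠ 0 := Complex.ofReal_ne_zero.2 h0.ne'
  rw [bfryRatio, expSubOneDiv_of_ne hz, expSubOneDiv_of_ne (mul_ne_zero hα hz), mul_div_assoc',
    mul_div_mul_left _ _ hα, div_div_div_cancel_right₀ hz]

theorem abs_im_ofReal_mul_lt {α b : ℝ} (h0 : 0 < α) (h1 : α < 1) {z : ℂ} (hz : |z.im| < b) :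
    |(α * z).im| < b := by
  rw [Complex.im_ofReal_mul, abs_mul, abs_of_pos h0]
  exact (mul_le_of_le_one_left (abs_nonneg _) h1.le).trans_lt hz

theorem differentiableOn_bfryRatio {α : ℝ} (h0 : 0 < α) (h1 : α < 1) :
    DifferentiableOn ℂ (bfryRatio α) {z | |z.im| < 2 * π} := by
  refine differentiable_expSubOneDiv.differentiableOn.div
    ((differentiable_expSubOneDiv.comp (by fun_prop)).const_mul _).differentiableOn fun z hz => ?_
  exact mul_ne_zero (Complex.ofReal_ne_zero.2 h0.ne')
    (expSubOneDiv_ne_zero (abs_im_ofReal_mul_lt h0 h1 hz))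

theorem bfryRatio_ne_zero {α : ℝ} (h0 : 0 < α) (h1 : α < 1) {z : ℂ} (hz : |z.im| < 2 * π) :
    bfryRatio α z ≠ 0 :=
  div_ne_zero (expSubOneDiv_ne_zero hz) <| mul_ne_zero (Complex.ofReal_ne_zero.2 h0.ne')
    (expSubOneDiv_ne_zero (abs_im_ofReal_mul_lt h0 h1 hz))

theorem differentiableOn_logDeriv_bfryRatio {α : ℝ} (h0 : 0 < α) (h1 : α < 1) :
    DifferentiableOn ℂ (logDeriv (bfryRatio α)) {z | |z.im| < 2 * π} :=
  ((differentiableOn_bfryRatio h0 h1).deriv (isOpen_abs_im_lt _)).div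
    (differentiableOn_bfryRatio h0 h1) fun _ hz => bfryRatio_ne_zero h0 h1 hz

theorem logDeriv_bfryRatio {α : ℝ} {z : ℂ} (hz : Complex.exp z ≠ 1)
    (hαz : Complex.exp (α * z) ≠ 1) :
    logDeriv (bfryRatio α) z =
      (1 - Complex.exp (-z))⁻¹ - α * (1 - Complex.exp (-(α * z)))⁻¹ := by
  have ne_zero_of_exp {w : ℂ} (hw : Complex.exp w ≠ 1) : w ≠ 0 := by
    rintro rfl; exact hw Complex.exp_zero
  have hα : (α : ℂ) ≠ 0 := left_ne_zero_of_mul (ne_zero_of_exp hαz)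
  have hval {w : ℂ} (hw : Complex.exp w ≠ 1) : expSubOneDiv w ≠ 0 := by
    rw [expSubOneDiv_of_ne (ne_zero_of_exp hw)]
    exact div_ne_zero (sub_ne_zero.2 hw) (ne_zero_of_exp hw)
  have hd := differentiable_expSubOneDiv
  have hscale : logDeriv (fun w : ℂ => expSubOneDiv (α * w)) z =
      logDeriv expSubOneDiv (α * z) * α := by
    have hcomp := logDeriv_comp (g := fun w : ℂ => α * w) (x := z) hd.differentiableAt (by fun_prop)
    rwa [deriv_const_mul_id] at hcomp
  have hdiv : logDeriv (bfryRatio α) z = logDeriv expSubOneDiv z -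
      logDeriv (fun w : ℂ => α * expSubOneDiv (α * w)) z :=
    logDeriv_div z (hval hz) (mul_ne_zero hα (hval hαz)) hd.differentiableAt
      ((hd.comp (by fun_prop)).const_mul _).differentiableAt
  rw [hdiv, logDeriv_const_mul z _ hα, hscale, logDeriv_expSubOneDiv hz, logDeriv_expSubOneDiv hαz]
  field_simp [ne_zero_of_exp hz]
  ring

theorem logDeriv_bfryRatio_of_re_ne {α : ℝ} (h0 : 0 < α) {z : ℂ} (hz : z.re ≠ 0) :
    logDeriv (bfryRatio α) z =
      (1 - Complex.exp (-z))⁻¹ - α * (1 - Complex.exp (-(α * z)))⁻¹ := by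
  have hexp {w : ℂ} (hw : w.re ≠ 0) : Complex.exp w ≠ 1 := fun h =>
    hw (by simpa [Complex.norm_exp] using congrArg norm h)
  refine logDeriv_bfryRatio (hexp hz) (hexp ?_)
  rw [Complex.re_ofReal_mul]
  exact mul_ne_zero h0.ne' hz

theorem tendsto_logDeriv_bfryRatio_atBot {α : ℝ} (h0 : 0 < α) :
    Tendsto (logDeriv (bfryRatio α)) (comap Complex.re atBot) (𝓝 0) := by
  have hα : Tendsto (fun z : ℂ => (α * z).re) (comap Complex.re atBot) atBot := by
    simpa only [Complex.re_ofReal_mul] using tendsto_comap.const_mul_atBot h0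
  have hlim := (tendsto_inv_one_sub_cexp_neg_zero tendsto_comap).sub
    ((tendsto_inv_one_sub_cexp_neg_zero hα).const_mul (α : ℂ))
  rw [mul_zero, sub_zero] at hlim
  exact hlim.congr' <| (tendsto_comap.eventually (eventually_ne_atBot 0)).mono fun z hz =>
    (logDeriv_bfryRatio_of_re_ne h0 hz).symm

theorem tendsto_logDeriv_bfryRatio_atTop {α : ℝ} (h0 : 0 < α) :
    Tendsto (logDeriv (bfryRatio α)) (comap Complex.re atTop) (𝓝 (1 - α)) := by
  have hα : Tendsto (fun z : ℂ => (α * z).re) (comap Complex.re atTop) atTop := by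
    simpa only [Complex.re_ofReal_mul] using tendsto_comap.const_mul_atTop h0
  have hlim := (tendsto_inv_one_sub_cexp_neg_one tendsto_comap).sub
    ((tendsto_inv_one_sub_cexp_neg_one hα).const_mul (α : ℂ))
  rw [mul_one] at hlim
  exact hlim.congr' <| (tendsto_comap.eventually (eventually_ne_atTop 0)).mono fun z hz =>
    (logDeriv_bfryRatio_of_re_ne h0 hz).symm

theorem tendsto_bfryRatio_atBot {α : ℝ} (h0 : 0 < α) :
    Tendsto (bfryRatio α) (comap Complex.re atBot) (𝓝 1) := by
  have hα : Tendsto (fun z : ℂ => Complex.exp (α * z)) (comap Complex.re atBot) (𝓝 0) :=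
    Complex.tendsto_exp_nhds_zero_iff.2 <| by
      simpa only [Complex.re_ofReal_mul] using tendsto_comap.const_mul_atBot h0
  have hlim := (Complex.tendsto_exp_comap_re_atBot.sub_const 1).div (hα.sub_const 1) (by simp)
  rw [div_self (by simp)] at hlim
  exact hlim.congr' <| (tendsto_comap.eventually (eventually_ne_atBot 0)).mono fun z hz =>
    (bfryRatio_of_ne h0 (ne_of_apply_ne Complex.re hz)).symm

theorem inv_one_sub_cexp_neg_jump {x θ : ℝ} (h : Real.cosh x ≠ Real.cos θ) :
    (1 - Complex.exp (-(x - θ * I)))⁻¹ - (1 - Complex.exp (-(x + θ * I)))⁻¹ =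
      I * (Real.sin θ / (Real.cosh x - Real.cos θ) : ℝ) := by
  set E := Complex.exp (-x)
  set u := Complex.exp (θ * I)
  set v := Complex.exp (-θ * I)
  have hE : E ≠ 0 := Complex.exp_ne_zero _
  have hlow : Complex.exp (-(x - θ * I)) = E * u := by rw [← Complex.exp_add]; congr 1; ring
  have hupp : Complex.exp (-(x + θ * I)) = E * v := by rw [← Complex.exp_add]; congr 1; ring
  have huv : u * v = 1 := by rw [← Complex.exp_add]; simp
  have hcos : (Real.cos θ : ℂ) = (u + v) / 2 := by rw [Complex.ofReal_cos, Complex.cos]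
  have hsin : (Real.sin θ : ℂ) = (v - u) * I / 2 := by rw [Complex.ofReal_sin, Complex.sin]
  have hcosh : (Real.cosh x : ℂ) = (E⁻¹ + E) / 2 := by
    rw [Complex.ofReal_cosh, Complex.cosh, ← Complex.exp_neg, neg_neg]
  have hprod : (1 - E * u) * (1 - E * v) = 2 * E * (Real.cosh x - Real.cos θ : ℂ) := by
    rw [hcosh, hcos]
    field_simp
    linear_combination E ^ 2 * huv
  have hden : (Real.cosh x - Real.cos θ : ℂ) ≠ 0 :=
    sub_ne_zero.2 (Complex.ofReal_injective.ne h)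
  have hprod_ne : (1 - E * u) * (1 - E * v) ≠ 0 := by
    rw [hprod]
    exact mul_ne_zero (mul_ne_zero two_ne_zero hE) hden
  rw [hlow, hupp, inv_sub_inv (left_ne_zero_of_mul hprod_ne) (right_ne_zero_of_mul hprod_ne),
    hprod, Complex.ofReal_div, Complex.ofReal_sub, hsin]
  field_simp
  linear_combination E * (u - v) * Complex.I_sq

theorem cos_mul_le_norm_cexp_add (l : ℂ) (t : ℝ) :
    Real.cos (l.im / 2) * (Real.exp l.re + Real.exp t) ≤ ‖Complex.exp l + Complex.exp t‖ := by
  -- Rotating by `-l.im / 2` gives both summands the same real direction.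
  have hrot : ‖Complex.exp l + Complex.exp t‖ =
      ‖Complex.exp ((-(l.im / 2) : ℝ) * I) * (Complex.exp l + Complex.exp t)‖ := by
    rw [norm_mul, Complex.norm_exp_ofReal_mul_I, one_mul]
  rw [hrot, mul_add (Complex.exp _), ← Complex.exp_add, ← Complex.exp_add]
  refine le_trans (le_of_eq ?_) (Complex.re_le_norm _)
  have hhalf : -(l.im / 2) + l.im = l.im / 2 := by ring
  simp only [Complex.add_re, Complex.exp_re, Complex.add_im, Complex.re_ofReal_mul,
    Complex.im_ofReal_mul, Complex.I_re, Complex.I_im, Complex.ofReal_re, Complex.ofReal_im,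
    mul_zero, mul_one, zero_add, add_zero, Real.cos_neg, hhalf]
  ring

theorem norm_cexp_add_le (l : ℂ) (t : ℝ) :
    ‖Complex.exp l + Complex.exp t‖ ≤ Real.exp l.re + Real.exp t := by
  simpa only [Complex.norm_exp, Complex.ofReal_re] using norm_add_le (Complex.exp l) (Complex.exp t)

theorem abs_exp_sub_exp_le_norm_cexp_add (l : ℂ) (t : ℝ) :
    |Real.exp t - Real.exp l.re| ≤ ‖Complex.exp l + Complex.exp t‖ := by
  have h := abs_norm_sub_norm_le (Complex.exp t) (-Complex.exp l)
  rwa [norm_neg, Complex.norm_exp, Complex.norm_exp, Complex.ofReal_re, sub_neg_eq_add,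
    add_comm] at h

theorem cos_half_pos {φ : ℝ} (hφ : |φ| < π) : 0 < Real.cos (φ / 2) := by
  rw [abs_lt] at hφ
  exact Real.cos_pos_of_mem_Ioo ⟨by linarith, by linarith⟩

theorem cexp_add_ne_zero {l : ℂ} (hl : |l.im| < π) (t : ℝ) :
    Complex.exp l + Complex.exp t ≠ 0 := by
  have := cos_half_pos hl
  exact norm_pos_iff.1 (lt_of_lt_of_le (by positivity) (cos_mul_le_norm_cexp_add l t))

theorem inv_one_add_cexp_sub (l : ℂ) (t : ℝ) :
    (1 + Complex.exp (t - l))⁻¹ = Complex.exp l / (Complex.exp l + Complex.exp t) := by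
  rw [Complex.exp_sub, one_add_div (Complex.exp_ne_zero l), inv_div]

theorem norm_inv_one_add_cexp_sub_le {l : ℂ} (hl : |l.im| < π) (t : ℝ) :
    ‖(1 + Complex.exp (t - l))⁻¹‖ ≤ (Real.cos (l.im / 2))⁻¹ := by
  have hcos := cos_half_pos hl
  have hlow := cos_mul_le_norm_cexp_add l t
  rw [inv_one_add_cexp_sub, norm_div, Complex.norm_exp, inv_eq_one_div,
    div_le_div_iff₀ (lt_of_lt_of_le (by positivity) hlow) hcos]
  nlinarith [Real.exp_pos t]

theorem continuous_inv_one_add_cexp_sub {l : ℂ} (hl : |l.im| < π) :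
    Continuous fun t : ℝ => (1 + Complex.exp (t - l))⁻¹ := by
  simp only [inv_one_add_cexp_sub]
  exact Continuous.div (by fun_prop) (by fun_prop) (cexp_add_ne_zero hl)

theorem integrable_inv_one_add_cexp_sub (μ : Measure ℝ) [IsFiniteMeasure μ] {l : ℂ}
    (hl : |l.im| < π) : Integrable (fun t : ℝ => (1 + Complex.exp (t - l))⁻¹) μ :=
  .of_bound (continuous_inv_one_add_cexp_sub hl).aestronglyMeasurable _
    (ae_of_all _ (norm_inv_one_add_cexp_sub_le hl))

theorem log_norm_cexp_add_le (l : ℂ) (t : ℝ) :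
    Real.log ‖Complex.exp l + Complex.exp t‖ ≤ max l.re 0 + |t| + Real.log 2 := by
  rcases eq_or_ne ‖Complex.exp l + Complex.exp t‖ 0 with h | h
  · rw [h, Real.log_zero]
    have := Real.log_nonneg one_le_two
    positivity
  rw [Real.log_le_iff_le_exp (lt_of_le_of_ne (norm_nonneg _) h.symm), Real.exp_add,
    Real.exp_log two_pos]
  have hl : Real.exp l.re ≤ Real.exp (max l.re 0 + |t|) :=
    Real.exp_le_exp.2 (le_add_of_le_of_nonneg (le_max_left _ _) (abs_nonneg t))
  have ht : Real.exp t ≤ Real.exp (max l.re 0 + |t|) :=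
    Real.exp_le_exp.2 (le_add_of_nonneg_of_le (le_max_right _ _) (le_abs_self t))
  linarith [norm_cexp_add_le l t]

theorem abs_log_norm_cexp_add_le {l : ℂ} (hl : |l.im| < π) (t : ℝ) :
    |Real.log ‖Complex.exp l + Complex.exp t‖| ≤
      |Real.log (Real.cos (l.im / 2))| + (max l.re 0 + |t| + Real.log 2) := by
  have hcos := cos_half_pos hl
  have hlow : Real.log (Real.cos (l.im / 2)) + t ≤ Real.log ‖Complex.exp l + Complex.exp t‖ := by
    rw [Real.le_log_iff_exp_le (norm_pos_iff.2 (cexp_add_ne_zero hl t)), Real.exp_add,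
      Real.exp_log hcos]
    refine le_trans ?_ (cos_mul_le_norm_cexp_add l t)
    gcongr
    exact le_add_of_nonneg_left (Real.exp_pos _).le
  have hupp := log_norm_cexp_add_le l t
  have := Real.log_nonneg one_le_two
  rw [abs_le]
  constructor
  · linarith [neg_abs_le (Real.log (Real.cos (l.im / 2))), neg_abs_le t, le_max_right l.re 0]
  · linarith [abs_nonneg (Real.log (Real.cos (l.im / 2)))]

theorem hasDerivAt_log_norm {F : ℝ → ℂ} {F' : ℂ} {x : ℝ} (h : HasDerivAt F F' x) (hx : F x ≠ 0) :
    HasDerivAt (fun y => Real.log ‖F y‖) (F' / F x).re x := by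
  have hsq := (h.norm_sq.log (by positivity)).const_mul (1 / 2 : ℝ)
  have hlog : (fun y => (1 / 2 : ℝ) * Real.log (‖F y‖ ^ 2)) = fun y => Real.log ‖F y‖ := by
    funext y
    rw [Real.log_pow, Nat.cast_ofNat, one_div, inv_mul_cancel_left₀ two_ne_zero]
  rw [hlog] at hsq
  refine hsq.congr_deriv ?_
  rw [Complex.inner, Complex.div_re, ← Complex.normSq_eq_norm_sq]
  simp only [Complex.mul_re, Complex.conj_re, Complex.conj_im]
  ring

/-- The logarithmic potential at `-exp l` of the image of `μ` under `exp`. The points off the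
positive half-line are parametrized by `|l.im| < π`; the half-line itself is `l.im = π`. -/
noncomputable def logPotential (μ : Measure ℝ) (l : ℂ) : ℝ :=
  ∫ t, Real.log ‖Complex.exp l + Complex.exp t‖ ∂μ

section LogPotential

variable {μ : Measure ℝ}

theorem measurable_log_norm_cexp_add (l : ℂ) :
    Measurable fun t : ℝ => Real.log ‖Complex.exp l + Complex.exp t‖ := by
  fun_prop

theorem integrable_log_norm_cexp_add [IsFiniteMeasure μ] (hμ : Integrable id μ) {l : ℂ}
    (hl : |l.im| < π) :
    Integrable (fun t : ℝ => Real.log ‖Complex.exp l + Complex.exp t‖) μ :=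
  Integrable.mono' (by have := hμ.abs; fun_prop)
    (measurable_log_norm_cexp_add l).aestronglyMeasurable
    (ae_of_all _ fun t => abs_log_norm_cexp_add_le hl t)

theorem hasDerivAt_logPotential [IsFiniteMeasure μ] (hμ : Integrable id μ) {l : ℂ}
    (hl : |l.im| < π) (s : ℝ) :
    HasDerivAt (fun r : ℝ => logPotential μ (l + r))
      (∫ t : ℝ, (1 + Complex.exp (t - (l + s)))⁻¹ ∂μ).re s := by
  have him : ∀ r : ℝ, |(l + r).im| < π := fun r => by simpa using hl
  have hderiv : ∀ r t : ℝ, HasDerivAt (fun r : ℝ => Real.log ‖Complex.exp (l + r) + Complex.exp t‖)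
      (1 + Complex.exp (t - (l + r)))⁻¹.re r := fun r t => by
    rw [inv_one_add_cexp_sub]
    refine hasDerivAt_log_norm ?_ (cexp_add_ne_zero (him r) t)
    simpa using (((hasDerivAt_id r).ofReal_comp.const_add l).cexp).add_const (Complex.exp t)
  have hbound : ∀ r t : ℝ, ‖(1 + Complex.exp (t - (l + r)))⁻¹.re‖ ≤ (Real.cos (l.im / 2))⁻¹ :=
    fun r t => (Complex.abs_re_le_norm _).trans <| by
      simpa using norm_inv_one_add_cexp_sub_le (him r) t
  have hre : (∫ t : ℝ, (1 + Complex.exp (t - (l + s)))⁻¹ ∂μ).re =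
      ∫ t : ℝ, (1 + Complex.exp (t - (l + s)))⁻¹.re ∂μ :=
    (integral_re (integrable_inv_one_add_cexp_sub μ (him s))).symm
  rw [hre]
  exact (hasDerivAt_integral_of_dominated_loc_of_deriv_le (𝕜 := ℝ)
    (F := fun (r t : ℝ) => Real.log ‖Complex.exp (l + r) + Complex.exp t‖) univ_mem
    (Eventually.of_forall fun r => (measurable_log_norm_cexp_add _).aestronglyMeasurable)
    (integrable_log_norm_cexp_add hμ (him s))
    (Complex.continuous_re.comp (continuous_inv_one_add_cexp_sub (him s))).aestronglyMeasurable
    (ae_of_all _ fun t r _ => hbound r t) (integrable_const _)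
    (ae_of_all _ fun t r _ => hderiv r t)).2

theorem tendsto_logPotential_atBot [IsFiniteMeasure μ] (hμ : Integrable id μ) {l : ℂ}
    (hl : |l.im| < π) :
    Tendsto (fun r : ℝ => logPotential μ (l + r)) atBot (𝓝 (∫ t, t ∂μ)) := by
  refine tendsto_integral_filter_of_dominated_convergence
    (fun t => |Real.log (Real.cos (l.im / 2))| + (|t| + Real.log 2))
    (Eventually.of_forall fun r => (measurable_log_norm_cexp_add _).aestronglyMeasurable)
    ?_ (by have := hμ.abs; fun_prop) (ae_of_all _ fun t => ?_)
  · filter_upwards [eventually_le_atBot (-l.re)] with r hr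
    refine ae_of_all _ fun t => ?_
    have hre : max (l + r).re 0 = 0 :=
      max_eq_right (by rw [Complex.add_re, Complex.ofReal_re]; linarith)
    have hle := abs_log_norm_cexp_add_le (l := l + r) (by simpa using hl) t
    rw [hre] at hle
    simpa using hle
  · have hexp : Tendsto (fun r : ℝ => Complex.exp (l + r)) atBot (𝓝 0) :=
      Complex.tendsto_exp_nhds_zero_iff.2 <| by
        simpa using tendsto_atBot_add_const_left _ l.re tendsto_id
    have hlim := ((hexp.add_const (Complex.exp t)).norm.log (by simp))
    simpa [Complex.norm_exp] using hlim

theorem continuous_logPotential_vertical [IsFiniteMeasure μ] [NullSingletonClass μ]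
    (hμ : Integrable id μ) {σ : ℝ}
    (hσ : Integrable (fun t => Real.log |Real.exp t - Real.exp σ|) μ) :
    Continuous fun φ : ℝ => logPotential μ (σ + φ * I) := by
  have hre : ∀ φ : ℝ, (σ + φ * I).re = σ := fun φ => by simp
  have hpos : ∀ᵐ t ∂μ, ∀ φ : ℝ, 0 < |Real.exp t - Real.exp σ| ∧
      |Real.exp t - Real.exp σ| ≤ ‖Complex.exp (σ + φ * I) + Complex.exp t‖ := by
    filter_upwards [Measure.ae_ne μ σ] with t ht φ
    refine ⟨abs_pos.2 (sub_ne_zero.2 (Real.exp_injective.ne ht)), ?_⟩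
    simpa only [hre] using abs_exp_sub_exp_le_norm_cexp_add (σ + φ * I) t
  refine continuous_of_dominated
    (bound := fun t => |(Real.log |Real.exp t - Real.exp σ|)| + (max σ 0 + |t| + Real.log 2))
    (fun φ => (measurable_log_norm_cexp_add _).aestronglyMeasurable) (fun φ => ?_)
    (by have := hμ.abs; have := hσ.abs; fun_prop) ?_
  · filter_upwards [hpos] with t ht
    have hlow := Real.log_le_log (ht φ).1 (ht φ).2
    have hupp := log_norm_cexp_add_le (σ + φ * I) t
    rw [hre] at hupp
    have := Real.log_nonneg one_le_two
    rw [Real.norm_eq_abs, abs_le]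
    constructor
    · linarith [neg_abs_le (Real.log |Real.exp t - Real.exp σ|), abs_nonneg t, le_max_right σ 0]
    · linarith [abs_nonneg (Real.log |Real.exp t - Real.exp σ|)]
  · filter_upwards [hpos] with t ht
    exact Continuous.log (by fun_prop) fun φ => ((ht φ).1.trans_le (ht φ).2).ne'

end LogPotential

theorem abs_log_abs_exp_sub_exp_le {s t : ℝ} (h : 1 ≤ |t - s|) :
    |(Real.log |Real.exp t - Real.exp s|)| ≤ |s| + |t| := by
  wlog hst : s ≤ t generalizing s t
  · rw [abs_sub_comm (Real.exp t), add_comm |s|]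
    exact this (by rwa [abs_sub_comm]) (le_of_not_ge hst)
  rw [abs_of_nonneg (sub_nonneg.2 hst)] at h
  have hlow : Real.exp s ≤ Real.exp t - Real.exp s := by
    have hexp : Real.exp s * 2 ≤ Real.exp s * Real.exp (t - s) := by
      gcongr
      linarith [Real.add_one_le_exp (t - s)]
    rw [← Real.exp_add, add_sub_cancel] at hexp
    linarith
  have hpos := (Real.exp_pos s).trans_le hlow
  rw [abs_of_pos hpos, abs_le]
  have hlog_low := (Real.le_log_iff_exp_le hpos).2 hlow
  have hlog_upp : Real.log (Real.exp t - Real.exp s) ≤ t :=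
    (Real.log_le_iff_le_exp hpos).2 (sub_le_self _ (Real.exp_pos s).le)
  constructor
  · linarith [neg_abs_le s, abs_nonneg t]
  · linarith [abs_nonneg s, le_abs_self t]

theorem integrable_log_abs_exp_sub_exp {μ : Measure ℝ} [IsFiniteMeasure μ] {C : ENNReal}
    (hC : C ≠ ⊤) (hle : μ ≤ C • volume) (hμ : Integrable id μ) (σ : ℝ) :
    Integrable (fun t => Real.log |Real.exp t - Real.exp σ|) μ := by
  set S := Ioc (σ - 1) (σ + 1)
  have hnear : IntegrableOn (fun t => Real.log |Real.exp t - Real.exp σ|) S μ := by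
    have hmero : MeromorphicOn (fun t => Real.exp t - Real.exp σ) (uIcc (σ - 1) (σ + 1)) :=
      fun t _ => AnalyticAt.meromorphicAt (by fun_prop)
    exact (hmero.intervalIntegrable_log_norm.1.smul_measure hC).mono_measure <|
      (Measure.restrict_mono subset_rfl hle).trans_eq (Measure.restrict_smul _ _ _)
  have hfar : IntegrableOn (fun t => Real.log |Real.exp t - Real.exp σ|) Sᶜ μ := by
    refine Integrable.mono' (g := fun t => |σ| + |t|) ?_ ?_ ?_
    · exact ((integrable_const _).add hμ.abs).integrableOn
    · exact Measurable.aestronglyMeasurable (by fun_prop)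
    · refine ae_restrict_of_forall_mem measurableSet_Ioc.compl fun t ht => ?_
      refine abs_log_abs_exp_sub_exp_le (not_lt.1 fun hts => ht ?_)
      rw [abs_lt] at hts
      constructor <;> linarith
  rw [← integrableOn_univ, ← union_compl_self S]
  exact hnear.union hfar

theorem integrable_exp_neg_mul_abs {b : ℝ} (hb : 0 < b) :
    Integrable fun t : ℝ => Real.exp (-(b * |t|)) := by
  rw [← integrableOn_univ, ← Iic_union_Ioi (a := (0 : ℝ))]
  refine IntegrableOn.union ?_ ?_
  · refine (integrableOn_exp_mul_Iic hb 0).congr_fun (fun t ht => ?_) measurableSet_Iic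
    simp only [abs_of_nonpos (mem_Iic.1 ht), mul_neg, neg_neg]
  · refine (integrableOn_exp_mul_Ioi (neg_neg_of_pos hb) 0).congr_fun (fun t ht => ?_)
      measurableSet_Ioi
    simp only [abs_of_pos (mem_Ioi.1 ht), neg_mul]

theorem integrable_abs_mul_exp_neg_mul_abs {b : ℝ} (hb : 0 < b) :
    Integrable fun t : ℝ => |t| * Real.exp (-(b * |t|)) := by
  have hb2 : 0 < b / 2 := half_pos hb
  refine ((integrable_exp_neg_mul_abs hb2).const_mul (b / 2)⁻¹).mono'
    (Continuous.aestronglyMeasurable (by fun_prop)) (ae_of_all _ fun t => ?_)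
  rw [Real.norm_of_nonneg (by positivity)]
  calc |t| * Real.exp (-(b * |t|))
      = (b / 2)⁻¹ * (b / 2 * |t|) * Real.exp (-(b * |t|)) := by
        rw [inv_mul_cancel_left₀ hb2.ne']
    _ ≤ (b / 2)⁻¹ * Real.exp (b / 2 * |t|) * Real.exp (-(b * |t|)) := by
        gcongr
        linarith [Real.add_one_le_exp (b / 2 * |t|)]
    _ = (b / 2)⁻¹ * Real.exp (-(b / 2 * |t|)) := by
        rw [mul_assoc, ← Real.exp_add]
        ring_nf

/-- The density of `log (1 / 𝔾_α - 1)`. -/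
noncomputable def logOddsDensity (α t : ℝ) : ℝ :=
  α * Real.sin (π * α) / (2 * π * (1 - α) * (Real.cosh (α * t) - Real.cos (π * α)))

theorem sin_pi_mul_pos {α : ℝ} (h0 : 0 < α) (h1 : α < 1) : 0 < Real.sin (π * α) :=
  Real.sin_pos_of_pos_of_lt_pi (by positivity) (mul_lt_of_lt_one_right Real.pi_pos h1)

theorem cos_pi_mul_lt_one {α : ℝ} (h0 : 0 < α) (h1 : α < 1) : Real.cos (π * α) < 1 := by
  rw [← Real.cos_zero]
  exact Real.cos_lt_cos_of_nonneg_of_le_pi le_rfl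
    (mul_le_of_le_one_right Real.pi_pos.le h1.le) (by positivity)

theorem cosh_sub_cos_pi_mul_pos {α : ℝ} (h0 : 0 < α) (h1 : α < 1) (x : ℝ) :
    0 < Real.cosh x - Real.cos (π * α) :=
  sub_pos.2 ((cos_pi_mul_lt_one h0 h1).trans_le (Real.one_le_cosh x))

theorem logOddsDensity_pos {α : ℝ} (h0 : 0 < α) (h1 : α < 1) (t : ℝ) : 0 < logOddsDensity α t := by
  have := sin_pi_mul_pos h0 h1
  have := sub_pos.2 h1
  have := cosh_sub_cos_pi_mul_pos h0 h1 (α * t)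
  unfold logOddsDensity
  positivity

theorem logOddsDensity_neg (α t : ℝ) : logOddsDensity α (-t) = logOddsDensity α t := by
  simp only [logOddsDensity, mul_neg, Real.cosh_neg]

theorem continuous_logOddsDensity {α : ℝ} (h0 : 0 < α) (h1 : α < 1) :
    Continuous (logOddsDensity α) := by
  refine Continuous.div (by fun_prop) (by fun_prop) fun t => ?_
  have := sub_pos.2 h1
  have := cosh_sub_cos_pi_mul_pos h0 h1 (α * t)
  positivity

theorem exists_logOddsDensity_le {α : ℝ} (h0 : 0 < α) (h1 : α < 1) :
    ∃ C, ∀ t, logOddsDensity α t ≤ C * Real.exp (-(α * |t|)) := by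
  set c := Real.cos (π * α)
  have hc : 0 < 1 - c := sub_pos.2 (cos_pi_mul_lt_one h0 h1)
  have := sub_pos.2 h1
  have := sin_pi_mul_pos h0 h1
  refine ⟨α * Real.sin (π * α) / (2 * π * (1 - α) * ((1 - c) / 4)), fun t => ?_⟩
  have hden : (1 - c) / 4 * Real.exp (α * |t|) ≤ Real.cosh (α * t) - c := by
    have hcosh : Real.exp (α * |t|) / 2 ≤ Real.cosh (α * t) := by
      rw [← Real.cosh_abs, abs_mul, abs_of_pos h0, Real.cosh_eq]
      linarith [Real.exp_pos (-(α * |t|))]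
    have hhalf : (1 - c) / 2 * Real.cosh (α * t) ≤ Real.cosh (α * t) - c := by
      nlinarith [Real.one_le_cosh (α * t), Real.neg_one_le_cos (π * α)]
    nlinarith
  rw [logOddsDensity, Real.exp_neg, ← div_eq_mul_inv, div_div, mul_assoc (2 * π * (1 - α))]
  gcongr

theorem integrable_logOddsDensity {α : ℝ} (h0 : 0 < α) (h1 : α < 1) :
    Integrable (logOddsDensity α) := by
  obtain ⟨C, hC⟩ := exists_logOddsDensity_le h0 h1
  refine ((integrable_exp_neg_mul_abs h0).const_mul C).mono'
    (continuous_logOddsDensity h0 h1).aestronglyMeasurable (ae_of_all _ fun t => ?_)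
  rw [Real.norm_of_nonneg (logOddsDensity_pos h0 h1 t).le]
  exact hC t

theorem integrable_logOddsDensity_mul_self {α : ℝ} (h0 : 0 < α) (h1 : α < 1) :
    Integrable fun t => logOddsDensity α t * t := by
  obtain ⟨C, hC⟩ := exists_logOddsDensity_le h0 h1
  refine ((integrable_abs_mul_exp_neg_mul_abs h0).const_mul C).mono'
    ((continuous_logOddsDensity h0 h1).mul continuous_id).aestronglyMeasurable
    (ae_of_all _ fun t => ?_)
  rw [norm_mul, Real.norm_of_nonneg (logOddsDensity_pos h0 h1 t).le, Real.norm_eq_abs,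
    mul_left_comm, mul_comm]
  exact mul_le_mul_of_nonneg_left (hC t) (abs_nonneg t)

theorem logDeriv_bfryRatio_jump {α : ℝ} (h0 : 0 < α) (h1 : α < 1) (t : ℝ) :
    logDeriv (bfryRatio α) (t - π * I) - logDeriv (bfryRatio α) (t + π * I) =
      -(2 * π * I * (1 - α)) * logOddsDensity α t := by
  have exp_ne_one {z : ℂ} (hz : |z.im| = π) :
      Complex.exp z ≠ 1 ∧ Complex.exp (α * z) ≠ 1 := by
    have hlt : |z.im| < 2 * π := by linarith [Real.pi_pos]
    have hz0 : z ≠ 0 := by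
      rintro rfl
      simp [Real.pi_ne_zero.symm] at hz
    exact ⟨cexp_ne_one hlt hz0, cexp_ne_one (abs_im_ofReal_mul_lt h0 h1 hlt)
      (mul_ne_zero (Complex.ofReal_ne_zero.2 h0.ne') hz0)⟩
  have hlow := exp_ne_one (z := t - π * I) (by simp [abs_of_pos Real.pi_pos])
  have hupp := exp_ne_one (z := t + π * I) (by simp [abs_of_pos Real.pi_pos])
  have hjump := inv_one_sub_cexp_neg_jump (x := t) (θ := π)
    (by linarith [Real.cosh_pos t, Real.cos_pi])
  have hjumpα := inv_one_sub_cexp_neg_jump (x := α * t) (θ := π * α)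
    (sub_pos.1 (cosh_sub_cos_pi_mul_pos h0 h1 (α * t))).ne'
  rw [Real.sin_pi, zero_div, Complex.ofReal_zero, mul_zero] at hjump
  have hscale : Real.sin (π * α) / (Real.cosh (α * t) - Real.cos (π * α)) * α =
      2 * π * (1 - α) * logOddsDensity α t := by
    have := cosh_sub_cos_pi_mul_pos h0 h1 (α * t)
    have := sub_pos.2 h1
    rw [logOddsDensity]
    field_simp
  rw [logDeriv_bfryRatio hlow.1 hlow.2, logDeriv_bfryRatio hupp.1 hupp.2]
  have hscaleC := congrArg Complex.ofReal hscale
  push_cast at hjumpα hscaleC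
  rw [show (α : ℂ) * (t - π * I) = α * t - π * α * I by ring,
    show (α : ℂ) * (t + π * I) = α * t + π * α * I by ring]
  linear_combination hjump - α * hjumpα - I * hscaleC

/-- The law of `log (1 / 𝔾_α - 1)`. -/
noncomputable def logOddsMeasure (α : ℝ) : Measure ℝ :=
  volume.withDensity fun t => ENNReal.ofReal (logOddsDensity α t)

instance (α : ℝ) : NullSingletonClass (logOddsMeasure α) :=
  inferInstanceAs (NullSingletonClass (volume.withDensity _))

theorem isFiniteMeasure_logOddsMeasure {α : ℝ} (h0 : 0 < α) (h1 : α < 1) :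
    IsFiniteMeasure (logOddsMeasure α) :=
  isFiniteMeasure_withDensity_ofReal (integrable_logOddsDensity h0 h1).2

theorem measurable_logOddsDensity (α : ℝ) : Measurable (logOddsDensity α) := by
  unfold logOddsDensity
  fun_prop

theorem integral_logOddsMeasure {E : Type*} [NormedAddCommGroup E] [NormedSpace ℝ E] {α : ℝ}
    (h0 : 0 < α) (h1 : α < 1) (f : ℝ → E) :
    ∫ t, f t ∂logOddsMeasure α = ∫ t, logOddsDensity α t • f t := by
  rw [logOddsMeasure, integral_withDensity_eq_integral_toReal_smul
    (measurable_logOddsDensity α).ennreal_ofReal (ae_of_all _ fun _ => ENNReal.ofReal_lt_top)]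
  simp only [ENNReal.toReal_ofReal (logOddsDensity_pos h0 h1 _).le]

theorem integrable_logOddsMeasure_iff {E : Type*} [NormedAddCommGroup E] [NormedSpace ℝ E] {α : ℝ}
    (h0 : 0 < α) (h1 : α < 1) {f : ℝ → E} :
    Integrable f (logOddsMeasure α) ↔ Integrable fun t => logOddsDensity α t • f t := by
  rw [logOddsMeasure, integrable_withDensity_iff_integrable_smul'
    (measurable_logOddsDensity α).ennreal_ofReal (ae_of_all _ fun _ => ENNReal.ofReal_lt_top)]
  simp only [ENNReal.toReal_ofReal (logOddsDensity_pos h0 h1 _).le]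

theorem integrable_id_logOddsMeasure {α : ℝ} (h0 : 0 < α) (h1 : α < 1) :
    Integrable id (logOddsMeasure α) :=
  (integrable_logOddsMeasure_iff h0 h1).2 (integrable_logOddsDensity_mul_self h0 h1)

theorem integral_id_logOddsMeasure {α : ℝ} (h0 : 0 < α) (h1 : α < 1) :
    ∫ t, t ∂logOddsMeasure α = 0 := by
  rw [integral_logOddsMeasure h0 h1, ← self_eq_neg (G := ℝ), ← integral_neg]
  nth_rw 1 [← integral_neg_eq_self]
  simp only [logOddsDensity_neg, smul_eq_mul, mul_neg]

theorem exists_logOddsMeasure_le_smul_volume {α : ℝ} (h0 : 0 < α) (h1 : α < 1) :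
    ∃ C : ENNReal, C ≠ ⊤ ∧ logOddsMeasure α ≤ C • volume := by
  obtain ⟨C, hC⟩ := exists_logOddsDensity_le h0 h1
  have hC0 : 0 ≤ C := by
    simpa using (logOddsDensity_pos h0 h1 0).le.trans (hC 0)
  refine ⟨ENNReal.ofReal C, ENNReal.ofReal_ne_top, ?_⟩
  rw [logOddsMeasure, ← withDensity_const]
  refine withDensity_mono (ae_of_all _ fun t => ENNReal.ofReal_le_ofReal ((hC t).trans ?_))
  exact mul_le_of_le_one_right hC0 (Real.exp_le_one_iff.2 (neg_nonpos.2 (by positivity)))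

theorem integral_inv_one_add_cexp_sub_logOddsMeasure {α : ℝ} (h0 : 0 < α) (h1 : α < 1) {l : ℂ}
    (hl : |l.im| < π) :
    ∫ t : ℝ, (1 + Complex.exp (t - l))⁻¹ ∂logOddsMeasure α =
      logDeriv (bfryRatio α) l / (1 - α) := by
  have := isFiniteMeasure_logOddsMeasure h0 h1
  set k : ℂ := -(2 * π * I * (1 - α))
  have hjump : ∀ t : ℝ, (logDeriv (bfryRatio α) (t - π * I) - logDeriv (bfryRatio α) (t + π * I)) /
      (1 + Complex.exp (t - l)) =
        k * logOddsDensity α t • (1 + Complex.exp (t - l))⁻¹ := fun t => by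
    rw [logDeriv_bfryRatio_jump h0 h1, Complex.real_smul, div_eq_mul_inv, mul_assoc]
  have hint := (integrable_logOddsMeasure_iff h0 h1).1 (integrable_inv_one_add_cexp_sub _ hl)
  have hres := integral_jump_div_one_add_cexp (by linarith [Real.pi_pos] : π < 2 * π)
    (differentiableOn_logDeriv_bfryRatio h0 h1) (tendsto_logDeriv_bfryRatio_atBot h0)
    (tendsto_logDeriv_bfryRatio_atTop h0) hl (by simpa only [hjump] using hint.const_mul k)
  simp only [hjump] at hres
  rw [integral_const_mul, ← integral_logOddsMeasure h0 h1, zero_sub] at hres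
  have hα : (1 - α : ℂ) ≠ 0 := by exact_mod_cast (sub_pos.2 h1).ne'
  have hpi : (2 * π * I : ℂ) ≠ 0 := Complex.two_pi_I_ne_zero
  rw [eq_div_iff hα]
  refine mul_left_cancel₀ hpi ?_
  linear_combination -hres

theorem logPotential_logOddsMeasure_of_abs_im_lt {α : ℝ} (h0 : 0 < α) (h1 : α < 1) {l : ℂ}
    (hl : |l.im| < π) :
    logPotential (logOddsMeasure α) l = Real.log ‖bfryRatio α l‖ / (1 - α) := by
  have := isFiniteMeasure_logOddsMeasure h0 h1
  have hid := integrable_id_logOddsMeasure h0 h1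
  have him : ∀ r : ℝ, |(l + r).im| < π := fun r => by simpa using hl
  have hstrip : ∀ r : ℝ, |(l + r).im| < 2 * π := fun r => (him r).trans (by linarith [Real.pi_pos])
  set D : ℝ → ℝ := fun r =>
    logPotential (logOddsMeasure α) (l + r) - Real.log ‖bfryRatio α (l + r)‖ / (1 - α)
  have hderiv : ∀ r, HasDerivAt D 0 r := fun r => by
    have hB : HasDerivAt (fun r : ℝ => bfryRatio α (l + r)) (deriv (bfryRatio α) (l + r)) r := by
      have hd := ((differentiableOn_bfryRatio h0 h1).differentiableAt
        ((isOpen_abs_im_lt _).mem_nhds (hstrip r))).hasDerivAt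
      simpa [Function.comp_def] using hd.scomp r ((hasDerivAt_id r).ofReal_comp.const_add l)
    have hlog := (hasDerivAt_log_norm hB (bfryRatio_ne_zero h0 h1 (hstrip r))).div_const (1 - α)
    refine ((hasDerivAt_logPotential hid hl r).sub hlog).congr_deriv ?_
    rw [integral_inv_one_add_cexp_sub_logOddsMeasure h0 h1 (him r), logDeriv_apply,
      ← Complex.ofReal_one, ← Complex.ofReal_sub, Complex.div_ofReal_re, sub_self]
  have hlim : Tendsto D atBot (𝓝 0) := by
    have hre : Tendsto (fun r : ℝ => l + r) atBot (comap Complex.re atBot) := by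
      rw [tendsto_comap_iff]
      simpa [Function.comp_def] using tendsto_atBot_add_const_left _ l.re tendsto_id
    have hB := (((tendsto_bfryRatio_atBot h0).comp hre).norm.log (by simp)).div_const (1 - α)
    simpa [integral_id_logOddsMeasure h0 h1] using (tendsto_logPotential_atBot hid hl).sub hB
  have hconst : ∀ r, D r = D 0 := fun r => is_const_of_deriv_eq_zero
    (fun r => (hderiv r).differentiableAt) (fun r => (hderiv r).deriv) r 0
  have hD : D 0 = 0 := tendsto_nhds_unique
    (tendsto_const_nhds.congr fun r => (hconst r).symm) hlim
  simpa [D, sub_eq_zero] using hD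

theorem logPotential_logOddsMeasure {α : ℝ} (h0 : 0 < α) (h1 : α < 1) {l : ℂ} (hl : |l.im| ≤ π) :
    logPotential (logOddsMeasure α) l = Real.log ‖bfryRatio α l‖ / (1 - α) := by
  have := isFiniteMeasure_logOddsMeasure h0 h1
  obtain ⟨C, hC, hle⟩ := exists_logOddsMeasure_le_smul_volume h0 h1
  have hid := integrable_id_logOddsMeasure h0 h1
  have hpot := continuous_logPotential_vertical hid (integrable_log_abs_exp_sub_exp hC hle hid l.re)
  have hstrip : ∀ φ ∈ Icc (-π) π, |(l.re + φ * I).im| < 2 * π := fun φ hφ => by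
    have := abs_le.2 hφ
    simpa using this.trans_lt (by linarith [Real.pi_pos])
  have hB : ContinuousOn (fun φ : ℝ => bfryRatio α (l.re + φ * I)) (Icc (-π) π) :=
    (differentiableOn_bfryRatio h0 h1).continuousOn.comp (by fun_prop) hstrip
  have hlog := (hB.norm.log fun φ hφ => norm_ne_zero_iff.2
    (bfryRatio_ne_zero h0 h1 (hstrip φ hφ))).div_const (1 - α)
  rw [← closure_Ioo (by linarith [Real.pi_pos])] at hlog
  have heq := EqOn.of_subset_closure (s := Ioo (-π) π) (fun φ hφ =>
    logPotential_logOddsMeasure_of_abs_im_lt h0 h1 (l := l.re + φ * I) (by simpa using abs_lt.2 hφ))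
    hpot.continuousOn hlog subset_closure subset_rfl
  rw [closure_Ioo (by linarith [Real.pi_pos])] at heq
  simpa using heq (abs_le.1 hl)

theorem mul_bfryDensity_of_one_sub_eq_mul_exp {α u t : ℝ} (hu : 0 < u)
    (ht : 1 - u = u * Real.exp t) :
    u * (1 - u) * bfryDensity α u = logOddsDensity α t := by
  have hv : 0 < 1 - u := ht ▸ by positivity
  set a := u ^ α
  set E := Real.exp (α * t)
  have ha : a ≠ 0 := (Real.rpow_pos_of_pos hu α).ne'
  have hE : E ≠ 0 := (Real.exp_pos _).ne'
  have hpow : (1 - u) ^ α = a * E := by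
    rw [ht, Real.mul_rpow hu.le (Real.exp_pos t).le, ← Real.exp_mul, mul_comm t]
  have hpow_sub : u ^ (α - 1) = a / u := Real.rpow_sub_one hu.ne' α
  have hpow_sub' : (1 - u) ^ (α - 1) = a * E / (1 - u) := by rw [Real.rpow_sub_one hv.ne', hpow]
  have hcosh : Real.cosh (α * t) = (E + E⁻¹) / 2 := by rw [Real.cosh_eq, Real.exp_neg]
  have hden : (a ^ 2 - 2 * a * (a * E) * Real.cos (π * α) + (a * E) ^ 2) =
      a ^ 2 * E * (2 * (Real.cosh (α * t) - Real.cos (π * α))) := by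
    rw [hcosh]
    field_simp
    ring
  rw [bfryDensity, logOddsDensity, hpow_sub, hpow_sub', mul_comm 2 α, Real.rpow_mul hu.le,
    Real.rpow_mul hv.le, Real.rpow_two, Real.rpow_two, hpow, hden]
  field_simp

theorem map_sigmoid_neg_logOddsMeasure (α : ℝ) :
    (logOddsMeasure α).map (fun t => Real.sigmoid (-t)) =
      (volume.restrict (Ioo 0 1)).withDensity fun u => ENNReal.ofReal (bfryDensity α u) := by
  set g : ℝ → ℝ := fun t => Real.sigmoid (-t)
  have hg : Measurable g := by fun_prop
  have hderiv : ∀ t, HasDerivAt g (-(g t * (1 - g t))) t := fun t => by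
    simpa [Function.comp_def, g] using (Real.hasDerivAt_sigmoid (-t)).comp t (hasDerivAt_neg t)
  have hinj : Function.Injective g := Real.sigmoid_injective.comp neg_injective
  have hrange : range g = Ioo 0 1 := by
    rw [← Real.range_sigmoid]
    exact neg_surjective.range_comp Real.sigmoid
  have hdensity : ∀ t, ENNReal.ofReal |-(g t * (1 - g t))| * ENNReal.ofReal (bfryDensity α (g t)) =
      ENNReal.ofReal (logOddsDensity α t) := fun t => by
    have hpos : 0 < g t := Real.sigmoid_pos _
    have hodds : 1 - g t = g t * Real.exp t := by
      simpa [g, Real.sigmoid_neg] using (Real.sigmoid_mul_rexp_neg (-t)).symm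
    have hpos' : 0 < 1 - g t := hodds ▸ by positivity
    rw [abs_neg, abs_of_pos (by positivity), ← ENNReal.ofReal_mul (by positivity),
      mul_bfryDensity_of_one_sub_eq_mul_exp hpos hodds]
  ext s hs
  rw [Measure.map_apply hg hs, logOddsMeasure, withDensity_apply _ (hg hs), withDensity_apply _ hs,
    Measure.restrict_restrict hs, ← hrange, ← image_preimage_eq_inter_range,
    lintegral_image_eq_lintegral_abs_deriv_mul (hg hs) (fun t _ => (hderiv t).hasDerivWithinAt)
      hinj.injOn]
  simp only [hdensity]

theorem integral_log_abs_sub_one_div_eq_logOddsMeasure {Ω : Type*} [MeasurableSpace Ω]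
    {P : Measure Ω} {α : ℝ} {G : Ω → ℝ} (hG : Measurable G)
    (hlaw : P.map G =
      (volume.restrict (Ioo 0 1)).withDensity fun u => ENNReal.ofReal (bfryDensity α u)) (x : ℝ) :
    ∫ ω, (if 1 / G ω = x then 0 else Real.log |x - 1 / G ω|) ∂P =
      ∫ t, Real.log |x - 1 - Real.exp t| ∂logOddsMeasure α := by
  have hsm : AEStronglyMeasurable (fun u : ℝ => Real.log |x - 1 / u|) (P.map G) :=
    Measurable.aestronglyMeasurable (by fun_prop)
  have hsigmoid : ∀ t, x - 1 / Real.sigmoid (-t) = x - 1 - Real.exp t := fun t => by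
    rw [Real.sigmoid_def, neg_neg, one_div, inv_inv]
    ring
  calc ∫ ω, (if 1 / G ω = x then 0 else Real.log |x - 1 / G ω|) ∂P
      = ∫ ω, Real.log |x - 1 / G ω| ∂P := by
        refine integral_congr_ae (ae_of_all _ fun ω => ?_)
        rcases eq_or_ne (1 / G ω) x with h | h
        · simp [h]
        · exact if_neg h
    _ = ∫ u, Real.log |x - 1 / u| ∂(P.map G) := (integral_map hG.aemeasurable hsm).symm
    _ = ∫ t, Real.log |x - 1 - Real.exp t| ∂logOddsMeasure α := by
        rw [hlaw, ← map_sigmoid_neg_logOddsMeasure α] at hsm ⊢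
        rw [integral_map (by fun_prop) hsm]
        simp only [hsigmoid]

theorem norm_cexp_sub_one_sq (w : ℂ) :
    ‖Complex.exp w - 1‖ ^ 2 =
      Real.exp w.re ^ 2 - 2 * Real.exp w.re * Real.cos w.im + 1 := by
  rw [← Complex.normSq_eq_norm_sq, Complex.normSq_apply]
  simp only [Complex.sub_re, Complex.sub_im, Complex.exp_re, Complex.exp_im, Complex.one_re,
    Complex.one_im]
  linear_combination Real.exp w.re ^ 2 * Real.sin_sq_add_cos_sq w.im

theorem integral_log_abs_sub_exp_logOddsMeasure {α r : ℝ} (h0 : 0 < α) (h1 : α < 1) (hr : 0 < r) :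
    ∫ t, Real.log |r - Real.exp t| ∂logOddsMeasure α =
      1 / (2 * (1 - α)) *
        Real.log ((1 + r) ^ 2 / (r ^ (2 * α) - 2 * r ^ α * Real.cos (π * α) + 1)) := by
  set l : ℂ := Real.log r + π * I
  have hexp : Complex.exp l = -r := by
    rw [Complex.exp_add, Complex.exp_pi_mul_I, ← Complex.ofReal_exp, Real.exp_log hr, mul_neg_one]
  have hnorm : ∀ t : ℝ, ‖Complex.exp l + Complex.exp t‖ = |r - Real.exp t| := fun t => by
    rw [hexp, ← Complex.ofReal_exp, ← Complex.ofReal_neg, ← Complex.ofReal_add, Complex.norm_real,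
      Real.norm_eq_abs, abs_sub_comm, neg_add_eq_sub]
  have hl : l ≠ 0 := fun h => Real.pi_ne_zero (by simpa [l] using congrArg Complex.im h)
  have hnum : ‖Complex.exp l - 1‖ = 1 + r := by
    rw [hexp, ← neg_add', norm_neg, add_comm, ← Complex.ofReal_one, ← Complex.ofReal_add,
      Complex.norm_of_nonneg (by positivity)]
  have hden : ‖Complex.exp (α * l) - 1‖ ^ 2 =
      r ^ (2 * α) - 2 * r ^ α * Real.cos (π * α) + 1 := by
    have hre : (α * l).re = Real.log r * α := by simp [l, mul_comm]
    have him : (α * l).im = π * α := by simp [l, mul_comm]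
    rw [norm_cexp_sub_one_sq, hre, him, ← Real.rpow_def_of_pos hr, mul_comm 2 α,
      Real.rpow_mul hr.le, Real.rpow_two]
  have hpot := logPotential_logOddsMeasure h0 h1 (l := l) (by simp [l, abs_of_pos Real.pi_pos])
  simp only [logPotential, hnorm] at hpot
  rw [hpot, bfryRatio_of_ne h0 hl, ← hden, ← hnum, ← div_pow, ← norm_div, Real.log_pow]
  push_cast
  field_simp

theorem integral_log_add_exp_logOddsMeasure {α r : ℝ} (h0 : 0 < α) (h1 : α < 1) (hr : 0 ≤ r)
    (hr1 : r < 1) :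
    ∫ t, Real.log (r + Real.exp t) ∂logOddsMeasure α =
      1 / (1 - α) * Real.log ((1 - r) / (1 - r ^ α)) := by
  rcases hr.eq_or_lt with rfl | hr
  · simp [Real.zero_rpow h0.ne', integral_id_logOddsMeasure h0 h1]
  have hexp : Complex.exp (Real.log r) = r := by rw [← Complex.ofReal_exp, Real.exp_log hr]
  have hexpα : Complex.exp (α * Real.log r) = (r ^ α : ℝ) := by
    rw [← Complex.ofReal_mul, ← Complex.ofReal_exp, mul_comm, Real.rpow_def_of_pos hr]
  have hnorm : ∀ t : ℝ, ‖Complex.exp (Real.log r) + Complex.exp t‖ = r + Real.exp t := fun t => by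
    rw [hexp, ← Complex.ofReal_exp, ← Complex.ofReal_add, Complex.norm_of_nonneg (by positivity)]
  have hl : (Real.log r : ℂ) ≠ 0 := Complex.ofReal_ne_zero.2 (Real.log_neg hr hr1).ne
  have hratio : ‖bfryRatio α (Real.log r)‖ = (1 - r) / (1 - r ^ α) := by
    have hrα := Real.rpow_lt_one hr.le hr1 h0
    rw [bfryRatio_of_ne h0 hl, hexp, hexpα, ← neg_div_neg_eq, neg_sub, neg_sub,
      ← Complex.ofReal_one, ← Complex.ofReal_sub, ← Complex.ofReal_sub, ← Complex.ofReal_div,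
      Complex.norm_of_nonneg (div_nonneg (sub_pos.2 hr1).le (sub_pos.2 hrα).le)]
  have hpot := logPotential_logOddsMeasure h0 h1 (l := Real.log r) (by simp [Real.pi_pos.le])
  simp only [logPotential, hnorm, hratio] at hpot
  rw [hpot]
  ring

end

/-- Proposition 5.1: for `𝔾` a random variable on `(0,1)` with
density `f_𝔾` and `R_α(x) = E[log|x − 1/𝔾|·1(1/𝔾 ≠ x)]`, one has
`R_α(x) = (1/(2(1−α)))·log(x²/((x−1)^{2α} − 2(x−1)^α cos(πα) + 1))` for `x > 1`
and `R_α(x) = (1/(1−α))·log(x/(1 − (1−x)^α))` for `0 < x ≤ 1`. -/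
theorem bfry_phi_formula
    {Ω : Type*} [MeasurableSpace Ω] (P : Measure Ω) [IsProbabilityMeasure P]
    (α : ℝ) (hα0 : 0 < α) (hα1 : α < 1)
    (𝔾 : Ω → ℝ) (h𝔾meas : Measurable 𝔾)
    (h𝔾 : Measure.map 𝔾 P
      = (volume.restrict (Set.Ioo (0:ℝ) 1)).withDensity fun u =>
          ENNReal.ofReal (bfryDensity α u)) :
    (∀ x : ℝ, 1 < x →
      ∫ ω, (if 1 / 𝔾 ω = x then 0 else Real.log |x - 1 / 𝔾 ω|) ∂P
        = 1 / (2 * (1 - α)) *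
            Real.log (x ^ 2 /
              ((x - 1) ^ (2 * α) - 2 * (x - 1) ^ α * Real.cos (Real.pi * α) + 1))) ∧
    (∀ x : ℝ, 0 < x → x ≤ 1 →
      ∫ ω, (if 1 / 𝔾 ω = x then 0 else Real.log |x - 1 / 𝔾 ω|) ∂P
        = 1 / (1 - α) * Real.log (x / (1 - (1 - x) ^ α))) := by
  have hlaw := integral_log_abs_sub_one_div_eq_logOddsMeasure h𝔾meas h𝔾
  refine ⟨fun x hx => ?_, fun x hx0 hx1 => ?_⟩
  · rw [hlaw, integral_log_abs_sub_exp_logOddsMeasure hα0 hα1 (sub_pos.2 hx), add_sub_cancel]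
  · have hsign : ∀ t, Real.log |x - 1 - Real.exp t| = Real.log (1 - x + Real.exp t) := fun t => by
      rw [Real.log_abs, ← Real.log_neg_eq_log]
      ring_nf
    simp only [hlaw, hsign]
    rw [integral_log_add_exp_logOddsMeasure hα0 hα1 (sub_nonneg.2 hx1) (sub_lt_self 1 hx0),
      sub_sub_cancel]
end
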